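/- arXiv:1504.02425 — 3 statements merged into one kernel-verified Lean document; each statement's English description precedes it below -/
import Mathlib

section
/- Let Z = (X, Y) be a Filippov system on ℝ³ with X, Y of class C¹ and switching plane Σ = {z = 0}, and suppose Z has a sliding Shilnikov orbit Γ₀; that is, there exist p = (p₁, p₂) ∈ Σˢ and q = (q₁, q₂) ∈ ℝ² such that: (i) Z̃(p) = 0, Z̃ is differentiable at p, and the eigenvalues of the Jacobian of Z̃ at p are non-real with positive real part; (ii) X₃(q₁,q₂,0) = 0, the directional derivative of X₃ along X at (q₁,q₂,0) is positive, and Y₃(q₁,q₂,0) > 0; (iii) there is a solution f : (−∞, 0] → ℝ² of f' = Z̃∘f with f(0) = q, f(t) ∈ Σˢ for all t < 0, and f(t) → p as t → −∞; (iv) there exist t₀ > 0 and a solution w : [0, t₀] → ℝ³ of w' = X∘w with w(0) = (q₁,q₂,0), w₃(t) > 0 for t ∈ (0, t₀), and w(t₀) = (p₁, p₂, 0); and Γ₀ = w([0,t₀]) ∪ {(x,y,0) : (x,y) ∈ f((−∞,0]) ∪ {p}}. Then for every open neighbourhood G ⊂ ℝ³ of Γ₀ there exist infinitely many pairwise distinct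 sliding periodic orbits of Z contained in G. -/
/-!
The fold points near `q` form a curve `a s`, where `s` is the coordinate along the fold line. The
flow of `X` carries `a s` to a point `b (a s)` of the plane near `p`, with `b q = p`
(`exists_fold_curve`, `exists_transition_map`). The sliding flow carries `a s`, in backward time,
along the given orbit towards `p`, around which it spirals (`exists_backward_sliding_flow`). A
coincidence of `b (a s)` with a point of the backward sliding orbit of `a s` is the same thing as a
sliding periodic orbit through `a s`.

The coincidences are found by a winding argument. In a complex coordinate `ζ` in which the
linearization at `p` is multiplication by an eigenvalue with positive real and imaginary part
(`exists_complex_coordinate`), the backward sliding orbits are spirals `g s` with logarithmic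
derivative close to minus that eigenvalue. The coordinate is chosen so that its real part is the
covector obtained by transporting the fold-line coordinate along the orbit of `X`
(`exists_transported_covector`); hence `β s = ζ (b (a s) - p)` stays in the right half-plane for
small `s > 0` and tends to `0`. The time after which `‖g s‖` has dropped to `‖β s‖` tends to
infinity as `s → 0`, so the phase of the spiral relative to `β s`, taken at that time, is a
continuous function of `s` tending to `-∞`. It therefore passes through infinitely many multiples of
`2π`, and each passage is a coincidence (`infinite_spiral_matches`).

The orbits obtained are distinct because each of them meets the set `z = 0`, `X₃ = 0` in the single
point `a s`. All flows are taken for fields cut off outside compact sets (`exists_cutoff`,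
`exists_flow`), and openness arguments keep the relevant orbits where nothing was changed.
-/

open Set Filter

/-- The sliding region Σˢ of the Filippov system Z = (X, Y) with switching plane
{z = 0}: the set of (x,y) with X₃(x,y,0) < 0 < Y₃(x,y,0). -/
def slidingRegion (X Y : ℝ × ℝ × ℝ → ℝ × ℝ × ℝ) : Set (ℝ × ℝ) :=
  {v | (X (v.1, v.2, 0)).2.2 < 0 ∧ 0 < (Y (v.1, v.2, 0)).2.2}

/-- The Filippov sliding vector field Z̃(x,y) = [Y₃·(X₁,X₂) − X₃·(Y₁,Y₂)]/(Y₃ − X₃)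
evaluated on the switching plane {z = 0}. -/
noncomputable def slidingVF (X Y : ℝ × ℝ × ℝ → ℝ × ℝ × ℝ) (v : ℝ × ℝ) : ℝ × ℝ :=
  ((((Y (v.1, v.2, 0)).2.2 * (X (v.1, v.2, 0)).1
      - (X (v.1, v.2, 0)).2.2 * (Y (v.1, v.2, 0)).1))
     / ((Y (v.1, v.2, 0)).2.2 - (X (v.1, v.2, 0)).2.2),
   (((Y (v.1, v.2, 0)).2.2 * (X (v.1, v.2, 0)).2.1
      - (X (v.1, v.2, 0)).2.2 * (Y (v.1, v.2, 0)).2.1))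
     / ((Y (v.1, v.2, 0)).2.2 - (X (v.1, v.2, 0)).2.2))

/-- A sliding periodic orbit of the Filippov system Z = (X, Y): a closed curve made
of an arc of an orbit of X in {z > 0} from a point (a,0) of Σ to a point (b,0)
with b ∈ Σˢ, concatenated with an arc of an orbit of the sliding vector field
inside Σˢ from b back to a. -/
noncomputable def IsSlidingPeriodicOrbit (X Y : ℝ × ℝ × ℝ → ℝ × ℝ × ℝ)
    (γ : Set (ℝ × ℝ × ℝ)) : Prop :=
  ∃ (a b : ℝ × ℝ) (T₁ T₂ : ℝ), 0 < T₁ ∧ 0 < T₂ ∧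
    ∃ u : ℝ → ℝ × ℝ × ℝ,
      (∀ t ∈ Set.Icc (0 : ℝ) T₁, HasDerivAt u (X (u t)) t) ∧
      u 0 = (a.1, a.2, 0) ∧
      (∀ t ∈ Set.Ioo (0 : ℝ) T₁, 0 < (u t).2.2) ∧
      u T₁ = (b.1, b.2, 0) ∧ b ∈ slidingRegion X Y ∧
    ∃ v : ℝ → ℝ × ℝ,
      (∀ t ∈ Set.Icc (0 : ℝ) T₂, HasDerivAt v (slidingVF X Y (v t)) t) ∧
      v 0 = b ∧
      (∀ t ∈ Set.Ico (0 : ℝ) T₂, v t ∈ slidingRegion X Y) ∧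
      v T₂ = a ∧
      γ = u '' Set.Icc (0 : ℝ) T₁ ∪
        {p : ℝ × ℝ × ℝ | ∃ w ∈ v '' Set.Icc (0 : ℝ) T₂, p = (w.1, w.2, 0)}

open scoped Topology NNReal

/-! ### Flows of bounded Lipschitz fields -/

theorem exists_solution_Icc {E : Type*} [NormedAddCommGroup E] [NormedSpace ℝ E] [CompleteSpace E]
    {F : ℝ → E → E} {K : ℝ≥0} {M T : ℝ} (hT : 0 ≤ T)
    (hc : ∀ x, Continuous fun t => F t x) (hK : ∀ t, LipschitzWith K (F t))
    (hM : ∀ t x, ‖F t x‖ ≤ M) (x : E) :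
    ∃ α : ℝ → E, α 0 = x ∧
      ∀ t ∈ Icc (-T) T, HasDerivWithinAt α (F t (α t)) (Icc (-T) T) t := by
  have hM0 : 0 ≤ M := (norm_nonneg _).trans (hM 0 x)
  have h0 : (0 : ℝ) ∈ Icc (-T) T := ⟨by linarith, hT⟩
  have hpl : IsPicardLindelof F (⟨0, h0⟩ : Icc (-T) T) x (⟨M, hM0⟩ * ⟨T, hT⟩) 0 ⟨M, hM0⟩ K :=
    { lipschitzOnWith := fun t _ => (hK t).lipschitzOnWith
      continuousOn := fun x _ => (hc x).continuousOn
      norm_le := fun t _ x _ => hM t x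
      mul_max_le := by
        simp only [sub_zero, zero_sub, neg_neg, max_self, NNReal.coe_zero]
        exact le_rfl }
  exact hpl.exists_eq_forall_mem_Icc_hasDerivWithinAt₀

theorem exists_global_solution {E : Type*} [NormedAddCommGroup E] [NormedSpace ℝ E]
    [CompleteSpace E] {F : E → E} {K : ℝ≥0} {M : ℝ}
    (hK : LipschitzWith K F) (hM : ∀ x, ‖F x‖ ≤ M) (x : E) :
    ∃ α : ℝ → E, α 0 = x ∧ ∀ t, HasDerivAt α (F (α t)) t := by
  have H : ∀ n : ℕ, ∃ α : ℝ → E, α 0 = x ∧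
      ∀ t ∈ Ioo (-((n : ℝ) + 1)) (n + 1), HasDerivAt α (F (α t)) t := by
    intro n
    obtain ⟨α, h0, hα⟩ := exists_solution_Icc (F := fun _ => F) (T := (n : ℝ) + 1) (by positivity)
      (fun x => continuous_const) (fun _ => hK) (fun _ => hM) x
    exact ⟨α, h0, fun t ht => (hα t (Ioo_subset_Icc_self ht)).hasDerivAt (Icc_mem_nhds ht.1 ht.2)⟩
  choose α h0 hα using H
  have hmem : ∀ t : ℝ, t ∈ Ioo (-((⌊|t|⌋₊ : ℝ) + 1)) (⌊|t|⌋₊ + 1) := fun t =>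
    abs_lt.1 (Nat.lt_floor_add_one |t|)
  have key : ∀ t : ℝ, ∀ s ∈ Ioo (-((⌊|t|⌋₊ : ℝ) + 1)) (⌊|t|⌋₊ + 1),
      α ⌊|s|⌋₊ s = α ⌊|t|⌋₊ s := by
    intro t s hs
    have hle : (⌊|s|⌋₊ : ℝ) ≤ ⌊|t|⌋₊ := by
      have h1 : |s| < (⌊|t|⌋₊ : ℝ) + 1 := abs_lt.2 hs
      have h2 : ⌊|s|⌋₊ < ⌊|t|⌋₊ + 1 := (Nat.floor_lt (abs_nonneg s)).2 (by exact_mod_cast h1)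
      exact_mod_cast Nat.lt_succ_iff.1 h2
    refine ODE_solution_unique_of_mem_Ioo (v := fun _ => F) (s := fun _ => univ) (K := K)
      (t₀ := 0) (a := -((⌊|s|⌋₊ : ℝ) + 1)) (b := ⌊|s|⌋₊ + 1)
      (fun _ _ => hK.lipschitzOnWith) ⟨by linarith [Nat.cast_nonneg (α := ℝ) ⌊|s|⌋₊], by positivity⟩
      (fun r hr => ⟨hα _ r hr, trivial⟩) (fun r hr => ⟨hα _ r ?_, trivial⟩)
      ((h0 _).trans (h0 _).symm) (hmem s)
    exact ⟨by linarith [hr.1], by linarith [hr.2]⟩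
  refine ⟨fun t => α ⌊|t|⌋₊ t, h0 _, fun t => ?_⟩
  have := hα ⌊|t|⌋₊ t (hmem t)
  refine this.congr_of_eventuallyEq ?_
  filter_upwards [Ioo_mem_nhds (hmem t).1 (hmem t).2] with s hs using key t s hs

/-- Grönwall's estimate, in both time directions. -/
theorem dist_solution_le {E : Type*} [NormedAddCommGroup E] [NormedSpace ℝ E]
    {F : E → E} {K : ℝ≥0} (hK : LipschitzWith K F) {α β : ℝ → E}
    (hα : ∀ t, HasDerivAt α (F (α t)) t) (hβ : ∀ t, HasDerivAt β (F (β t)) t) (t : ℝ) :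
    dist (α t) (β t) ≤ dist (α 0) (β 0) * Real.exp (K * |t|) := by
  have cα : Continuous α := continuous_iff_continuousAt.2 fun t => (hα t).continuousAt
  have cβ : Continuous β := continuous_iff_continuousAt.2 fun t => (hβ t).continuousAt
  rcases le_total 0 t with ht | ht
  · have := dist_le_of_trajectories_ODE (v := fun _ => F) (fun _ => hK) (cα.continuousOn)
      (fun s _ => (hα s).hasDerivWithinAt) cβ.continuousOn (fun s _ => (hβ s).hasDerivWithinAt)
      le_rfl t (right_mem_Icc.2 ht)
    simpa [abs_of_nonneg ht] using this
  · -- reversed time solves the equation of `-F`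
    have hK' : LipschitzWith K (fun x => -F x) := hK.neg
    have rev : ∀ γ : ℝ → E, (∀ t, HasDerivAt γ (F (γ t)) t) →
        ∀ s, HasDerivAt (fun s => γ (-s)) (-F (γ (-s))) s := by
      intro γ hγ s
      simpa [Function.comp_def] using (hγ (-s)).scomp s (hasDerivAt_neg s)
    have := dist_le_of_trajectories_ODE (v := fun _ x => -F x) (fun _ => hK')
      (cα.comp continuous_neg).continuousOn
      (fun s _ => (rev α hα s).hasDerivWithinAt) (cβ.comp continuous_neg).continuousOn
      (fun s _ => (rev β hβ s).hasDerivWithinAt)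
      le_rfl (-t) (right_mem_Icc.2 (neg_nonneg.2 ht))
    simpa [abs_of_nonpos ht] using this

/-- The global flow of a bounded Lipschitz field: jointly continuous, injective in the initial
point, and expanding distances at most exponentially. -/
theorem exists_flow {E : Type*} [NormedAddCommGroup E] [NormedSpace ℝ E]
    [CompleteSpace E] {F : E → E} {K : ℝ≥0} {M : ℝ}
    (hK : LipschitzWith K F) (hM : ∀ x, ‖F x‖ ≤ M) :
    ∃ Φ : ℝ → E → E, (∀ x, Φ 0 x = x) ∧ (∀ t x, HasDerivAt (fun t => Φ t x) (F (Φ t x)) t) ∧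
      (∀ t x y, dist (Φ t x) (Φ t y) ≤ dist x y * Real.exp (K * |t|)) ∧
      (Continuous fun z : ℝ × E => Φ z.1 z.2) ∧
      (∀ t x y, Φ t x = Φ t y → x = y) := by
  choose α h0 hα using fun x => exists_global_solution hK hM x
  have hd : ∀ t x y, dist (α x t) (α y t) ≤ dist x y * Real.exp (K * |t|) := by
    intro t x y
    simpa [h0] using dist_solution_le hK (hα x) (hα y) t
  refine ⟨fun t x => α x t, h0, fun t x => hα x t, hd, ?_, ?_⟩
  · have cα : ∀ x, Continuous (α x) := fun x =>
      continuous_iff_continuousAt.2 fun t => (hα x t).continuousAt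
    rw [continuous_iff_continuousAt]
    rintro ⟨t, x⟩
    rw [ContinuousAt, tendsto_iff_dist_tendsto_zero]
    have h1 : Tendsto (fun z : ℝ × E => dist z.2 x * Real.exp (K * |z.1|) +
        dist (α x z.1) (α x t)) (𝓝 (t, x)) (𝓝 0) := by
      have : Continuous (fun z : ℝ × E => dist z.2 x * Real.exp (K * |z.1|) +
        dist (α x z.1) (α x t)) := by
        have := cα x
        fun_prop
      simpa using this.tendsto (t, x)
    refine squeeze_zero (fun _ => dist_nonneg) (fun z => ?_) h1
    exact (dist_triangle _ (α x z.1) _).trans (add_le_add_left (hd _ _ _) _)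
  · intro t x y h
    have := ODE_solution_unique_univ (v := fun _ => F) (s := fun _ => univ) (K := K)
      (fun _ => hK.lipschitzOnWith) (fun t => ⟨hα x t, trivial⟩) (fun t => ⟨hα y t, trivial⟩) h
    rw [← h0 x, this, h0]

/-- Existence on `[0, T]` for a linear equation `y' = B t y`. -/
theorem exists_linear_solution {E : Type*} [NormedAddCommGroup E] [NormedSpace ℝ E]
    [CompleteSpace E] [FiniteDimensional ℝ E] {B : ℝ → E →L[ℝ] E} {K T : ℝ} (hT : 0 ≤ T)
    (hB : Continuous B) (hK : ∀ t, ‖B t‖ ≤ K) (y₀ : E) :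
    ∃ y : ℝ → E, y 0 = y₀ ∧ ContinuousOn y (Icc 0 T) ∧
      ∀ t ∈ Ico 0 T, HasDerivWithinAt y (B t (y t)) (Ici t) t := by
  have hK0 : 0 ≤ K := (norm_nonneg _).trans (hK 0)
  -- the equation is truncated outside a ball that the solution cannot leave
  set R := ‖y₀‖ * Real.exp (K * T) + 1 with hR
  have hR0 : 0 < R := by positivity
  let χ : ContDiffBump (0 : E) := ⟨R, R + 1, hR0, by linarith⟩
  let ρ : E → E := fun x => χ x • x
  have hρc : HasCompactSupport ρ := χ.hasCompactSupport.smul_right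
  have hρd : ContDiff ℝ 1 ρ := χ.contDiff.smul contDiff_id
  obtain ⟨C, hC⟩ := hρd.lipschitzWith_of_hasCompactSupport hρc one_ne_zero
  obtain ⟨M, hM⟩ := hρc.exists_bound_of_continuous hρd.continuous
  have hM0 : 0 ≤ M := (norm_nonneg _).trans (hM 0)
  have hρ : ∀ x, ‖ρ x‖ ≤ ‖x‖ := by
    intro x
    simp only [ρ, norm_smul, Real.norm_eq_abs, abs_of_nonneg χ.nonneg]
    exact mul_le_of_le_one_left (norm_nonneg _) χ.le_one
  obtain ⟨y, h0, hy⟩ := exists_solution_Icc (F := fun t x => B t (ρ x)) (K := K.toNNReal * C)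
    (M := K * M) hT (fun x => by fun_prop)
    (fun t => by
      refine LipschitzWith.comp (g := ρ) ?_ hC
      refine (B t).lipschitz.weaken ?_
      rw [← NNReal.coe_le_coe, Real.coe_toNNReal _ hK0]
      exact hK t)
    (fun t x => ((B t).le_opNorm _).trans
      (mul_le_mul (hK t) (hM x) (norm_nonneg _) hK0)) y₀
  have hsub : Icc (0 : ℝ) T ⊆ Icc (-T) T := Icc_subset_Icc_left (by linarith)
  have hcont : ContinuousOn y (Icc 0 T) := fun t ht =>
    ((hy t (hsub ht)).continuousWithinAt).mono hsub
  have hy' : ∀ t ∈ Ico 0 T, HasDerivWithinAt y (B t (ρ (y t))) (Ici t) t := by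
    intro t ht
    refine (hy t (hsub (Ico_subset_Icc_self ht))).mono_of_mem_nhdsWithin ?_
    exact mem_of_superset (Icc_mem_nhdsGE ht.2) (Icc_subset_Icc_left (by linarith [ht.1]))
  have hbd := norm_le_gronwallBound_of_norm_deriv_right_le (δ := ‖y₀‖) (K := K) (ε := 0)
    hcont hy' (by rw [h0]) (fun t ht => by
      rw [add_zero]
      exact ((B t).le_opNorm _).trans (mul_le_mul (hK t) (hρ _) (norm_nonneg _) hK0))
  refine ⟨y, h0, hcont, fun t ht => ?_⟩
  have hin : ‖y t‖ ≤ R := by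
    have := hbd t (Ico_subset_Icc_self ht)
    rw [gronwallBound_ε0, sub_zero] at this
    have h2 : Real.exp (K * t) ≤ Real.exp (K * T) :=
      Real.exp_le_exp.2 (mul_le_mul_of_nonneg_left ht.2.le hK0)
    have h3 := mul_le_mul_of_nonneg_left h2 (norm_nonneg y₀)
    linarith
  have : ρ (y t) = y t := by
    have : χ (y t) = 1 := χ.one_of_mem_closedBall (by simpa using hin)
    simp [ρ, this]
  have h := hy' t ht
  rwa [this] at h

/-- A `C¹` field agrees near a compact set with a compactly supported `C¹` field. -/
theorem exists_cutoff {E : Type*} [NormedAddCommGroup E] [NormedSpace ℝ E]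
    [FiniteDimensional ℝ E] {F : E → E} {U C : Set E} (hU : IsOpen U) (hC : IsCompact C)
    (hCU : C ⊆ U) (hF : ContDiffOn ℝ 1 F U) :
    ∃ (F' : E → E) (V : Set E), ContDiff ℝ 1 F' ∧ HasCompactSupport F' ∧ IsOpen V ∧ C ⊆ V ∧
      ∀ x ∈ V, F' x = F x := by
  obtain ⟨K₁, hK₁, hCK₁, hK₁U⟩ := exists_compact_between hC hU hCU
  obtain ⟨K₂, hK₂, hK₁₂, hK₂U⟩ := exists_compact_between hK₁ hU hK₁U
  obtain ⟨χ, hχ, -, hχs, hχ1⟩ := exists_contMDiff_support_eq_eq_one_iff (n := 1)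
    (modelWithCornersSelf ℝ E) isOpen_interior hK₁.isClosed hK₁₂
  have hts : tsupport χ ⊆ K₂ := by
    rw [tsupport, hχs]
    exact closure_minimal interior_subset hK₂.isClosed
  have hχ' : ContDiff ℝ 1 χ := hχ.contDiff
  refine ⟨fun x => χ x • F x, interior K₁, ?_, ?_, isOpen_interior, hCK₁, ?_⟩
  · rw [contDiff_iff_contDiffAt]
    intro x
    by_cases hx : x ∈ U
    · exact hχ'.contDiffAt.smul (hF.contDiffAt (hU.mem_nhds hx))
    · have : (fun x => χ x • F x) =ᶠ[𝓝 x] fun _ => 0 := by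
        have hx' : x ∉ tsupport χ := fun h => hx (hK₂U (hts h))
        filter_upwards [(isClosed_tsupport χ).isOpen_compl.mem_nhds hx'] with y hy
        rw [image_eq_zero_of_notMem_tsupport hy, zero_smul]
      exact contDiffAt_const.congr_of_eventuallyEq this
  · have : HasCompactSupport χ := hK₂.of_isClosed_subset (isClosed_tsupport χ) hts
    exact this.smul_right
  · intro x hx
    simp [(hχ1 x).1 (interior_subset hx)]

/-! ### Matching a spiral with an arc in a half-plane -/

/-- The zero of a function strictly decreasing in its second variable depends continuously on the
first variable. -/
theorem continuousOn_of_strictAntiOn {P : Type*} [TopologicalSpace P] {F : P → ℝ → ℝ}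
    {S : Set P} {J : Set ℝ} (hJ : IsOpen J) {T : P → ℝ}
    (hF : ∀ τ ∈ J, ContinuousOn (fun x => F x τ) S) (hanti : ∀ x ∈ S, StrictAntiOn (F x) J)
    (hT : ∀ x ∈ S, T x ∈ J ∧ F x (T x) = 0) : ContinuousOn T S := by
  intro x₀ hx₀
  rw [ContinuousWithinAt, Metric.tendsto_nhds]
  intro ε hε
  obtain ⟨hTJ, hT0⟩ := hT x₀ hx₀
  obtain ⟨δ, hδ, hball⟩ := Metric.isOpen_iff.1 hJ _ hTJ
  set d := min (δ / 2) (ε / 2) with hd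
  have hd0 : 0 < d := by positivity
  have hdδ : d < δ := (min_le_left _ _).trans_lt (by linarith)
  have hdε : d < ε := (min_le_right _ _).trans_lt (by linarith)
  have h1 : T x₀ - d ∈ J := hball (by simp [abs_of_pos hd0, hdδ])
  have h2 : T x₀ + d ∈ J := hball (by simp [abs_of_pos hd0, hdδ])
  have p1 : 0 < F x₀ (T x₀ - d) := hT0 ▸ hanti x₀ hx₀ h1 hTJ (by linarith)
  have p2 : F x₀ (T x₀ + d) < 0 := hT0 ▸ hanti x₀ hx₀ hTJ h2 (by linarith)
  filter_upwards [(hF _ h1 x₀ hx₀).eventually (lt_mem_nhds p1),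
    (hF _ h2 x₀ hx₀).eventually (gt_mem_nhds p2), self_mem_nhdsWithin] with x e1 e2 hx
  obtain ⟨hxJ, hx0⟩ := hT x hx
  have l1 : T x₀ - d < T x := by
    by_contra! h
    have := (hanti x hx).antitoneOn hxJ h1 h
    linarith
  have l2 : T x < T x₀ + d := by
    by_contra! h
    have := (hanti x hx).antitoneOn h2 hxJ h
    linarith
  rw [Real.dist_eq, abs_lt]
  constructor <;> linarith

/-- A family `g s` of curves spiralling into `0` in the complex plane (`ω` is minus the logarithmic
derivative in time) meets an arc `β` infinitely often when `β s → 0` inside the right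
half-plane. Lifting by the logarithm, the time `τ` at which `‖g s τ‖ = ‖β s‖` depends continuously
on `s`, and the phase of `g s τ` relative to `β s` tends to `-∞`, so it crosses every sufficiently
negative multiple of `2π`. -/
theorem infinite_spiral_matches {ω : ℝ × ℝ → ℂ} (hω : Continuous ω) {m M : ℝ} (hm : 0 < m)
    (hre : ∀ z, m ≤ (ω z).re) (hRe : ∀ z, (ω z).re ≤ M) (him : ∀ z, m ≤ (ω z).im)
    {g : ℝ → ℝ → ℂ} (hg : ∀ s τ, 0 ≤ τ → HasDerivAt (g s) (-ω (s, τ) * g s τ) τ)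
    (hg0 : Continuous fun s => g s 0) (hgne : ∀ s, g s 0 ≠ 0)
    {β : ℝ → ℂ} {ε : ℝ} (hε : 0 < ε) (hβ : ContinuousOn β (Ioc 0 ε))
    (hβre : ∀ s ∈ Ioc 0 ε, 0 < (β s).re) (hβ0 : Tendsto β (𝓝[>] 0) (𝓝 0)) :
    {s | s ∈ Ioc 0 ε ∧ ∃ τ, 0 < τ ∧ g s τ = β s}.Infinite := by
  set I : ℝ → ℝ → ℂ := fun s τ => ∫ σ in (0 : ℝ)..τ, ω (s, σ) with hI
  have hIc : Continuous fun z : ℝ × ℝ => I z.1 z.2 :=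
    intervalIntegral.continuous_parametric_intervalIntegral_of_continuous
      (f := fun (z : ℝ × ℝ) σ => ω (z.1, σ)) (by fun_prop) continuous_snd
  have hId : ∀ s τ, HasDerivAt (I s) (ω (s, τ)) τ := fun s τ =>
    intervalIntegral.integral_hasDerivAt_right
      ((hω.comp (by fun_prop : Continuous fun σ : ℝ => (s, σ))).intervalIntegrable _ _)
      ((hω.comp (by fun_prop : Continuous fun σ : ℝ => (s, σ))).stronglyMeasurableAtFilter _ _)
      (hω.comp (by fun_prop : Continuous fun σ : ℝ => (s, σ))).continuousAt
  have hI0 : ∀ s, I s 0 = 0 := fun s => by simp [hI]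
  have hIre : ∀ s τ, HasDerivAt (fun τ => (I s τ).re) (ω (s, τ)).re τ := fun s τ =>
    Complex.reCLM.hasFDerivAt.comp_hasDerivAt τ (hId s τ)
  have hIim : ∀ s τ, HasDerivAt (fun τ => (I s τ).im) (ω (s, τ)).im τ := fun s τ =>
    Complex.imCLM.hasFDerivAt.comp_hasDerivAt τ (hId s τ)
  have hI1 : ∀ s τ₁ τ₂, τ₁ ≤ τ₂ → m * (τ₂ - τ₁) ≤ (I s τ₂).re - (I s τ₁).re := fun s =>
    mul_sub_le_image_sub_of_le_deriv (fun τ => (hIre s τ).differentiableAt)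
      (fun τ => by rw [(hIre s τ).deriv]; exact hre _)
  have hI2 : ∀ s τ₁ τ₂, τ₁ ≤ τ₂ → (I s τ₂).re - (I s τ₁).re ≤ M * (τ₂ - τ₁) := fun s =>
    image_sub_le_mul_sub_of_deriv_le (fun τ => (hIre s τ).differentiableAt)
      (fun τ => by rw [(hIre s τ).deriv]; exact hRe _)
  have hI3 : ∀ s τ₁ τ₂, τ₁ ≤ τ₂ → m * (τ₂ - τ₁) ≤ (I s τ₂).im - (I s τ₁).im := fun s =>
    mul_sub_le_image_sub_of_le_deriv (fun τ => (hIim s τ).differentiableAt)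
      (fun τ => by rw [(hIim s τ).deriv]; exact him _)
  have hM : 0 < M := hm.trans_le ((hre 0).trans (hRe 0))
  have hlift : ∀ s τ, 0 ≤ τ → g s τ = g s 0 * Complex.exp (-I s τ) := by
    intro s τ hτ
    have hd : ∀ x, 0 ≤ x → HasDerivAt (fun x => g s x * Complex.exp (I s x)) 0 x := by
      intro x hx
      have h0 : -ω (s, x) * g s x * Complex.exp (I s x)
          + g s x * (Complex.exp (I s x) * ω (s, x)) = 0 := by ring
      exact h0 ▸ (hg s x hx).mul (hId s x).cexp
    have := constant_of_has_deriv_right_zero (f := fun x => g s x * Complex.exp (I s x))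
      (a := 0) (b := τ) (fun x hx => (hd x hx.1).continuousAt.continuousWithinAt)
      (fun x hx => (hd x hx.1).hasDerivWithinAt) τ (right_mem_Icc.2 hτ)
    simp only [hI0, Complex.exp_zero, mul_one] at this
    rw [← this, Complex.exp_neg, mul_assoc, mul_inv_cancel₀ (Complex.exp_ne_zero _), mul_one]
  -- a continuous logarithm of `g s 0` near `s = 0`
  set c₀ : ℝ → ℂ := fun s => Complex.log (g s 0 / g 0 0) + Complex.log (g 0 0) with hc₀
  have hquot : Continuous fun s => g s 0 / g 0 0 := hg0.div_const _
  have hn0 : 0 < ‖g 0 0‖ := norm_pos_iff.2 (hgne 0)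
  have ev : ∀ᶠ s in 𝓝[>] (0 : ℝ), ‖β s‖ < ‖g 0 0‖ / 2 := by
    have := hβ0.norm
    rw [norm_zero] at this
    exact this.eventually (gt_mem_nhds (by positivity))
  have ev2 : ∀ᶠ s in 𝓝 (0 : ℝ), 0 < (g s 0 / g 0 0).re ∧ ‖g 0 0‖ / 2 < ‖g s 0‖ := by
    refine Filter.Eventually.and ?_ ?_
    · refine (Complex.continuous_re.comp hquot).continuousAt.eventually (lt_mem_nhds ?_)
      simp [div_self (hgne 0)]
    · exact hg0.norm.continuousAt.eventually (lt_mem_nhds (by simpa using hn0))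
  obtain ⟨δ₁, hδ₁, h1⟩ := Metric.eventually_nhds_iff.1 ev2
  obtain ⟨δ₂, hδ₂, h2⟩ := mem_nhdsGT_iff_exists_Ioo_subset.1 ev
  set e := min ε (min (δ₁ / 2) (δ₂ / 2)) with he
  have he0 : 0 < e := lt_min hε (lt_min (by linarith) (by simpa using hδ₂))
  have heε : e ≤ ε := min_le_left _ _
  have heδ₁ : e < δ₁ := ((min_le_right _ _).trans (min_le_left _ _)).trans_lt (by linarith)
  have heδ₂ : e < δ₂ := ((min_le_right _ _).trans (min_le_right _ _)).trans_lt
    (by have : 0 < δ₂ := hδ₂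
        linarith)
  have hsub : Ioc 0 e ⊆ Ioc 0 ε := Ioc_subset_Ioc_right heε
  have hs1 : ∀ s ∈ Icc 0 e, 0 < (g s 0 / g 0 0).re ∧ ‖g 0 0‖ / 2 < ‖g s 0‖ := fun s hs =>
    h1 (by rw [Real.dist_eq, sub_zero, abs_of_nonneg hs.1]; exact hs.2.trans_lt heδ₁)
  have hs2 : ∀ s ∈ Ioc 0 e, ‖β s‖ < ‖g s 0‖ := fun s hs =>
    (h2 ⟨hs.1, hs.2.trans_lt heδ₂⟩ : ‖β s‖ < ‖g 0 0‖ / 2).trans (hs1 s (Ioc_subset_Icc_self hs)).2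
  have hc₀c : ContinuousOn c₀ (Icc 0 e) := by
    refine ContinuousOn.add ?_ continuousOn_const
    exact hquot.continuousOn.clog fun s hs => Complex.mem_slitPlane_iff.2 (Or.inl (hs1 s hs).1)
  have hc₀e : ∀ s, Complex.exp (c₀ s) = g s 0 := fun s => by
    simp only [hc₀]
    rw [Complex.exp_add, Complex.exp_log (div_ne_zero (hgne s) (hgne 0)),
      Complex.exp_log (hgne 0), div_mul_cancel₀ _ (hgne 0)]
  have hβne : ∀ s ∈ Ioc 0 e, β s ≠ 0 := fun s hs h => by
    have := hβre s (hsub hs)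
    simp [h] at this
  -- the logarithmic radius that `g s` has to lose before it reaches the modulus of `β s`
  set D : ℝ → ℝ := fun s => Real.log ‖g s 0‖ - Real.log ‖β s‖ with hD
  have hDpos : ∀ s ∈ Ioc 0 e, 0 < D s := fun s hs =>
    sub_pos.2 (Real.log_lt_log (norm_pos_iff.2 (hβne s hs)) (hs2 s hs))
  have hDc : ContinuousOn D (Ioc 0 e) :=
    (hg0.norm.continuousOn.log fun s _ => norm_ne_zero_iff.2 (hgne s)).sub
      ((hβ.mono hsub).norm.log fun s hs => norm_ne_zero_iff.2 (hβne s hs))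
  have hex : ∀ s ∈ Ioc 0 e, ∃ τ, 0 ≤ τ ∧ (I s τ).re = D s := by
    intro s hs
    have hD0 := hDpos s hs
    have hle : 0 ≤ D s / m := by positivity
    have hcont : ContinuousOn (fun τ => (I s τ).re) (Icc 0 (D s / m)) :=
      fun τ _ => (hIre s τ).continuousAt.continuousWithinAt
    have hmem : D s ∈ Icc (I s 0).re (I s (D s / m)).re := by
      refine ⟨by simpa [hI0] using hD0.le, ?_⟩
      have := hI1 s 0 _ hle
      rw [hI0, sub_zero, mul_div_cancel₀ _ hm.ne'] at this
      simpa using this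
    obtain ⟨τ, hτ, h⟩ := intermediate_value_Icc hle hcont hmem
    exact ⟨τ, hτ.1, h⟩
  choose! T hT0 hT using hex
  have hTc : ContinuousOn T (Ioc 0 e) := by
    refine continuousOn_of_strictAntiOn (F := fun s τ => D s - (I s τ).re) isOpen_univ
      (fun τ _ => hDc.sub ?_) (fun s _ τ₁ _ τ₂ _ h => ?_) (fun s hs => ⟨trivial, ?_⟩)
    · exact (Complex.continuous_re.comp
        (hIc.comp (by fun_prop : Continuous fun s : ℝ => (s, τ)))).continuousOn
    · have := hI1 s τ₁ τ₂ h.le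
      have : 0 < m * (τ₂ - τ₁) := mul_pos hm (sub_pos.2 h)
      simp only
      linarith
    · simp [hT s hs]
  have hTD : ∀ s ∈ Ioc 0 e, D s / M ≤ T s := fun s hs => by
    rw [div_le_iff₀' hM]
    have := hI2 s 0 (T s) (hT0 s hs)
    rw [hI0, hT s hs] at this
    simpa using this
  -- phase of `g s` relative to `β s` at the time `T s` when the moduli agree; `arg` is continuous
  -- along `β` because `β` stays in the right half-plane
  set H : ℝ → ℝ := fun s => (c₀ s).im - (I s (T s)).im - (Complex.arg (β s)) with hH
  have hHc : ContinuousOn H (Ioc 0 e) := by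
    refine ContinuousOn.sub (ContinuousOn.sub ?_ ?_) ?_
    · exact Complex.continuous_im.comp_continuousOn (hc₀c.mono Ioc_subset_Icc_self)
    · exact Complex.continuous_im.comp_continuousOn
        (hIc.comp_continuousOn (continuousOn_id.prodMk hTc))
    · intro s hs
      exact (Complex.continuousAt_arg (Complex.mem_slitPlane_iff.2
        (Or.inl (hβre s (hsub hs))))).comp_continuousWithinAt (hβ.mono hsub s hs)
  have hev : ∀ᶠ s in 𝓝[>] (0 : ℝ), s ∈ Ioc 0 e := Ioc_mem_nhdsGT he0
  have hDlim : Tendsto D (𝓝[>] 0) atTop := by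
    have hb : Tendsto (fun s => Real.log ‖β s‖) (𝓝[>] 0) atBot := by
      refine Real.tendsto_log_nhdsNE_zero.comp (tendsto_nhdsWithin_iff.2 ⟨?_, ?_⟩)
      · simpa using hβ0.norm
      · filter_upwards [hev] with s hs using norm_ne_zero_iff.2 (hβne s hs)
    have ha : Tendsto (fun s => Real.log ‖g s 0‖) (𝓝[>] 0) (𝓝 (Real.log ‖g 0 0‖)) :=
      ((hg0.norm.log fun s => norm_ne_zero_iff.2 (hgne s)).tendsto 0).mono_left nhdsWithin_le_nhds
    exact ha.add_atTop (tendsto_neg_atBot_atTop.comp hb)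
  have hHlim : Tendsto H (𝓝[>] 0) atBot := by
    have hc : Tendsto (fun s => (c₀ s).im) (𝓝[>] 0) (𝓝 (c₀ 0).im) := by
      have := (hc₀c 0 (left_mem_Icc.2 he0.le)).tendsto
      refine (Complex.continuous_im.tendsto _).comp (this.mono_left ?_)
      exact nhdsWithin_le_of_mem (mem_of_superset hev Ioc_subset_Icc_self)
    have hbound : Tendsto (fun s => ((c₀ s).im + Real.pi) + -(m / M * D s)) (𝓝[>] 0) atBot :=
      (hc.add_const _).add_atBot
        (tendsto_neg_atTop_atBot.comp (hDlim.const_mul_atTop (by positivity)))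
    refine tendsto_atBot_mono' _ ?_ hbound
    filter_upwards [hev] with s hs
    have h1 := hI3 s 0 (T s) (hT0 s hs)
    have h2 := mul_le_mul_of_nonneg_left (hTD s hs) hm.le
    have h3 := Complex.neg_pi_lt_arg (β s)
    have h4 : m * (D s / M) = m / M * D s := by ring
    rw [hI0, sub_zero] at h1
    simp only [Complex.zero_im, sub_zero] at h1
    simp only [hH]
    linarith
  -- a finite set of matches would bound `H` from below on it, while `H` takes every sufficiently
  -- negative multiple of `2π`, and each such value is a match
  intro hfin
  obtain ⟨B, hB⟩ := (hfin.image H).bddBelow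
  obtain ⟨n, hn⟩ := exists_nat_gt (max (-B) (-H e))
  have hn1 : -(n * (2 * Real.pi)) < B ∧ -(n * (2 * Real.pi)) < H e := by
    have h1 := (le_max_left _ _).trans_lt hn
    have h2 := (le_max_right _ _).trans_lt hn
    have h3 : (n : ℝ) ≤ n * (2 * Real.pi) :=
      le_mul_of_one_le_right (Nat.cast_nonneg n) (by linarith [Real.pi_gt_three])
    constructor <;> linarith
  obtain ⟨s₁, hs₁, hs₁H⟩ :=
    (hev.and (hHlim.eventually (eventually_le_atBot (-(n * (2 * Real.pi)))))).exists
  obtain ⟨s, hs, hsH⟩ := intermediate_value_Icc hs₁.2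
    (hHc.mono fun x hx => ⟨hs₁.1.trans_le hx.1, hx.2⟩) ⟨hs₁H, hn1.2.le⟩
  have hse : s ∈ Ioc 0 e := ⟨hs₁.1.trans_le hs.1, hs.2⟩
  refine absurd (hB (mem_image_of_mem H ⟨hsub hse, T s, ?_, ?_⟩)) (not_le.2 (hsH ▸ hn1.1))
  · exact (div_pos (hDpos s hse) hM).trans_le (hTD s hse)
  · have hre' : (c₀ s).re = Real.log ‖g s 0‖ := by
      have h := congrArg norm (hc₀e s)
      rw [Complex.norm_exp] at h
      rw [← h, Real.log_exp]
    have hlog : c₀ s - I s (T s) = Complex.log (β s) - n * (2 * Real.pi * Complex.I) := by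
      apply Complex.ext
      · have := hT s hse
        simp only [hD] at this
        simp [hre', this, Complex.log_re]
      · have : (c₀ s).im - (I s (T s)).im - Complex.arg (β s) = -(n * (2 * Real.pi)) := hsH
        simp [Complex.log_im]
        linarith
    rw [hlift s _ (hT0 s hse), ← hc₀e, ← Complex.exp_add, ← sub_eq_add_neg, hlog, Complex.exp_sub,
      Complex.exp_log (hβne s hse), Complex.exp_nat_mul_two_pi_mul_I, div_one]

/-! ### Transport of a covector along an orbit -/

theorem uniform_first_order {E : Type*} [NormedAddCommGroup E] [NormedSpace ℝ E]
    {F : E → E} (hF : ContDiff ℝ 1 F) (hFs : HasCompactSupport F) {ε : ℝ} (hε : 0 < ε) :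
    ∃ δ > 0, ∀ x y, ‖x - y‖ < δ → ‖F x - F y - fderiv ℝ F y (x - y)‖ ≤ ε * ‖x - y‖ := by
  have huc : UniformContinuous (fderiv ℝ F) :=
    (hFs.fderiv ℝ).uniformContinuous_of_continuous (hF.continuous_fderiv one_ne_zero)
  obtain ⟨δ, hδ, h⟩ := Metric.uniformContinuous_iff.1 huc ε hε
  refine ⟨δ, hδ, fun x y hxy => ?_⟩
  refine (convex_ball y δ).norm_image_sub_le_of_norm_hasFDerivWithin_le' (𝕜 := ℝ)
    (f' := fderiv ℝ F)
    (fun z _ => ((hF.differentiable one_ne_zero) z).hasFDerivAt.hasFDerivWithinAt) (fun z hz => ?_)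
    (Metric.mem_ball_self hδ) (by rwa [Metric.mem_ball, dist_eq_norm])
  rw [← dist_eq_norm]
  exact (h (Metric.mem_ball.1 hz)).le

/-- Solving the adjoint variational equation along the orbit of `x₀` produces a covector `η` at
the end point which kills the field there and which, to first order, takes on
`Φ T x - Φ T x₀` the value of `η₀` on `x - x₀`. -/
theorem exists_transported_covector {E : Type*} [NormedAddCommGroup E] [NormedSpace ℝ E]
    [FiniteDimensional ℝ E] [CompleteSpace E] {F : E → E} (hF : ContDiff ℝ 1 F)
    (hFs : HasCompactSupport F) {K : ℝ≥0} (hK : LipschitzWith K F)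
    {Φ : ℝ → E → E} (h0 : ∀ x, Φ 0 x = x)
    (hΦ : ∀ t x, HasDerivAt (fun t => Φ t x) (F (Φ t x)) t)
    (hdist : ∀ t x y, dist (Φ t x) (Φ t y) ≤ dist x y * Real.exp (K * |t|))
    {T : ℝ} (hT : 0 ≤ T) (x₀ : E) (η₀ : E →L[ℝ] ℝ) (hη₀ : η₀ (F x₀) = 0) :
    ∃ η : E →L[ℝ] ℝ, η (F (Φ T x₀)) = 0 ∧ ∀ ε > 0, ∃ δ > 0, ∀ x, ‖x - x₀‖ < δ →
      |η (Φ T x - Φ T x₀) - η₀ (x - x₀)| ≤ ε * ‖x - x₀‖ := by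
  have hΦc : ∀ x, Continuous fun t => Φ t x := fun x =>
    continuous_iff_continuousAt.2 fun t => (hΦ t x).continuousAt
  set A : ℝ → E →L[ℝ] E := fun t => fderiv ℝ F (Φ t x₀) with hA
  have hAc : Continuous A := (hF.continuous_fderiv one_ne_zero).comp (hΦc x₀)
  have hAK : ∀ t, ‖A t‖ ≤ K := fun t => norm_fderiv_le_of_lipschitz ℝ hK
  obtain ⟨η, hη0, hηc, hη⟩ := exists_linear_solution
    (B := fun t => -((ContinuousLinearMap.compL ℝ E E ℝ).flip (A t))) (K := K) hT
    (by fun_prop)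
    (fun t => by
      rw [norm_neg]
      refine ContinuousLinearMap.opNorm_le_bound _ K.2 fun y => ?_
      calc ‖y.comp (A t)‖ ≤ ‖y‖ * ‖A t‖ := y.opNorm_comp_le _
        _ ≤ K * ‖y‖ := by rw [mul_comm]; exact mul_le_mul_of_nonneg_right (hAK t) (norm_nonneg _))
    η₀
  have hη' : ∀ t ∈ Ico 0 T, HasDerivWithinAt η (-(η t).comp (A t)) (Ici t) t := hη
  refine ⟨η T, ?_, fun ε hε => ?_⟩
  · -- `F ∘ Φ` solves the variational equation, so its pairing with `η` is conserved
    have hd : ∀ t ∈ Ico 0 T, HasDerivWithinAt (fun t => η t (F (Φ t x₀))) 0 (Ici t) t := by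
      intro t ht
      have h1 : HasDerivAt (fun t => F (Φ t x₀)) (A t (F (Φ t x₀))) t :=
        ((hF.differentiable one_ne_zero) (Φ t x₀)).hasFDerivAt.comp_hasDerivAt t (hΦ t x₀)
      have := (hη' t ht).clm_apply h1.hasDerivWithinAt
      simpa using this
    have hc : ContinuousOn (fun t => η t (F (Φ t x₀))) (Icc 0 T) :=
      hηc.clm_apply (hF.continuous.comp (hΦc x₀)).continuousOn
    have := constant_of_has_deriv_right_zero hc hd T (right_mem_Icc.2 hT)
    rw [this, hη0, h0, hη₀]
  · obtain ⟨H, hH⟩ := isCompact_Icc.exists_bound_of_continuousOn hηc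
    have hH0 : 0 ≤ H := (norm_nonneg _).trans (hH 0 (left_mem_Icc.2 hT))
    set R := Real.exp (K * T) with hR
    have hR0 : 0 < R := Real.exp_pos _
    set ε' := ε / ((H + 1) * R * (T + 1)) with hε'
    have hε'0 : 0 < ε' := by positivity
    obtain ⟨δ, hδ, hfo⟩ := uniform_first_order hF hFs hε'0
    refine ⟨δ / R, by positivity, fun x hx => ?_⟩
    have hD : ∀ t ∈ Icc 0 T, ‖Φ t x - Φ t x₀‖ ≤ R * ‖x - x₀‖ := by
      intro t ht
      have h1 := hdist t x x₀
      rw [dist_eq_norm, dist_eq_norm, abs_of_nonneg ht.1] at h1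
      refine h1.trans ?_
      rw [mul_comm]
      refine mul_le_mul_of_nonneg_right (Real.exp_le_exp.2 ?_) (norm_nonneg _)
      exact mul_le_mul_of_nonneg_left ht.2 K.2
    have hd : ∀ t ∈ Ico 0 T, HasDerivWithinAt (fun t => η t (Φ t x - Φ t x₀))
        (η t (F (Φ t x) - F (Φ t x₀) - A t (Φ t x - Φ t x₀))) (Ici t) t := by
      intro t ht
      have := (hη' t ht).clm_apply ((hΦ t x).sub (hΦ t x₀)).hasDerivWithinAt
      convert! this using 1
      simp
      ring
    have hc : ContinuousOn (fun t => η t (Φ t x - Φ t x₀)) (Icc 0 T) :=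
      hηc.clm_apply ((hΦc x).sub (hΦc x₀)).continuousOn
    have := norm_image_sub_le_of_norm_deriv_right_le_segment (C := H * (ε' * (R * ‖x - x₀‖)))
      hc hd (fun t ht => by
        have ht' := Ico_subset_Icc_self ht
        refine ((η t).le_opNorm _).trans ?_
        refine mul_le_mul (hH t ht') ?_ (norm_nonneg _) hH0
        refine (hfo _ _ ?_).trans (mul_le_mul_of_nonneg_left (hD t ht') hε'0.le)
        refine (hD t ht').trans_lt ?_
        rwa [lt_div_iff₀' hR0] at hx) T (right_mem_Icc.2 hT)
    simp only [hη0, h0, sub_zero, Real.norm_eq_abs] at this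
    refine this.trans ?_
    have h1 : H * (ε' * (R * ‖x - x₀‖)) * T ≤ (H + 1) * (ε' * (R * ‖x - x₀‖)) * (T + 1) := by
      gcongr <;> linarith
    refine h1.trans (le_of_eq ?_)
    rw [hε']
    field_simp

/-! ### The transition map of the upper field from the fold line to the switching plane -/

theorem eventually_forall_flow_mem {E : Type*} [TopologicalSpace E]
    {Φ : ℝ → E → E} (hc : Continuous fun z : ℝ × E => Φ z.1 z.2) {U : Set E} (hU : IsOpen U)
    {S : Set ℝ} (hS : IsCompact S) {x₀ : E} (h : ∀ t ∈ S, Φ t x₀ ∈ U) :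
    ∀ᶠ x in 𝓝 x₀, ∀ t ∈ S, Φ t x ∈ U := by
  refine hS.eventually_forall_of_forall_eventually fun t ht => ?_
  have : Continuous fun z : E × ℝ => Φ z.2 z.1 := hc.comp continuous_swap
  exact this.continuousAt.eventually (hU.mem_nhds (h t ht))

/-- A function vanishing to first order at the left end point, with a derivative which is itself
differentiable with positive derivative, is positive afterwards. -/
theorem pos_of_second_deriv_pos {z h h' : ℝ → ℝ} {b : ℝ}
    (hz : ∀ t ∈ Icc 0 b, HasDerivAt z (h t) t) (hh : ∀ t ∈ Icc 0 b, HasDerivAt h (h' t) t)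
    (hpos : ∀ t ∈ Icc 0 b, 0 < h' t) (hz0 : z 0 = 0) (hh0 : h 0 = 0) :
    ∀ t ∈ Ioc 0 b, 0 < z t := by
  have h1 : ∀ t ∈ Ioc 0 b, 0 < h t := by
    intro t ht
    have := strictMonoOn_of_deriv_pos (convex_Icc 0 b)
      (fun s hs => (hh s hs).continuousAt.continuousWithinAt)
      (fun s hs => by
        rw [(hh s (interior_subset hs)).deriv]; exact hpos s (interior_subset hs))
      (left_mem_Icc.2 (ht.1.le.trans ht.2)) (Ioc_subset_Icc_self ht) ht.1
    rwa [hh0] at this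
  intro t ht
  have := strictMonoOn_of_deriv_pos (convex_Icc 0 b)
      (fun s hs => (hz s hs).continuousAt.continuousWithinAt)
      (fun s hs => by
        rw [(hz s (interior_subset hs)).deriv]
        rw [interior_Icc] at hs
        exact h1 s (Ioo_subset_Ioc_self hs))
      (left_mem_Icc.2 (ht.1.le.trans ht.2)) (Ioc_subset_Icc_self ht) ht.1
  rwa [hz0] at this

/-- The orbits of `X` starting on the fold line near `q` rise above the plane `z = 0` and come back
to it near `p`, at a point `b x` depending continuously on the starting point `x`.

To first order, a covector `ℓ` takes on `b x - p` the value `s` of the coordinate along the fold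
line: transport along the orbit gives a covector `η` killing `X` at the end point, so that the
variation of the return time does not contribute. On the part of the fold line where the
displacement from `q` is at most `C * s`, the error terms are at most `s / 2`, whence
`0 < ℓ (b x - p)`. -/
theorem exists_transition_map {X : ℝ × ℝ × ℝ → ℝ × ℝ × ℝ} (hX : ContDiff ℝ 1 X) {p q : ℝ × ℝ}
    (hp : (X (p.1, p.2, 0)).2.2 < 0)
    (hvis : 0 < fderiv ℝ (fun r : ℝ × ℝ × ℝ => (X r).2.2) (q.1, q.2, 0) (X (q.1, q.2, 0)))
    {t₀ : ℝ} (ht₀ : 0 < t₀) {w : ℝ → ℝ × ℝ × ℝ}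
    (hw : ∀ t ∈ Icc (0 : ℝ) t₀, HasDerivAt w (X (w t)) t) (hw0 : w 0 = (q.1, q.2, 0))
    (hwpos : ∀ t ∈ Ioo (0 : ℝ) t₀, 0 < (w t).2.2) (hwt : w t₀ = (p.1, p.2, 0))
    {G : Set (ℝ × ℝ × ℝ)} (hG : IsOpen G) (hwG : ∀ t ∈ Icc (0 : ℝ) t₀, w t ∈ G)
    {C : ℝ} (hC : 0 < C) :
    ∃ (N : Set (ℝ × ℝ)) (T : ℝ × ℝ → ℝ) (b : ℝ × ℝ → ℝ × ℝ) (ℓ : ℝ × ℝ →L[ℝ] ℝ),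
      N ∈ 𝓝 q ∧ b q = p ∧ ContinuousOn b N ∧
      ∀ x ∈ N, (X (x.1, x.2, 0)).2.2 = 0 → 0 < T x ∧
        (∃ u : ℝ → ℝ × ℝ × ℝ, (∀ t ∈ Icc 0 (T x), HasDerivAt u (X (u t)) t) ∧
          u 0 = (x.1, x.2, 0) ∧ (∀ t ∈ Ioo 0 (T x), 0 < (u t).2.2) ∧
          u (T x) = ((b x).1, (b x).2, 0) ∧ ∀ t ∈ Icc 0 (T x), u t ∈ G) ∧
        ∀ s : ℝ, 0 < s → ‖x - q‖ ≤ C * s →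
          (X (q.1, q.2, 0)).1 * (x - q).2 - (X (q.1, q.2, 0)).2.1 * (x - q).1 = s →
          0 < ℓ (b x - p) := by
  set x₀ : ℝ × ℝ × ℝ := (q.1, q.2, 0) with hx₀
  set y₀ : ℝ × ℝ × ℝ := (p.1, p.2, 0) with hy₀
  have hwc : ContinuousOn w (Icc 0 t₀) := fun t ht => (hw t ht).continuousAt.continuousWithinAt
  obtain ⟨F, V, hF, hFs, hV, hCV, hFV⟩ := exists_cutoff isOpen_univ
    (isCompact_Icc.image_of_continuousOn hwc) (subset_univ _) hX.contDiffOn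
  have hwV : ∀ t ∈ Icc 0 t₀, w t ∈ V := fun t ht => hCV (mem_image_of_mem _ ht)
  obtain ⟨K, hK⟩ := hF.lipschitzWith_of_hasCompactSupport hFs one_ne_zero
  obtain ⟨M, hM⟩ := hFs.exists_bound_of_continuous hF.continuous
  obtain ⟨Φ, h0, hΦ, hdist, hΦc, -⟩ := exists_flow hK hM
  have hΦw : ∀ t ∈ Icc 0 t₀, Φ t x₀ = w t := by
    have hc : Continuous fun t => Φ t x₀ := hΦc.comp (by fun_prop : Continuous fun t => (t, x₀))
    refine ODE_solution_unique_of_mem_Icc_right (v := fun _ => F) (s := fun _ => univ) (K := K)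
      (fun t _ => hK.lipschitzOnWith) hc.continuousOn
      (fun t _ => (hΦ t x₀).hasDerivWithinAt) (fun _ _ => mem_univ _) hwc
      (fun t ht => ?_) (fun _ _ => mem_univ _) (by simp [h0, hw0])
    rw [hFV _ (hwV t (Ico_subset_Icc_self ht))]
    exact (hw t (Ico_subset_Icc_self ht)).hasDerivWithinAt
  have hx₀V : x₀ ∈ V := hw0 ▸ hwV 0 (left_mem_Icc.2 ht₀.le)
  have hy₀V : y₀ ∈ V := hwt ▸ hwV t₀ (right_mem_Icc.2 ht₀.le)
  have hy₀G : y₀ ∈ G := hwt ▸ hwG t₀ (right_mem_Icc.2 ht₀.le)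
  have hΦy : Φ t₀ x₀ = y₀ := by rw [hΦw t₀ (right_mem_Icc.2 ht₀.le), hwt]
  have hFx : F x₀ = X x₀ := hFV _ hx₀V
  have hFy : F y₀ = X y₀ := hFV _ hy₀V
  have hz : ∀ t x, HasDerivAt (fun t => (Φ t x).2.2) (F (Φ t x)).2.2 t := fun t x =>
    (hΦ t x).snd.snd
  -- the covector measuring displacement along the fold line, and its transport to `y₀`
  obtain ⟨η, hη0, hη⟩ := exists_transported_covector hF hFs hK h0 hΦ hdist ht₀.le x₀
    ((X x₀).1 • (ContinuousLinearMap.fst ℝ ℝ ℝ).comp (ContinuousLinearMap.snd ℝ ℝ (ℝ × ℝ)) -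
      (X x₀).2.1 • ContinuousLinearMap.fst ℝ ℝ (ℝ × ℝ)) (by simp [hFx]; ring)
  rw [hΦy, hFy] at hη0
  obtain ⟨c, hc, hcy⟩ : ∃ c > 0, (X y₀).2.2 < -c := ⟨-(X y₀).2.2 / 2, by linarith, by linarith⟩
  set e := Real.exp (K * t₀) with he
  have he0 : 0 < e := Real.exp_pos _
  -- neighbourhood of the end point
  obtain ⟨O, hO, hyO, hOV, hOG, hOc, hOη⟩ : ∃ O : Set (ℝ × ℝ × ℝ), IsOpen O ∧ y₀ ∈ O ∧ O ⊆ V ∧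
      O ⊆ G ∧ (∀ y ∈ O, (F y).2.2 < -c) ∧ ∀ y ∈ O, |η (F y)| < c / (4 * C * e) := by
    have hFc := hF.continuous
    refine ⟨V ∩ G ∩ {y | (F y).2.2 < -c} ∩ {y | |η (F y)| < c / (4 * C * e)}, ?_, ?_,
      fun y hy => hy.1.1.1, fun y hy => hy.1.1.2, fun y hy => hy.1.2, fun y hy => hy.2⟩
    · exact ((hV.inter hG).inter (isOpen_lt (by fun_prop) continuous_const)).inter
        (isOpen_lt (by fun_prop) continuous_const)
    · refine ⟨⟨⟨hy₀V, hy₀G⟩, ?_⟩, ?_⟩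
      · simpa [hFy] using hcy
      · simp only [mem_ofPred_eq, hFy, hη0, abs_zero]; positivity
  have hΦc₀ : ∀ x, Continuous fun t => Φ t x := fun x =>
    hΦc.comp (by fun_prop : Continuous fun t => (t, x))
  obtain ⟨δ, hδ, hδt, hδO⟩ : ∃ δ > 0, δ < t₀ ∧ ∀ t ∈ Icc (t₀ - δ) (t₀ + δ), Φ t x₀ ∈ O := by
    have := (hΦc₀ x₀).continuousAt.eventually (hO.mem_nhds (by rwa [hΦy]) : O ∈ 𝓝 (Φ t₀ x₀))
    obtain ⟨δ, hδ, h⟩ := Metric.eventually_nhds_iff_ball.1 this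
    refine ⟨min δ t₀ / 2, by positivity, ?_, fun t ht => h t ?_⟩
    · linarith [min_le_right δ t₀]
    · rw [Metric.mem_ball, Real.dist_eq, abs_lt]
      have := min_le_left δ t₀
      constructor <;> linarith [ht.1, ht.2]
  -- neighbourhood of the starting point
  set D : ℝ × ℝ × ℝ → ℝ := fun y => (fderiv ℝ F y (F y)).2.2 with hD
  have hDc : Continuous D :=
    ((hF.continuous_fderiv one_ne_zero).clm_apply hF.continuous).snd.snd
  have hDx : 0 < D x₀ := by
    have h1 : fderiv ℝ (fun r : ℝ × ℝ × ℝ => (F r).2.2) x₀ (F x₀) = D x₀ := by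
      have := ((hF.differentiable one_ne_zero) x₀).hasFDerivAt.snd.snd.fderiv
      rw [this]; rfl
    have h2 : (fun r : ℝ × ℝ × ℝ => (F r).2.2) =ᶠ[𝓝 x₀] fun r => (X r).2.2 := by
      filter_upwards [hV.mem_nhds hx₀V] with r hr using by rw [hFV r hr]
    rw [← h1, h2.fderiv_eq, hFx]; exact hvis
  obtain ⟨t₁, ht₁, ht₁D⟩ : ∃ t₁ > 0, ∀ t ∈ Icc 0 t₁, 0 < D (Φ t x₀) := by
    have : ∀ᶠ t in 𝓝 (0 : ℝ), 0 < D (Φ t x₀) :=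
      (hDc.comp (hΦc₀ x₀)).continuousAt.eventually (lt_mem_nhds (by simpa [h0] using hDx))
    obtain ⟨δ, hδ, h⟩ := Metric.eventually_nhds_iff_ball.1 this
    refine ⟨δ / 2, by positivity, fun t ht => h t ?_⟩
    rw [Metric.mem_ball, Real.dist_eq, abs_lt]
    constructor <;> linarith [ht.1, ht.2]
  -- the height of an orbit is strictly decreasing for times near `t₀`
  have hanti : ∀ x, (∀ t ∈ Icc (t₀ - δ) (t₀ + δ), Φ t x ∈ O) →
      StrictAntiOn (fun t => (Φ t x).2.2) (Icc (t₀ - δ) (t₀ + δ)) := fun x hx =>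
    strictAntiOn_of_deriv_neg (convex_Icc _ _)
      (fun t _ => (hz t x).continuousAt.continuousWithinAt) fun t ht => by
        rw [(hz t x).deriv]; linarith [hOc _ (hx t (interior_subset ht))]
  have hzy : (Φ t₀ x₀).2.2 = 0 := by rw [hΦy]
  have hmid : t₀ ∈ Icc (t₀ - δ) (t₀ + δ) := ⟨by linarith, by linarith⟩
  have hlft : t₀ - δ ∈ Icc (t₀ - δ) (t₀ + δ) := ⟨by linarith, by linarith⟩
  have hrgt : t₀ + δ ∈ Icc (t₀ - δ) (t₀ + δ) := ⟨by linarith, by linarith⟩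
  have hopen : IsOpen {y : ℝ × ℝ × ℝ | 0 < y.2.2} := isOpen_lt continuous_const (by fun_prop)
  have hopen' : IsOpen {y : ℝ × ℝ × ℝ | y.2.2 < 0} := isOpen_lt (by fun_prop) continuous_const
  obtain ⟨δη, hδη, hη'⟩ := hη (1 / (4 * C)) (by positivity)
  have hev : ∀ᶠ x in 𝓝 x₀, (∀ t ∈ Icc 0 t₀, Φ t x ∈ V ∩ G) ∧
      (∀ t ∈ Icc (t₀ - δ) (t₀ + δ), Φ t x ∈ O) ∧ (∀ t ∈ Icc 0 t₁, Φ t x ∈ {y | 0 < D y}) ∧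
      (∀ t ∈ Icc (min t₁ (t₀ - δ)) (t₀ - δ), Φ t x ∈ {y : ℝ × ℝ × ℝ | 0 < y.2.2}) ∧
      (∀ t ∈ ({t₀ + δ} : Set ℝ), Φ t x ∈ {y : ℝ × ℝ × ℝ | y.2.2 < 0}) ∧ ‖x - x₀‖ < δη := by
    refine (eventually_forall_flow_mem hΦc (hV.inter hG) isCompact_Icc fun t ht => ?_).and
      ((eventually_forall_flow_mem hΦc hO isCompact_Icc hδO).and
      ((eventually_forall_flow_mem hΦc (isOpen_lt continuous_const hDc) isCompact_Icc ht₁D).and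
      ((eventually_forall_flow_mem hΦc hopen isCompact_Icc fun t ht => ?_).and
      ((eventually_forall_flow_mem hΦc hopen' isCompact_singleton fun t ht => ?_).and ?_))))
    · rw [hΦw t ht]; exact ⟨hwV t ht, hwG t ht⟩
    · have : 0 < min t₁ (t₀ - δ) := lt_min ht₁ (by linarith)
      have h2 : t ∈ Ioo 0 t₀ := ⟨by linarith [ht.1], by linarith [ht.2]⟩
      rw [mem_ofPred_eq, hΦw t (Ioo_subset_Icc_self h2)]
      exact hwpos t h2
    · rw [mem_singleton_iff] at ht
      have := hanti x₀ hδO hmid hrgt (by linarith)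
      simp only [hzy] at this
      rw [ht]; exact this
    · have : Metric.ball x₀ δη ∈ 𝓝 x₀ := Metric.ball_mem_nhds _ hδη
      filter_upwards [this] with x hx
      rwa [← dist_eq_norm]
  -- the return time
  have hT : ∀ x : ℝ × ℝ × ℝ, ∃ T : ℝ, (∀ t ∈ Icc (t₀ - δ) (t₀ + δ), Φ t x ∈ O) →
      0 < (Φ (t₀ - δ) x).2.2 → (Φ (t₀ + δ) x).2.2 < 0 →
      T ∈ Ioo (t₀ - δ) (t₀ + δ) ∧ (Φ T x).2.2 = 0 := by
    intro x
    by_cases h : 0 < (Φ (t₀ - δ) x).2.2 ∧ (Φ (t₀ + δ) x).2.2 < 0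
    · obtain ⟨T, hT, hT0⟩ := intermediate_value_Icc' (by linarith : t₀ - δ ≤ t₀ + δ)
        ((hΦc₀ x).snd.snd.continuousOn) (⟨h.2.le, h.1.le⟩ : (0 : ℝ) ∈ Icc _ _)
      refine ⟨T, fun _ _ _ => ⟨⟨lt_of_le_of_ne hT.1 ?_, lt_of_le_of_ne hT.2 ?_⟩, hT0⟩⟩
      · rintro rfl; exact h.1.ne' hT0
      · rintro rfl; exact h.2.ne hT0
    · exact ⟨0, fun _ h1 h2 => (h ⟨h1, h2⟩).elim⟩
  choose T hT using hT
  obtain ⟨N, hN⟩ : ∃ N, N = {x : ℝ × ℝ × ℝ | (∀ t ∈ Icc 0 t₀, Φ t x ∈ V ∩ G) ∧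
      (∀ t ∈ Icc (t₀ - δ) (t₀ + δ), Φ t x ∈ O) ∧ (∀ t ∈ Icc 0 t₁, Φ t x ∈ {y | 0 < D y}) ∧
      (∀ t ∈ Icc (min t₁ (t₀ - δ)) (t₀ - δ), Φ t x ∈ {y : ℝ × ℝ × ℝ | 0 < y.2.2}) ∧
      (∀ t ∈ ({t₀ + δ} : Set ℝ), Φ t x ∈ {y : ℝ × ℝ × ℝ | y.2.2 < 0}) ∧ ‖x - x₀‖ < δη} :=
    ⟨_, rfl⟩
  have hNn : N ∈ 𝓝 x₀ := hN ▸ hev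
  have hTN : ∀ x ∈ N, T x ∈ Ioo (t₀ - δ) (t₀ + δ) ∧ (Φ (T x) x).2.2 = 0 := by
    intro x hx
    rw [hN] at hx
    exact hT x hx.2.1 (hx.2.2.2.1 _ ⟨min_le_right _ _, le_rfl⟩) (hx.2.2.2.2.1 _ rfl)
  have hTx₀ : T x₀ = t₀ := by
    have h := hTN x₀ (mem_of_mem_nhds hNn)
    exact (hanti x₀ hδO).injOn (Ioo_subset_Icc_self h.1) hmid (by simp only [h.2, hzy])
  have hTc : ContinuousOn T N := by
    refine continuousOn_of_strictAntiOn (F := fun x t => (Φ t x).2.2) isOpen_Ioo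
      (fun τ _ => Continuous.continuousOn ?_) (fun x hx => ?_) hTN
    · exact (hΦc.comp (by fun_prop : Continuous fun x => (τ, x))).snd.snd
    · rw [hN] at hx
      exact (hanti x hx.2.1).mono Ioo_subset_Icc_self
  let ι : ℝ × ℝ → ℝ × ℝ × ℝ := fun x => (x.1, x.2, 0)
  have hι : Continuous ι := by fun_prop
  let ιL : ℝ × ℝ →L[ℝ] ℝ × ℝ × ℝ :=
    (ContinuousLinearMap.fst ℝ ℝ ℝ).prod ((ContinuousLinearMap.snd ℝ ℝ ℝ).prod 0)
  have hιL : ∀ x y, ι x - ι y = ιL (x - y) := fun x y => by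
    ext <;> simp [ι, ιL]
  refine ⟨ι ⁻¹' N, fun x => T (ι x), fun x => ((Φ (T (ι x)) (ι x)).1, (Φ (T (ι x)) (ι x)).2.1),
    η.comp ιL, hι.continuousAt.preimage_mem_nhds hNn, ?_, ?_, ?_⟩
  · change ((Φ (T x₀) x₀).1, (Φ (T x₀) x₀).2.1) = p
    rw [hTx₀, hΦy]
  · have h1 : ContinuousOn (fun x => Φ (T (ι x)) (ι x)) (ι ⁻¹' N) :=
      hΦc.comp_continuousOn (f := fun x => (T (ι x), ι x))
        ((hTc.comp hι.continuousOn fun x hx => hx).prodMk hι.continuousOn)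
    exact h1.fst.prodMk h1.snd.fst
  · intro x hxN hx0
    have hxN' : ι x ∈ N := hxN
    obtain ⟨hT1, hT2⟩ := hTN _ hxN'
    rw [hN] at hxN'
    obtain ⟨k1, k2, k3, k4, -, k6⟩ := hxN'
    have hVG : ∀ t ∈ Icc 0 (T (ι x)), Φ t (ι x) ∈ V ∩ G := by
      intro t ht
      rcases le_total t t₀ with h | h
      · exact k1 t ⟨ht.1, h⟩
      · have := k2 t ⟨by linarith, ht.2.trans hT1.2.le⟩
        exact ⟨hOV this, hOG this⟩
    have hx00 : (F (ι x)).2.2 = 0 := by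
      have := (hVG 0 ⟨le_rfl, by linarith [hT1.1]⟩).1
      rw [h0] at this
      rw [hFV _ this]; exact hx0
    have hend : Φ (T (ι x)) (ι x) =
        ((Φ (T (ι x)) (ι x)).1, (Φ (T (ι x)) (ι x)).2.1, 0) := by
      rw [← hT2]
    refine ⟨by linarith [hT1.1], ⟨fun t => Φ t (ι x), fun t ht => ?_, h0 _, fun t ht => ?_,
      hend, fun t ht => (hVG t ht).2⟩, ?_⟩
    · rw [← hFV _ (hVG t ht).1]; exact hΦ t _
    · rcases le_total t t₁ with h | h
      · refine pos_of_second_deriv_pos (z := fun t => (Φ t (ι x)).2.2) (fun t _ => hz t (ι x))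
          (h' := fun t => D (Φ t (ι x))) (fun t _ => ?_) k3 (by simp [h0, ι]) (by simp [h0, hx00])
          t ⟨ht.1, h⟩
        exact ((((hF.differentiable one_ne_zero) _).hasFDerivAt).comp_hasDerivAt t (hΦ t _)).snd.snd
      rcases le_total t (t₀ - δ) with h' | h'
      · exact k4 t ⟨(min_le_left _ _).trans h, h'⟩
      · have := hanti _ k2 (⟨h', by linarith [ht.2, hT1.2]⟩) (Ioo_subset_Icc_self hT1) ht.2
        simpa only [hT2] using this
    · intro s hs hle hse
      have e1 : ‖ι x - x₀‖ = ‖x - q‖ := by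
        change ‖ι x - ι q‖ = _
        rw [hιL]; simp [ιL, Prod.norm_def]
      have a1 := hη' (ι x) k6
      rw [hΦy, e1] at a1
      have e2 : ((X x₀).1 • (ContinuousLinearMap.fst ℝ ℝ ℝ).comp
          (ContinuousLinearMap.snd ℝ ℝ (ℝ × ℝ)) -
          (X x₀).2.1 • ContinuousLinearMap.fst ℝ ℝ (ℝ × ℝ)) (ι x - x₀) = s := by
        rw [← hse]; simp [ι, hx₀]
      rw [e2] at a1
      have a2 : 1 / (4 * C) * ‖x - q‖ ≤ s / 4 := by
        calc 1 / (4 * C) * ‖x - q‖ ≤ 1 / (4 * C) * (C * s) := by gcongr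
          _ = s / 4 := by field_simp
      -- the return time differs from `t₀` by `O(s)`
      have a3 : |(Φ t₀ (ι x)).2.2| ≤ C * s * e := by
        have h1 := hdist t₀ (ι x) x₀
        rw [hΦy, dist_eq_norm, dist_eq_norm, e1, abs_of_pos ht₀] at h1
        have h2 : |(Φ t₀ (ι x)).2.2| ≤ ‖Φ t₀ (ι x) - y₀‖ := by
          have := (norm_snd_le (Φ t₀ (ι x) - y₀).2).trans (norm_snd_le (Φ t₀ (ι x) - y₀))
          simpa [hy₀] using this
        exact h2.trans (h1.trans (by gcongr))
      have a4 : c * |T (ι x) - t₀| ≤ |(Φ t₀ (ι x)).2.2| := by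
        have hd : ∀ t, HasDerivAt (fun t => (Φ t (ι x)).2.2 + c * t)
            ((F (Φ t (ι x))).2.2 + c * 1) t := fun t =>
          (hz t (ι x)).add ((hasDerivAt_id t).const_mul c)
        have han : AntitoneOn (fun t => (Φ t (ι x)).2.2 + c * t) (Icc (t₀ - δ) (t₀ + δ)) :=
          antitoneOn_of_deriv_nonpos (convex_Icc _ _)
            (fun t _ => (hd t).continuousAt.continuousWithinAt)
            (fun t _ => (hd t).differentiableAt.differentiableWithinAt) fun t ht => by
              rw [(hd t).deriv]; linarith [hOc _ (k2 t (interior_subset ht))]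
        rcases le_total t₀ (T (ι x)) with h | h
        · have := han hmid (Ioo_subset_Icc_self hT1) h
          simp only [hT2] at this
          rw [abs_of_nonneg (sub_nonneg.2 h)]
          exact le_trans (by linarith) (le_abs_self _)
        · have := han (Ioo_subset_Icc_self hT1) hmid h
          simp only [hT2] at this
          rw [abs_of_nonpos (sub_nonpos.2 h)]
          exact le_trans (by linarith) (neg_le_abs _)
      have a5 : |η (Φ (T (ι x)) (ι x)) - η (Φ t₀ (ι x))| ≤ c / (4 * C * e) * |T (ι x) - t₀| := by
        have := (convex_Icc (t₀ - δ) (t₀ + δ)).norm_image_sub_le_of_norm_hasDerivWithin_le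
          (f := fun t => η (Φ t (ι x))) (f' := fun t => η (F (Φ t (ι x)))) (C := c / (4 * C * e))
          (fun t _ => (η.hasFDerivAt.comp_hasDerivAt t (hΦ t (ι x))).hasDerivWithinAt)
          (fun t ht => (hOη _ (k2 t ht)).le) hmid (Ioo_subset_Icc_self hT1)
        simpa using this
      have a6 : c / (4 * C * e) * |T (ι x) - t₀| ≤ s / 4 := by
        calc c / (4 * C * e) * |T (ι x) - t₀| = (c * |T (ι x) - t₀|) / (4 * C * e) := by ring
          _ ≤ (C * s * e) / (4 * C * e) :=
            div_le_div_of_nonneg_right (a4.trans a3) (by positivity)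
          _ = s / 4 := by field_simp
      have e3 : (η.comp ιL) (((Φ (T (ι x)) (ι x)).1, (Φ (T (ι x)) (ι x)).2.1) - p) =
          η (Φ (T (ι x)) (ι x)) - η y₀ := by
        rw [ContinuousLinearMap.comp_apply, ← hιL, map_sub]
        congr 2
        exact hend.symm
      rw [e3]
      rw [map_sub] at a1
      have b1 := (abs_le.1 a1).1
      have b2 := (abs_le.1 a5).1
      linarith

/-! ### The sliding flow in backward time -/

/-- Backward orbits of the planar field `Z` starting on `G = 0` near `q` follow the orbit `f` into
the sliding region `A ∩ {G < 0}` and never leave it again, nor do they reach the focus `p`. Beyond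
time `T` the logarithmic derivative of the complex coordinate `ζ (Φ t x - p)` is `η`-close to the
eigenvalue `lam`. -/
theorem exists_backward_sliding_flow {Z : ℝ × ℝ → ℝ × ℝ} {U A G' : Set (ℝ × ℝ)} {G : ℝ × ℝ → ℝ}
    {p q : ℝ × ℝ} (hU : IsOpen U) (hZ : ContDiffOn ℝ 1 Z U) (hA : IsOpen A)
    (hAU : ∀ x ∈ A, G x ≤ 0 → x ∈ U) (hG : ContDiff ℝ 1 G) (hpA : p ∈ A) (hpG : G p < 0)
    (hZp : Z p = 0) {L : ℝ × ℝ →L[ℝ] ℝ × ℝ} (hL : HasFDerivAt Z L p)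
    {lam : ℂ} {ζ : ℝ × ℝ →L[ℝ] ℂ} (hζ : Function.Injective ζ) (hζL : ∀ v, ζ (L v) = lam * ζ v)
    {η : ℝ} (hη : 0 < η) (hηlam : η < lam.re)
    (hqA : q ∈ A) (hqG : G q = 0) (hqd : 0 < fderiv ℝ G q (Z q))
    {f : ℝ → ℝ × ℝ} (hf0 : f 0 = q) (hf : ∀ t, t ≤ 0 → HasDerivAt f (Z (f t)) t)
    (hfs : ∀ t, t < 0 → f t ∈ A ∧ G (f t) < 0) (hlim : Tendsto f atBot (𝓝 p))
    (hG' : IsOpen G') (hpG' : p ∈ G') (hfG' : ∀ t, t ≤ 0 → f t ∈ G') :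
    ∃ (N : Set (ℝ × ℝ)) (T : ℝ) (Φ : ℝ → ℝ × ℝ → ℝ × ℝ), N ∈ 𝓝 q ∧ 0 < T ∧
      (Continuous fun z : ℝ × (ℝ × ℝ) => Φ z.1 z.2) ∧
      ∀ x ∈ N, G x = 0 → Φ 0 x = x ∧ (∀ t ≤ 0, HasDerivAt (fun t => Φ t x) (Z (Φ t x)) t) ∧
        (∀ t ≤ 0, Φ t x ∈ G') ∧ (∀ t < 0, Φ t x ∈ A ∧ G (Φ t x) < 0) ∧
        ∀ t ≤ -T, Φ t x ≠ p ∧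
          ‖ζ (Z (Φ t x)) - lam * ζ (Φ t x - p)‖ ≤ η * ‖ζ (Φ t x - p)‖ := by
  obtain ⟨κ, hκ0, hκ⟩ := (ζ : ℝ × ℝ →ₗ[ℝ] ℂ).exists_antilipschitzWith
    (LinearMap.ker_eq_bot.2 hζ)
  have hκ' : ∀ v, ‖v‖ ≤ κ * ‖ζ v‖ := fun v => by
    have := hκ.le_mul_dist v 0
    simpa using this
  have hκr : (0 : ℝ) < κ := hκ0
  have hGc := hG.continuous
  set n : ℝ × ℝ → ℝ := fun x => ‖ζ (x - p)‖ with hn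
  have hnc : Continuous n := by fun_prop
  -- the linear approximation at `p`
  obtain ⟨r, hr, hrest, hrA, hrG, hrG'⟩ : ∃ r > 0,
      (∀ x, n x ≤ r → ‖ζ (Z x) - lam * ζ (x - p)‖ ≤ η * n x) ∧ (∀ x, n x ≤ r → x ∈ A) ∧
      (∀ x, n x ≤ r → G x < 0) ∧ ∀ x, n x ≤ r → x ∈ G' := by
    have hc : 0 < η / (‖ζ‖ * κ + 1) := by positivity
    have hev : ∀ᶠ x in 𝓝 p, ‖Z x - Z p - L (x - p)‖ ≤ η / (‖ζ‖ * κ + 1) * ‖x - p‖ :=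
      hL.isLittleO.def hc
    have hev2 := hev.and ((hA.eventually_mem hpA).and
      ((hGc.continuousAt.eventually (gt_mem_nhds hpG)).and (hG'.eventually_mem hpG')))
    obtain ⟨R, hR, hb⟩ := Metric.eventually_nhds_iff_ball.1 hev2
    have hin : ∀ x, n x ≤ R / (2 * κ) → x ∈ Metric.ball p R := by
      intro x hx
      rw [Metric.mem_ball, dist_eq_norm]
      calc ‖x - p‖ ≤ κ * n x := hκ' _
        _ ≤ κ * (R / (2 * κ)) := by gcongr
        _ = R / 2 := by field_simp
        _ < R := by linarith
    refine ⟨R / (2 * κ), by positivity, fun x hx => ?_, fun x hx => (hb x (hin x hx)).2.1,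
      fun x hx => (hb x (hin x hx)).2.2.1, fun x hx => (hb x (hin x hx)).2.2.2⟩
    have h1 := (hb x (hin x hx)).1
    rw [hZp, sub_zero] at h1
    calc ‖ζ (Z x) - lam * ζ (x - p)‖ = ‖ζ (Z x - L (x - p))‖ := by rw [map_sub ζ (Z x), hζL]
      _ ≤ ‖ζ‖ * ‖Z x - L (x - p)‖ := ζ.le_opNorm _
      _ ≤ ‖ζ‖ * (η / (‖ζ‖ * κ + 1) * (κ * n x)) := by
        gcongr; exact h1.trans (by gcongr; exact hκ' _)
      _ = η * n x * ((‖ζ‖ * κ) / (‖ζ‖ * κ + 1)) := by field_simp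
      _ ≤ η * n x * 1 := by
        have : 0 ≤ n x := norm_nonneg _
        gcongr
        rw [div_le_one (by positivity)]; linarith
      _ = η * n x := mul_one _
  have hnp : n p = 0 := by simp [hn]
  obtain ⟨T, hT, hTr⟩ : ∃ T > 0, n (f (-T)) < r := by
    have h1 : Tendsto (fun t => n (f t)) atBot (𝓝 (n p)) := hnc.continuousAt.tendsto.comp hlim
    have h2 := h1.eventually (gt_mem_nhds (show n p < r by rwa [hnp]))
    obtain ⟨t, ht1, ht2⟩ := (h2.and (eventually_lt_atBot 0)).exists
    exact ⟨-t, by linarith, by simpa using ht1⟩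
  set Dk : Set (ℝ × ℝ) := {x | n x ≤ r} with hDk
  have hDkc : IsCompact Dk := by
    refine (isCompact_closedBall p (κ * r)).of_isClosed_subset
      (isClosed_le hnc continuous_const) fun x hx => ?_
    rw [Metric.mem_closedBall, dist_eq_norm]
    exact (hκ' _).trans (mul_le_mul_of_nonneg_left hx hκr.le)
  have hfc : ContinuousOn f (Icc (-T) 0) := fun t ht => (hf t ht.2).continuousAt.continuousWithinAt
  have hfA : ∀ t, t ≤ 0 → f t ∈ A ∧ G (f t) ≤ 0 := fun t ht => by
    rcases ht.lt_or_eq with h | h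
    · exact ⟨(hfs t h).1, (hfs t h).2.le⟩
    · rw [h, hf0]; exact ⟨hqA, hqG.le⟩
  obtain ⟨F, V, hF, hFs, hV, hCV, hFV⟩ := exists_cutoff hU
    ((isCompact_Icc.image_of_continuousOn hfc).union hDkc)
    (union_subset (by
      rintro _ ⟨t, ht, rfl⟩
      exact hAU _ (hfA t ht.2).1 (hfA t ht.2).2)
      fun x hx => hAU x (hrA x hx) (hrG x hx).le) hZ
  have hfV : ∀ t ∈ Icc (-T) 0, f t ∈ V := fun t ht => hCV (Or.inl (mem_image_of_mem _ ht))
  have hDV : ∀ x, n x ≤ r → x ∈ V := fun x hx => hCV (Or.inr hx)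
  obtain ⟨K, hK⟩ := hF.lipschitzWith_of_hasCompactSupport hFs one_ne_zero
  obtain ⟨M, hM⟩ := hFs.exists_bound_of_continuous hF.continuous
  obtain ⟨Φ, h0, hΦ, hdist, hΦc, hinj⟩ := exists_flow hK hM
  have hΦc₀ : ∀ x, Continuous fun t => Φ t x := fun x =>
    hΦc.comp (by fun_prop : Continuous fun t => (t, x))
  have hΦf : ∀ t ∈ Icc (-T) 0, Φ t q = f t := by
    refine ODE_solution_unique_of_mem_Icc_left (v := fun _ => F) (s := fun _ => univ) (K := K)
      (fun t _ => hK.lipschitzOnWith) (hΦc₀ q).continuousOn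
      (fun t _ => (hΦ t q).hasDerivWithinAt) (fun _ _ => mem_univ _) hfc
      (fun t ht => ?_) (fun _ _ => mem_univ _) (by simp [h0, hf0])
    rw [hFV _ (hfV t (Ioc_subset_Icc_self ht))]
    exact (hf t ht.2).hasDerivWithinAt
  have hpfix : ∀ t, Φ t p = p := by
    intro t
    have hFp : F p = 0 := by rw [hFV p (hDV p (by rw [hnp]; exact hr.le)), hZp]
    have := dist_solution_le hK (fun t => hΦ t p) (β := fun _ => p)
      (fun t => by rw [hFp]; exact hasDerivAt_const t p) t
    rw [h0, dist_self, zero_mul] at this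
    exact dist_le_zero.1 this
  have hqV : q ∈ V := hf0 ▸ hfV 0 ⟨by linarith, le_rfl⟩
  -- neighbourhood of the fold point
  set D : ℝ × ℝ → ℝ := fun y => fderiv ℝ G y (F y) with hD
  have hDc : Continuous D := (hG.continuous_fderiv one_ne_zero).clm_apply hF.continuous
  obtain ⟨t₁, ht₁, ht₁D⟩ : ∃ t₁ > 0, ∀ t ∈ Icc (-t₁) 0, 0 < D (Φ t q) := by
    have : ∀ᶠ t in 𝓝 (0 : ℝ), 0 < D (Φ t q) :=
      (hDc.comp (hΦc₀ q)).continuousAt.eventually (lt_mem_nhds (by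
        simpa [h0, hD, hFV q hqV] using hqd))
    obtain ⟨δ, hδ, h⟩ := Metric.eventually_nhds_iff_ball.1 this
    refine ⟨δ / 2, by positivity, fun t ht => h t ?_⟩
    rw [Metric.mem_ball, Real.dist_eq, abs_lt]
    constructor <;> linarith [ht.1, ht.2]
  have hmin : 0 < min t₁ T := lt_min ht₁ hT
  have hev : ∀ᶠ x in 𝓝 q, (∀ t ∈ Icc (-T) 0, Φ t x ∈ V ∩ G' ∩ A) ∧
      (∀ t ∈ Icc (-t₁) 0, Φ t x ∈ {y | 0 < D y}) ∧
      (∀ t ∈ Icc (-T) (-min t₁ T), Φ t x ∈ {y | G y < 0}) ∧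
      (∀ t ∈ ({-T} : Set ℝ), Φ t x ∈ {y | n y < r}) := by
    refine (eventually_forall_flow_mem hΦc ((hV.inter hG').inter hA) isCompact_Icc
      fun t ht => ?_).and
      ((eventually_forall_flow_mem hΦc (isOpen_lt continuous_const hDc) isCompact_Icc ht₁D).and
      ((eventually_forall_flow_mem hΦc (isOpen_lt hGc continuous_const) isCompact_Icc
        fun t ht => ?_).and
      (eventually_forall_flow_mem hΦc (isOpen_lt hnc continuous_const) isCompact_singleton
        fun t ht => ?_)))
    · rw [hΦf t ht]; exact ⟨⟨hfV t ht, hfG' t ht.2⟩, (hfA t ht.2).1⟩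
    · have ht' : t < 0 := by linarith [ht.2]
      rw [hΦf t ⟨ht.1, ht'.le⟩]; exact (hfs t ht').2
    · rw [mem_singleton_iff] at ht
      rw [ht, hΦf _ ⟨le_rfl, by linarith⟩]; exact hTr
  refine ⟨_, T, Φ, hev, hT, hΦc, ?_⟩
  rintro x ⟨k1, k2, k3, k4⟩ hx0
  -- in backward time the orbit cannot leave the disc `n ≤ r`
  have htrap : ∀ t ≤ -T, n (Φ t x) ≤ r := by
    intro t ht
    set g : ℝ → ℂ := fun s => ζ (Φ (-T - s) x - p) with hg
    have hgd : ∀ s, HasDerivAt g (-ζ (F (Φ (-T - s) x))) s := by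
      intro s
      have h1 : HasDerivAt (fun s : ℝ => -T - s) (-1) s := by
        simpa using (hasDerivAt_id s).const_sub (-T)
      have h2 := ((hΦ (-T - s) x).scomp s h1).sub_const p
      have h3 := ζ.hasFDerivAt.comp_hasDerivAt s h2
      rw [neg_one_smul, map_neg] at h3
      exact h3
    have hgc : Continuous g := continuous_iff_continuousAt.2 fun s => (hgd s).continuousAt
    have key := image_le_of_deriv_right_lt_deriv_boundary (a := 0) (b := -T - t)
      (f := fun s => ‖g s‖ ^ 2) (f' := fun s => 2 * inner ℝ (g s) (-ζ (F (Φ (-T - s) x))))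
      (B := fun _ => r ^ 2) (B' := fun _ => 0)
      (by fun_prop) (fun s _ => (hgd s).norm_sq.hasDerivWithinAt) ?_
      (fun s => hasDerivAt_const s _) ?_ (right_mem_Icc.2 (by linarith))
    · have h5 : ‖g (-T - t)‖ ^ 2 ≤ r ^ 2 := key
      have h6 : ‖g (-T - t)‖ ≤ r := le_of_sq_le_sq h5 hr.le
      simpa [hg, hn] using h6
    · have h7 : n (Φ (-T) x) < r := k4 _ rfl
      have h8 : ‖g 0‖ ≤ r := by simpa [hg, hn] using h7.le
      exact pow_le_pow_left₀ (norm_nonneg _) h8 2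
    · intro s _ hs
      have hs' : ‖g s‖ = r := (pow_left_inj₀ (norm_nonneg _) hr.le two_ne_zero).1 hs
      have hle : n (Φ (-T - s) x) ≤ r := hs'.le
      have h9 := hrest _ hle
      rw [← hFV _ (hDV _ hle)] at h9
      change ‖ζ (F (Φ (-T - s) x)) - lam * g s‖ ≤ η * ‖g s‖ at h9
      set W := ζ (F (Φ (-T - s) x))
      have e1 : inner ℝ (g s) (lam * g s) = lam.re * ‖g s‖ ^ 2 := by
        rw [Complex.inner, ← Complex.normSq_eq_norm_sq, Complex.normSq_apply]
        simp; ring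
      have e2 : inner ℝ (g s) (-W) = -(lam.re * ‖g s‖ ^ 2) - inner ℝ (g s) (W - lam * g s) := by
        rw [← e1, inner_sub_right, inner_neg_right]; ring
      have e3 := abs_le.1 (abs_real_inner_le_norm (g s) (W - lam * g s))
      have e4 : ‖g s‖ * ‖W - lam * g s‖ ≤ η * ‖g s‖ ^ 2 := by
        calc ‖g s‖ * ‖W - lam * g s‖ ≤ ‖g s‖ * (η * ‖g s‖) := by gcongr
          _ = _ := by ring
      have e5 : η * ‖g s‖ ^ 2 < lam.re * ‖g s‖ ^ 2 := by
        rw [hs']; gcongr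
      change 2 * inner ℝ (g s) (-W) < 0
      rw [e2]; linarith [e3.1]
  have hVall : ∀ t ≤ 0, Φ t x ∈ V ∩ G' ∩ A := by
    intro t ht
    rcases le_total t (-T) with h | h
    · have := htrap t h
      exact ⟨⟨hDV _ this, hrG' _ this⟩, hrA _ this⟩
    · exact k1 t ⟨h, ht⟩
  refine ⟨h0 x, fun t ht => ?_, fun t ht => (hVall t ht).1.2, fun t ht => ⟨(hVall t ht.le).2, ?_⟩,
    fun t ht => ⟨fun hp => ?_, hrest _ (htrap t ht)⟩⟩
  · rw [← hFV _ (hVall t ht).1.1]; exact hΦ t x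
  · rcases le_total t (-T) with h | h
    · exact hrG _ (htrap t h)
    rcases le_total t (-min t₁ T) with h' | h'
    · exact k3 t ⟨h, h'⟩
    have hd : ∀ t, HasDerivAt (fun t => G (Φ t x)) (D (Φ t x)) t := fun t =>
      ((hG.differentiable one_ne_zero) _).hasFDerivAt.comp_hasDerivAt t (hΦ t x)
    have := strictMonoOn_of_deriv_pos (convex_Icc (-t₁) 0)
      (f := fun t => G (Φ t x)) (fun s _ => (hd s).continuousAt.continuousWithinAt)
      (fun s hs => by rw [(hd s).deriv]; exact k2 s (interior_subset hs))
      ⟨by linarith [min_le_left t₁ T], ht.le⟩ ⟨by linarith, le_rfl⟩ ht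
    simpa only [h0, hx0] using this
  · have : x = p := hinj t x p (by rw [hp, hpfix])
    rw [this] at hx0
    exact hpG.ne hx0

/-! ### Linear normal form at the focus and the fold line -/

/-- A real linear map of the plane with the non-real eigenvalue `lam` is multiplication by `lam` in
a suitable complex coordinate, whose real part may be prescribed. -/
theorem exists_complex_coordinate {L : ℝ × ℝ →L[ℝ] ℝ × ℝ} {lam : ℂ} (him : lam.im ≠ 0)
    (hdet : (((L (1, 0)).1 : ℂ) - lam) * (((L (0, 1)).2 : ℂ) - lam)
      - ((L (0, 1)).1 : ℂ) * ((L (1, 0)).2 : ℂ) = 0)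
    {ℓ : ℝ × ℝ →L[ℝ] ℝ} (hℓ : ℓ ≠ 0) :
    ∃ ζ : ℝ × ℝ →L[ℝ] ℂ, Function.Injective ζ ∧ (∀ v, ζ (L v) = lam * ζ v) ∧
      ∀ v, (ζ v).re = ℓ v := by
  have hLv : ∀ v, L v = (v.1 * (L (1, 0)).1 + v.2 * (L (0, 1)).1,
      v.1 * (L (1, 0)).2 + v.2 * (L (0, 1)).2) := by
    intro v
    have : v = v.1 • ((1, 0) : ℝ × ℝ) + v.2 • ((0, 1) : ℝ × ℝ) := by ext <;> simp
    conv_lhs => rw [this, map_add, map_smul, map_smul]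
    ext <;> simp
  have hℓv : ∀ v, ℓ v = v.1 * ℓ (1, 0) + v.2 * ℓ (0, 1) := by
    intro v
    have : v = v.1 • ((1, 0) : ℝ × ℝ) + v.2 • ((0, 1) : ℝ × ℝ) := by ext <;> simp
    conv_lhs => rw [this, map_add, map_smul, map_smul]
    simp
  generalize (L (1, 0)).1 = a at *
  generalize (L (1, 0)).2 = c at *
  generalize (L (0, 1)).1 = b at *
  generalize (L (0, 1)).2 = d at *
  have hc : c ≠ 0 := by
    rintro rfl
    simp only [Complex.ofReal_zero, mul_zero, sub_zero, mul_eq_zero] at hdet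
    rcases hdet with h | h
    · exact him (by simpa using congrArg Complex.im h)
    · exact him (by simpa using congrArg Complex.im h)
  set u := ℓ (1, 0) / c with hu
  set κ : ℂ := ⟨u, (u * (lam.re - a) - ℓ (0, 1)) / lam.im⟩ with hκ
  have hκ0 : κ ≠ 0 := by
    intro h
    have h1 : u = 0 := congrArg Complex.re h
    have h2 : (u * (lam.re - a) - ℓ (0, 1)) / lam.im = 0 := congrArg Complex.im h
    have h3 : ℓ (1, 0) = 0 := by simpa [hu, hc] using h1
    have h4 : ℓ (0, 1) = 0 := by simpa [h1, him] using h2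
    exact hℓ (by ext <;> simp [h3, h4])
  let ζl : ℝ × ℝ →ₗ[ℝ] ℂ :=
    { toFun := fun v => κ * (c * v.1 + (lam - a) * v.2)
      map_add' := fun v w => by simp; ring
      map_smul' := fun r v => by simp; ring }
  refine ⟨LinearMap.toContinuousLinearMap ζl, ?_, fun v => ?_, fun v => ?_⟩
  · rw [injective_iff_map_eq_zero]
    intro v hv
    have hv' : κ * (c * v.1 + (lam - a) * v.2) = 0 := hv
    have h1 := (mul_eq_zero.1 hv').resolve_left hκ0
    have h2 : v.2 = 0 := by simpa [him] using congrArg Complex.im h1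
    have h3 : v.1 = 0 := by simpa [h2, hc] using h1
    exact Prod.ext h3 h2
  · change κ * (c * (L v).1 + (lam - a) * (L v).2) = lam * (κ * (c * v.1 + (lam - a) * v.2))
    rw [hLv v]
    push_cast
    linear_combination (-κ * v.2) * hdet
  · change (κ * (c * v.1 + (lam - a) * v.2)).re = ℓ v
    rw [hℓv v]
    have h1 : ℓ (1, 0) = u * c := by rw [hu]; field_simp
    have h2 : ℓ (0, 1) = u * (lam.re - a) - κ.im * lam.im := by
      simp only [hκ]; field_simp; ring
    have h3 : κ.re = u := rfl
    rw [h1, h2]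
    simp [h3]; ring

/-- The zero set of `G` near `q`, parametrized by the linear coordinate `k.1 * v.2 - k.2 * v.1`
transversal to the vector `k`. -/
theorem exists_fold_curve {G : ℝ × ℝ → ℝ} (hG : ContDiff ℝ 1 G) {q k : ℝ × ℝ} (hq : G q = 0)
    (hk : 0 < fderiv ℝ G q k) :
    ∃ (ε C : ℝ) (a : ℝ → ℝ × ℝ), 0 < ε ∧ 0 < C ∧ ContinuousOn a (Icc 0 ε) ∧
      ∀ s ∈ Icc 0 ε, G (a s) = 0 ∧ k.1 * (a s - q).2 - k.2 * (a s - q).1 = s ∧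
        ‖a s - q‖ ≤ C * s := by
  let m : ℝ × ℝ →L[ℝ] ℝ :=
    k.1 • ContinuousLinearMap.snd ℝ ℝ ℝ - k.2 • ContinuousLinearMap.fst ℝ ℝ ℝ
  have hm : ∀ v, m v = k.1 * v.2 - k.2 * v.1 := fun v => by simp [m]
  let H' : ℝ × ℝ →L[ℝ] ℝ × ℝ := (fderiv ℝ G q).prod m
  have hH : HasStrictFDerivAt (fun x => (G x, m (x - q))) H' q :=
    (hG.contDiffAt.hasStrictFDerivAt one_ne_zero).prodMk
      (m.hasStrictFDerivAt.comp q ((hasStrictFDerivAt_id q).sub_const q))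
  have hk0 : 0 < k.1 ^ 2 + k.2 ^ 2 := by
    by_contra h
    have h1 : k.1 = 0 := by nlinarith [sq_nonneg k.1, sq_nonneg k.2]
    have h2 : k.2 = 0 := by nlinarith [sq_nonneg k.1, sq_nonneg k.2]
    have : k = 0 := Prod.ext h1 h2
    rw [this, map_zero] at hk
    exact lt_irrefl _ hk
  have hinj : Function.Injective (H' : ℝ × ℝ →ₗ[ℝ] ℝ × ℝ) := by
    rw [injective_iff_map_eq_zero]
    intro v hv
    have h1 : fderiv ℝ G q v = 0 := congrArg Prod.fst hv
    have h2 : m v = 0 := congrArg Prod.snd hv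
    rw [hm] at h2
    have h3 : (k.1 ^ 2 + k.2 ^ 2) • v = (k.1 * v.1 + k.2 * v.2) • k := by
      ext
      · simp only [Prod.smul_fst, smul_eq_mul]; linear_combination (-k.2) * h2
      · simp only [Prod.smul_snd, smul_eq_mul]; linear_combination k.1 * h2
    have h4 := congrArg (fderiv ℝ G q) h3
    rw [map_smul, map_smul, h1, smul_zero] at h4
    have h5 : k.1 * v.1 + k.2 * v.2 = 0 := by
      rcases smul_eq_zero.1 h4.symm with h | h
      · exact h
      · exact absurd h hk.ne'
    rw [h5, zero_smul] at h3
    exact (smul_eq_zero.1 h3).resolve_left hk0.ne'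
  let e : (ℝ × ℝ) ≃L[ℝ] ℝ × ℝ :=
    (LinearEquiv.ofInjectiveEndo (H' : ℝ × ℝ →ₗ[ℝ] ℝ × ℝ) hinj).toContinuousLinearEquiv
  have hH2 : HasStrictFDerivAt (fun x => (G x, m (x - q))) (e : ℝ × ℝ →L[ℝ] ℝ × ℝ) q := by
    convert hH using 1
    ext <;> rfl
  have hqi : (G q, m (q - q)) = (0, 0) := by simp [hq]
  have hr := hH2.eventually_right_inverse
  have hl := hH2.to_localInverse
  have ha := hH2.localInverse_apply_image
  rw [hqi] at hr hl ha
  obtain ⟨K, S, hS, hK⟩ := hl.exists_lipschitzOnWith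
  obtain ⟨R, hR, hball⟩ := Metric.eventually_nhds_iff_ball.1 (hr.and hS)
  set g := hH2.localInverse _ _ _
  have hin : ∀ s ∈ Icc 0 (R / 2), ((0, s) : ℝ × ℝ) ∈ Metric.ball ((0, 0) : ℝ × ℝ) R := by
    intro s hs
    rw [Metric.mem_ball, dist_eq_norm]
    simp only [Prod.mk_sub_mk, sub_zero, Prod.norm_mk, norm_zero, Real.norm_eq_abs,
      abs_of_nonneg hs.1]
    exact max_lt hR (by linarith [hs.2])
  refine ⟨R / 2, K + 1, fun s => g (0, s), by positivity, by positivity, ?_, fun s hs => ?_⟩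
  · exact hK.continuousOn.comp (by fun_prop) fun s hs => (hball _ (hin s hs)).2
  · have h1 := (hball _ (hin s hs)).1
    refine ⟨congrArg Prod.fst h1, ?_, ?_⟩
    · rw [← hm]; exact congrArg Prod.snd h1
    · have h2 := hK.dist_le_mul _ (hball _ (hin s hs)).2 _
        (hball _ (Metric.mem_ball_self hR)).2
      rw [ha, dist_eq_norm, dist_eq_norm] at h2
      simp only [Prod.mk_sub_mk, sub_zero, Prod.norm_mk, norm_zero, Real.norm_eq_abs,
        abs_of_nonneg hs.1, max_eq_right hs.1] at h2
      linarith [hs.1]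

/-! ### Sliding periodic orbits -/

/- STATEMENT 8: If a Filippov system Z = (X,Y) with C¹ components has a sliding
Shilnikov orbit Γ₀ — a loop through a hyperbolic pseudo saddle–focus p ∈ Σˢ and a
visible fold–regular point q, consisting of a backward sliding orbit from q to p
and an orbit of X from q to p through {z > 0} — then every open neighbourhood
G of Γ₀ contains infinitely many pairwise distinct sliding periodic orbits of Z. -/
theorem sliding_Shilnikov_implies_infinitely_many_sliding_periodic_orbits
    (X Y : ℝ × ℝ × ℝ → ℝ × ℝ × ℝ)
    (hXc : ContDiff ℝ 1 X) (hYc : ContDiff ℝ 1 Y)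
    (p q : ℝ × ℝ)
    (hp : p ∈ slidingRegion X Y)
    -- (i) p is a hyperbolic pseudo saddle–focus of the sliding vector field
    (hpe : slidingVF X Y p = (0, 0))
    (L : ℝ × ℝ →L[ℝ] ℝ × ℝ)
    (hL : HasFDerivAt (slidingVF X Y) L p)
    (lam : ℂ) (hlam_im : lam.im ≠ 0) (hlam_re : 0 < lam.re)
    (heig :
      (!![((L (1, 0)).1 : ℂ), ((L (0, 1)).1 : ℂ);
          ((L (1, 0)).2 : ℂ), ((L (0, 1)).2 : ℂ)]
        - lam • (1 : Matrix (Fin 2) (Fin 2) ℂ)).det = 0 ∧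
      (!![((L (1, 0)).1 : ℂ), ((L (0, 1)).1 : ℂ);
          ((L (1, 0)).2 : ℂ), ((L (0, 1)).2 : ℂ)]
        - (starRingEnd ℂ) lam • (1 : Matrix (Fin 2) (Fin 2) ℂ)).det = 0)
    -- (ii) q is a visible fold–regular point of X
    (hfold : (X (q.1, q.2, 0)).2.2 = 0)
    (hvis : 0 < fderiv ℝ (fun r : ℝ × ℝ × ℝ => (X r).2.2) (q.1, q.2, 0) (X (q.1, q.2, 0)))
    (hYq : 0 < (Y (q.1, q.2, 0)).2.2)
    -- (iii) backward sliding orbit from q to p inside Σˢ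
    (f : ℝ → ℝ × ℝ)
    (hf0 : f 0 = q)
    (hfde : ∀ t : ℝ, t ≤ 0 → HasDerivAt f (slidingVF X Y (f t)) t)
    (hfs : ∀ t : ℝ, t < 0 → f t ∈ slidingRegion X Y)
    (hflim : Tendsto f atBot (nhds p))
    -- (iv) orbit of X from q to p through {z > 0}
    (t₀ : ℝ) (ht₀ : 0 < t₀)
    (w : ℝ → ℝ × ℝ × ℝ)
    (hw : ∀ t ∈ Set.Icc (0 : ℝ) t₀, HasDerivAt w (X (w t)) t)
    (hw0 : w 0 = (q.1, q.2, 0))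
    (hwpos : ∀ t ∈ Set.Ioo (0 : ℝ) t₀, 0 < (w t).2.2)
    (hwt : w t₀ = (p.1, p.2, 0))
    -- the sliding Shilnikov orbit
    (Γ₀ : Set (ℝ × ℝ × ℝ))
    (hΓ₀ : Γ₀ = w '' Set.Icc (0 : ℝ) t₀ ∪
      {r : ℝ × ℝ × ℝ | ∃ s ∈ f '' Set.Iic (0 : ℝ) ∪ {p}, r = (s.1, s.2, 0)}) :
    ∀ G : Set (ℝ × ℝ × ℝ), IsOpen G → Γ₀ ⊆ G →
      ∃ S : Set (Set (ℝ × ℝ × ℝ)), S.Infinite ∧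
        ∀ γ ∈ S, IsSlidingPeriodicOrbit X Y γ ∧ γ ⊆ G := by
  intro G hG hΓG
  subst hΓ₀
  set x₀ : ℝ × ℝ × ℝ := (q.1, q.2, 0) with hx₀
  set Z := slidingVF X Y with hZdef
  let ι : ℝ × ℝ → ℝ × ℝ × ℝ := fun x => (x.1, x.2, 0)
  have hι : ContDiff ℝ 1 ι := contDiff_fst.prodMk (contDiff_snd.prodMk contDiff_const)
  have hXι : ContDiff ℝ 1 fun x => X (ι x) := hXc.comp hι
  have hYι : ContDiff ℝ 1 fun x => Y (ι x) := hYc.comp hι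
  have hG₀ : ContDiff ℝ 1 fun x => (X (ι x)).2.2 := hXι.snd.snd
  have hH₀ : ContDiff ℝ 1 fun x => (Y (ι x)).2.2 := hYι.snd.snd
  set k : ℝ × ℝ := ((X x₀).1, (X x₀).2.1) with hk
  have hGk : 0 < fderiv ℝ (fun x => (X (ι x)).2.2) q k := by
    have h1 : HasFDerivAt (fun r : ℝ × ℝ × ℝ => (X r).2.2)
        (fderiv ℝ (fun r : ℝ × ℝ × ℝ => (X r).2.2) x₀) (ι q) :=
      ((hXc.snd.snd.differentiable one_ne_zero) x₀).hasFDerivAt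
    have h2 : HasFDerivAt ι ((ContinuousLinearMap.fst ℝ ℝ ℝ).prod
        ((ContinuousLinearMap.snd ℝ ℝ ℝ).prod 0)) q :=
      hasFDerivAt_fst.prodMk (hasFDerivAt_snd.prodMk (hasFDerivAt_const 0 q))
    have h3 := (h1.comp q h2).fderiv
    change 0 < fderiv ℝ ((fun r : ℝ × ℝ × ℝ => (X r).2.2) ∘ ι) q k
    rw [h3]
    have h4 : X x₀ = ((X x₀).1, (X x₀).2.1, 0) := by rw [← hfold]
    rw [h4] at hvis
    exact hvis
  have hZq : Z q = k := by
    simp only [hZdef, slidingVF, hk, ← hx₀, hfold, zero_mul, sub_zero]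
    rw [mul_div_cancel_left₀ _ hYq.ne', mul_div_cancel_left₀ _ hYq.ne']
  have hUo : IsOpen {x : ℝ × ℝ | (Y (ι x)).2.2 - (X (ι x)).2.2 ≠ 0} :=
    isOpen_ne_fun (hH₀.continuous.sub hG₀.continuous) continuous_const
  have hZU : ContDiffOn ℝ 1 Z {x : ℝ × ℝ | (Y (ι x)).2.2 - (X (ι x)).2.2 ≠ 0} := by
    refine ContDiffOn.prodMk ?_ ?_
    · exact ContDiffOn.div ((hH₀.mul hXι.fst).sub (hG₀.mul hYι.fst)).contDiffOn
        (hH₀.sub hG₀).contDiffOn fun x hx => hx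
    · exact ContDiffOn.div ((hH₀.mul hXι.snd.fst).sub (hG₀.mul hYι.snd.fst)).contDiffOn
        (hH₀.sub hG₀).contDiffOn fun x hx => hx
  have hAU : ∀ x ∈ {x : ℝ × ℝ | 0 < (Y (ι x)).2.2}, (X (ι x)).2.2 ≤ 0 →
      x ∈ {x : ℝ × ℝ | (Y (ι x)).2.2 - (X (ι x)).2.2 ≠ 0} := by
    intro x hx hx'
    have hx : 0 < (Y (ι x)).2.2 := hx
    change (Y (ι x)).2.2 - (X (ι x)).2.2 ≠ 0
    linarith
  -- the eigenvalue in the upper half plane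
  obtain ⟨μ, hμim, hμre, hdet⟩ : ∃ μ : ℂ, 0 < μ.im ∧ 0 < μ.re ∧
      (((L (1, 0)).1 : ℂ) - μ) * (((L (0, 1)).2 : ℂ) - μ)
        - ((L (0, 1)).1 : ℂ) * ((L (1, 0)).2 : ℂ) = 0 := by
    obtain ⟨h1, h2⟩ := heig
    rw [Matrix.det_fin_two] at h1 h2
    rcases hlam_im.lt_or_gt with h | h
    · exact ⟨(starRingEnd ℂ) lam, by simpa using h, by simpa using hlam_re, by simpa using h2⟩
    · exact ⟨lam, h, hlam_re, by simpa using h1⟩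
  obtain ⟨ε₁, C, a, hε₁, hC, hac, ha⟩ := exists_fold_curve hG₀ hfold hGk
  obtain ⟨N₁, T, b, ℓ, hN₁, hbq, hbc, hb⟩ := exists_transition_map hXc hp.1 hvis ht₀ hw hw0 hwpos
    hwt hG (fun t ht => hΓG (Or.inl (mem_image_of_mem _ ht))) hC
  have hsmall : ∀ N ∈ 𝓝 q, ∃ ε, 0 < ε ∧ ε ≤ ε₁ ∧ ∀ s ∈ Icc 0 ε, a s ∈ N := by
    intro N hN
    obtain ⟨R, hR, hRN⟩ := Metric.mem_nhds_iff.1 hN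
    refine ⟨min ε₁ (R / (2 * C)), by positivity, min_le_left _ _, fun s hs => hRN ?_⟩
    rw [Metric.mem_ball, dist_eq_norm]
    calc ‖a s - q‖ ≤ C * s := (ha s ⟨hs.1, hs.2.trans (min_le_left _ _)⟩).2.2
      _ ≤ C * (R / (2 * C)) := by
        have := hs.2.trans (min_le_right _ _)
        gcongr
      _ = R / 2 := by field_simp
      _ < R := by linarith
  have hℓpos : ∀ s, 0 < s → s ≤ ε₁ → a s ∈ N₁ → 0 < ℓ (b (a s) - p) := by
    intro s hs hsε hsN
    obtain ⟨h1, h2, h3⟩ := ha s ⟨hs.le, hsε⟩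
    exact (hb (a s) hsN h1).2.2 s hs h3 h2
  have hℓ : ℓ ≠ 0 := by
    rintro rfl
    obtain ⟨ε, hε, hεε, h⟩ := hsmall N₁ hN₁
    exact lt_irrefl _ (hℓpos ε hε hεε (h ε (right_mem_Icc.2 hε.le)))
  obtain ⟨ζ, hζi, hζL, hζre⟩ := exists_complex_coordinate hμim.ne' hdet hℓ
  set η := min μ.re μ.im / 2 with hη
  have hη0 : 0 < η := half_pos (lt_min hμre hμim)
  have hηre : 2 * η ≤ μ.re := by rw [hη]; linarith [min_le_left μ.re μ.im]
  have hηim : 2 * η ≤ μ.im := by rw [hη]; linarith [min_le_right μ.re μ.im]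
  obtain ⟨N₂, T₀, Φ, hN₂, hT₀, hΦc, hΦ⟩ := exists_backward_sliding_flow
    (A := {x : ℝ × ℝ | 0 < (Y (ι x)).2.2}) (G' := ι ⁻¹' G) hUo hZU
    (isOpen_lt continuous_const hH₀.continuous) hAU hG₀ hp.2 hp.1 hpe hL hζi hζL hη0
    (by linarith) hYq hfold (by rw [hZq]; exact hGk) hf0 hfde
    (fun t ht => ⟨(hfs t ht).2, (hfs t ht).1⟩) hflim (hG.preimage hι.continuous)
    (hΓG (Or.inr ⟨p, Or.inr rfl, rfl⟩))
    (fun t ht => hΓG (Or.inr ⟨f t, Or.inl (mem_image_of_mem _ ht), rfl⟩))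
  obtain ⟨ε, hε, hεε, hεN⟩ := hsmall (N₁ ∩ N₂) (inter_mem hN₁ hN₂)
  -- the fold curve, extended to all parameters by constants
  have hcl : ∀ s : ℝ, max 0 (min s ε) ∈ Icc 0 ε := fun s =>
    ⟨le_max_left _ _, max_le hε.le (min_le_right _ _)⟩
  have hcl' : ∀ s ∈ Icc 0 ε, max 0 (min s ε) = s := fun s hs => by
    rw [min_eq_left hs.2, max_eq_right hs.1]
  set a' : ℝ → ℝ × ℝ := fun s => a (max 0 (min s ε)) with ha'
  have ha'c : Continuous a' := (hac.mono (Icc_subset_Icc_right hεε)).comp_continuous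
    (by fun_prop) hcl
  have ha'N : ∀ s, a' s ∈ N₁ ∩ N₂ := fun s => hεN _ (hcl s)
  have ha'0 : ∀ s, (X (ι (a' s))).2.2 = 0 := fun s =>
    (ha _ (Icc_subset_Icc_right hεε (hcl s))).1
  have ha'a : ∀ s ∈ Icc 0 ε, a' s = a s := fun s hs => by simp only [ha', hcl' s hs]
  have ha'q : a' 0 = q := by
    rw [ha'a 0 (left_mem_Icc.2 hε.le)]
    have := (ha 0 (left_mem_Icc.2 hε₁.le)).2.2
    rw [mul_zero] at this
    exact sub_eq_zero.1 (norm_le_zero_iff.1 this)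
  let x : ℝ × ℝ → ℝ × ℝ := fun z => Φ (-T₀ - max z.2 0) (a' z.1)
  have hxc : Continuous x := by
    refine hΦc.comp (f := fun z : ℝ × ℝ => (-T₀ - max z.2 0, a' z.1)) ?_
    fun_prop
  have hxt : ∀ z : ℝ × ℝ, -T₀ - max z.2 0 ≤ -T₀ := fun z => by linarith [le_max_right z.2 0]
  have hx : ∀ z, x z ≠ p ∧ ‖ζ (Z (x z)) - μ * ζ (x z - p)‖ ≤ η * ‖ζ (x z - p)‖ := fun z =>
    (hΦ _ (ha'N z.1).2 (ha'0 z.1)).2.2.2.2 _ (hxt z)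
  have hxne : ∀ z, ζ (x z - p) ≠ 0 := fun z h =>
    (hx z).1 (sub_eq_zero.1 (hζi (by rw [h, map_zero])))
  have hxZ : Continuous fun z => Z (x z) := by
    refine hZU.continuousOn.comp_continuous hxc fun z => ?_
    have := (hΦ _ (ha'N z.1).2 (ha'0 z.1)).2.2.2.1 _ ((hxt z).trans_lt (by linarith))
    exact hAU _ this.1 this.2.le
  set ω : ℝ × ℝ → ℂ := fun z => ζ (Z (x z)) / ζ (x z - p) with hω
  have hωc : Continuous ω := (ζ.continuous.comp hxZ).div
    (ζ.continuous.comp (hxc.sub continuous_const)) hxne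
  have hωμ : ∀ z, ‖ω z - μ‖ ≤ η := by
    intro z
    have h1 : ω z - μ = (ζ (Z (x z)) - μ * ζ (x z - p)) / ζ (x z - p) := by
      rw [sub_div, mul_div_cancel_right₀ _ (hxne z)]
    rw [h1, norm_div, div_le_iff₀ (norm_pos_iff.2 (hxne z))]
    exact (hx z).2
  have hωre : ∀ z, |(ω z).re - μ.re| ≤ η := fun z => by
    simpa using (Complex.abs_re_le_norm _).trans (hωμ z)
  have hωim : ∀ z, |(ω z).im - μ.im| ≤ η := fun z => by
    simpa using (Complex.abs_im_le_norm _).trans (hωμ z)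
  set g : ℝ → ℝ → ℂ := fun s τ => ζ (Φ (-T₀ - τ) (a' s) - p) with hg
  set β : ℝ → ℂ := fun s => ζ (b (a' s) - p) with hβ
  have hβc : Continuous β := by
    have h1 : Continuous fun s => b (a' s) := hbc.comp_continuous ha'c fun s => (ha'N s).1
    exact ζ.continuous.comp (h1.sub continuous_const)
  have hinf := infinite_spiral_matches hωc hη0 (M := μ.re + η) (g := g) (β := β)
    (fun z => by linarith [(abs_le.1 (hωre z)).1])
    (fun z => by linarith [(abs_le.1 (hωre z)).2])
    (fun z => by linarith [(abs_le.1 (hωim z)).1])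
    (by
      intro s τ hτ
      have h1 : HasDerivAt (fun s : ℝ => -T₀ - s) (-1) τ := by
        simpa using (hasDerivAt_id τ).const_sub (-T₀)
      have h2 := (((hΦ _ (ha'N s).2 (ha'0 s)).2.1 (-T₀ - τ) (by linarith)).scomp τ h1).sub_const p
      have h3 := ζ.hasFDerivAt.comp_hasDerivAt τ h2
      rw [neg_one_smul, map_neg] at h3
      have h4 : x (s, τ) = Φ (-T₀ - τ) (a' s) := by simp only [x, max_eq_left hτ]
      have h5 : -ω (s, τ) * g s τ = -ζ (Z (Φ (-T₀ - τ) (a' s))) := by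
        have h6 := hxne (s, τ)
        simp only [hω, hg]
        rw [h4] at h6 ⊢
        rw [neg_mul, div_mul_cancel₀ _ h6]
      rw [h5]
      exact h3)
    (by
      refine ζ.continuous.comp (Continuous.sub ?_ continuous_const)
      exact hΦc.comp (f := fun s => (-T₀ - 0, a' s)) (by fun_prop))
    (by
      intro s
      have := hxne (s, 0)
      simpa only [x, max_self] using this)
    hε hβc.continuousOn
    (by
      intro s hs
      rw [hβ]
      simp only [hζre, ha'a s (Ioc_subset_Icc_self hs)]
      exact hℓpos s hs.1 (hs.2.trans hεε) (hεN s (Ioc_subset_Icc_self hs)).1)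
    (by
      have h1 : β 0 = 0 := by simp only [hβ, ha'q, hbq, sub_self, map_zero]
      rw [← h1]
      exact hβc.continuousAt.tendsto.mono_left nhdsWithin_le_nhds)
  -- each matching parameter yields a periodic orbit that meets the fold line only at `a s`
  have horb : ∀ s, ∃ γ : Set (ℝ × ℝ × ℝ), (s ∈ Ioc 0 ε ∧ ∃ τ, 0 < τ ∧ g s τ = β s) →
      IsSlidingPeriodicOrbit X Y γ ∧ γ ⊆ G ∧
        ∀ y, (y ∈ γ ∧ y.2.2 = 0 ∧ (X y).2.2 = 0) ↔ y = ι (a s) := by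
    intro s
    by_cases hs : s ∈ Ioc 0 ε ∧ ∃ τ, 0 < τ ∧ g s τ = β s
    swap
    · exact ⟨∅, fun h => (hs h).elim⟩
    obtain ⟨hsε, τ, hτ, hgβ⟩ := hs
    have hsa := ha'a s (Ioc_subset_Icc_self hsε)
    have hN := ha'N s
    have h0 := ha'0 s
    rw [hsa] at hN h0
    have hbΦ : Φ (-T₀ - τ) (a s) = b (a s) := by
      have := hζi hgβ
      rw [hsa] at this
      exact sub_left_injective this
    obtain ⟨hT, ⟨u, hu, hu0, hupos, huT, huG⟩, -⟩ := hb _ hN.1 h0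
    obtain ⟨hΦ0, hΦd, hΦG, hΦs, -⟩ := hΦ _ hN.2 h0
    have hΦs' : ∀ t < 0, Φ t (a s) ∈ slidingRegion X Y := fun t ht =>
      ⟨(hΦs t ht).2, (hΦs t ht).1⟩
    have hbs : b (a s) ∈ slidingRegion X Y := hbΦ ▸ hΦs' _ (by linarith)
    set v : ℝ → ℝ × ℝ := fun t => Φ (t - (T₀ + τ)) (a s) with hv
    have hvT : v (T₀ + τ) = a s := by simp only [hv, sub_self, hΦ0]
    have hvs : ∀ t ∈ Ico 0 (T₀ + τ), v t ∈ slidingRegion X Y := fun t ht =>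
      hΦs' _ (by linarith [ht.2])
    refine ⟨u '' Icc (0 : ℝ) (T (a s)) ∪
      {p : ℝ × ℝ × ℝ | ∃ w ∈ v '' Icc (0 : ℝ) (T₀ + τ), p = (w.1, w.2, 0)}, fun _ => ⟨?_, ?_, ?_⟩⟩
    · refine ⟨a s, b (a s), T (a s), T₀ + τ, hT, by linarith, u, hu, hu0, hupos, huT, hbs,
        v, fun t ht => ?_, ?_, hvs, hvT, rfl⟩
      · exact (hΦd (t - (T₀ + τ)) (by linarith [ht.2])).comp_sub_const t (T₀ + τ)
      · rw [← hbΦ]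
        exact congrArg (fun t => Φ t (a s)) (by ring)
    · rintro y (⟨t, ht, rfl⟩ | ⟨_, ⟨t, ht, rfl⟩, rfl⟩)
      · exact huG t ht
      · exact hΦG _ (by linarith [ht.2])
    · intro y
      constructor
      · rintro ⟨⟨t, ht, rfl⟩ | ⟨_, ⟨t, ht, rfl⟩, rfl⟩, hy0, hyX⟩
        · rcases ht.1.eq_or_lt with h | h
          · rw [← h]; exact hu0
          rcases ht.2.eq_or_lt with h' | h'
          · rw [h', huT] at hyX
            exact (hbs.1.ne hyX).elim
          · exact ((hupos t ⟨h, h'⟩).ne' hy0).elim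
        · rcases ht.2.eq_or_lt with h' | h'
          · rw [h', hvT]
          · exact ((hvs t ⟨ht.1, h'⟩).1.ne hyX).elim
      · rintro rfl
        exact ⟨Or.inl ⟨0, left_mem_Icc.2 hT.le, hu0⟩, rfl, h0⟩
  choose γ hγ using horb
  refine ⟨γ '' {s | s ∈ Ioc 0 ε ∧ ∃ τ, 0 < τ ∧ g s τ = β s}, hinf.image ?_, ?_⟩
  · intro s hs s' hs' hss
    have h1 : ι (a s) = ι (a s') :=
      ((hγ s' hs').2.2 _).1 (hss ▸ ((hγ s hs).2.2 _).2 rfl)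
    have h2 : a s = a s' :=
      Prod.ext (congrArg (fun y : ℝ × ℝ × ℝ => y.1) h1) (congrArg (fun y : ℝ × ℝ × ℝ => y.2.1) h1)
    rw [← (ha s ⟨hs.1.1.le, hs.1.2.trans hεε⟩).2.1, ← (ha s' ⟨hs'.1.1.le, hs'.1.2.trans hεε⟩).2.1,
      h2]
  · rintro _ ⟨s, hs, rfl⟩
    exact ⟨(hγ s hs).1, (hγ s hs).2.1⟩
end

section
/- Let α > 0 and β > 0. There exists a sequence (xₙ) of pairwise distinct real numbers with xₙ → 3β/2 as n → ∞ such that for every n the point (xₙ, 3β²/(8α), 0) lies on a sliding periodic orbit of Z_{α,β}: there exist Tₙ > 0, Sₙ > 0, a point (bₙ₁, bₙ₂) ∈ ℝ² with bₙ₂ < 3β²/(8α), a solution uₙ : [0, Tₙ] → ℝ³ of uₙ' = X_{α,β}∘uₙ with uₙ(0) = (xₙ, 3β²/(8α), 0), (uₙ)₃(t) > 0 for all t ∈ (0, Tₙ), and uₙ(Tₙ) = (bₙ₁, bₙ₂, 0), and a solution vₙ : [0, Sₙ] → ℝ² of vₙ' = Z̃_{α,β}∘vₙ with vₙ(0) =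 (bₙ₁, bₙ₂), (vₙ)₂(t) < 3β²/(8α) for all t ∈ [0, Sₙ), and vₙ(Sₙ) = (xₙ, 3β²/(8α)). In particular Z_{α,β} has countably infinitely many distinct sliding periodic orbits accumulating onto its sliding Shilnikov orbit. -/
/-!
After rescaling, `α = β = 1`. The upper flow starting at the fold point `(x, 3/8, 0)` lands on the
switching plane at `γ(x) = (3 - 2x, 3/8 - 3/2 (x-1)²)`, and `γ(3/2)` is the origin, which is the
pseudo-equilibrium. Hence `(x, 3/8, 0)` lies on a sliding periodic orbit as soon as the sliding
orbit run backwards from `(x, 3/8)` meets `γ(x)` before it returns to the fold line.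

The backward sliding field `V ∂_X + (-(3/8) X - V/8 + 3V²) ∂_V` (up to the time change
`1/(3/4 - V)`) becomes conservative when the damping term `-V/8` is dropped, with first integral
`energy = (V² - X/8 - 1/48) e^{-6X}`; the damping makes this a Lyapunov function. For
`3/2 ≤ x ≤ 8/5` it confines the orbit (`SlidingTraj.region`), the energy lost on the strip
`1 ≤ X ≤ 9/8` prevents a return to the fold line (`SlidingTraj.V_lt`), and the orbit converges to
the origin (`SlidingTraj.tendsto_zero`), turning monotonically and infinitely often around it
(`strictAntiOn_angle`, `tendsto_angle`).

To follow the angle continuously, the flow is constructed directly in log-polar coordinates: the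
planar field, cut off far away, lifts under `exp : ℂ → ℂ` to a bounded locally Lipschitz field,
which has a global continuous flow (`exists_global_flow`). For each winding number `n`, the orbit
of `x` reaches the direction of `γ(x)` after `n` turns at a time continuous in `x`. Comparing
log-radii there by the intermediate value theorem gives solutions `x` arbitrarily close to, and
larger than, `3/2` (`exists_closing`), from which a strictly decreasing sequence is extracted.
-/

open scoped NNReal

/-! ### Global flows of bounded locally Lipschitz fields -/

/-- A trajectory of a bounded field moves with bounded speed. -/
lemma trajectory_dist_le {G : ℂ → ℂ} {M : ℝ≥0} (hM : ∀ z, ‖G z‖ ≤ M) {f : ℝ → ℂ} {a b : ℝ}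
    (hf : ∀ s ∈ Set.Ioo a b, HasDerivAt f (G (f s)) s) {s t : ℝ}
    (hs : s ∈ Set.Ioo a b) (ht : t ∈ Set.Ioo a b) : dist (f s) (f t) ≤ M * |s - t| := by
  have := (convex_Ioo a b).norm_image_sub_le_of_norm_hasDerivWithin_le (C := M)
    (fun x hx => (hf x hx).hasDerivWithinAt) (fun x _ => hM (f x)) ht hs
  simpa [dist_eq_norm, Real.norm_eq_abs] using this

/-- Two trajectories on `(-b, b)` with the same initial value agree. -/
lemma trajectory_unique {G : ℂ → ℂ} (hG : LocallyLipschitz G) {M : ℝ≥0} (hM : ∀ z, ‖G z‖ ≤ M)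
    {f g : ℝ → ℂ} {b : ℝ} (hb : 0 < b)
    (hf : ∀ s ∈ Set.Ioo (-b) b, HasDerivAt f (G (f s)) s)
    (hg : ∀ s ∈ Set.Ioo (-b) b, HasDerivAt g (G (g s)) s) (h0 : f 0 = g 0) :
    Set.EqOn f g (Set.Ioo (-b) b) := by
  have h0b : (0 : ℝ) ∈ Set.Ioo (-b) b := ⟨by linarith, hb⟩
  obtain ⟨K, hK⟩ := (hG.locallyLipschitzOn (s := Metric.closedBall (f 0) (M * b))
    ).exists_lipschitzOnWith_of_compact (isCompact_closedBall _ _)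
  have key : ∀ h : ℝ → ℂ, (∀ s ∈ Set.Ioo (-b) b, HasDerivAt h (G (h s)) s) → h 0 = f 0 →
      ∀ s ∈ Set.Ioo (-b) b, h s ∈ Metric.closedBall (f 0) (M * b) := by
    intro h hh h00 s hs
    rw [Metric.mem_closedBall, ← h00]
    refine (trajectory_dist_le hM hh hs h0b).trans ?_
    gcongr
    rw [sub_zero]
    exact (abs_lt.2 ⟨hs.1, hs.2⟩).le
  exact ODE_solution_unique_of_mem_Ioo (v := fun _ => G)
    (s := fun _ => Metric.closedBall (f 0) (M * b)) (fun _ _ => hK) h0b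
    (fun s hs => ⟨hf s hs, key f hf rfl s hs⟩)
    (fun s hs => ⟨hg s hs, key g hg h0.symm s hs⟩) h0

/-- Since the field is bounded, Picard–Lindelöf applies on arbitrarily long time intervals. -/
lemma exists_trajectory_Ioo {G : ℂ → ℂ} (hG : LocallyLipschitz G) {M : ℝ≥0}
    (hM : ∀ z, ‖G z‖ ≤ M) (p : ℂ) {b : ℝ} (hb : 0 < b) :
    ∃ f : ℝ → ℂ, f 0 = p ∧ ∀ s ∈ Set.Ioo (-b) b, HasDerivAt f (G (f s)) s := by
  let a : ℝ≥0 := M * b.toNNReal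
  obtain ⟨K, hK⟩ := (hG.locallyLipschitzOn (s := Metric.closedBall p a)
    ).exists_lipschitzOnWith_of_compact (isCompact_closedBall _ _)
  have hPL : IsPicardLindelof (fun _ => G) (tmin := -b) (tmax := b)
      ⟨0, ⟨by linarith, hb.le⟩⟩ p a 0 M K := by
    refine IsPicardLindelof.of_time_independent (fun z _ => hM z) hK ?_
    simp [a, hb.le]
  obtain ⟨f, hf0, hf⟩ := hPL.exists_eq_forall_mem_Icc_hasDerivWithinAt₀
  exact ⟨f, hf0, fun s hs => (hf s ⟨hs.1.le, hs.2.le⟩).hasDerivAt (Icc_mem_nhds hs.1 hs.2)⟩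

/-- A bounded locally Lipschitz field has a globally defined flow; in positive time it is jointly
continuous in the initial value and the time. -/
lemma exists_global_flow {G : ℂ → ℂ} (hG : LocallyLipschitz G) {M : ℝ≥0}
    (hM : ∀ z, ‖G z‖ ≤ M) :
    ∃ Z : ℂ → ℝ → ℂ, (∀ p, Z p 0 = p) ∧ (∀ p s, HasDerivAt (Z p) (G (Z p s)) s) ∧
      Continuous (fun q : ℂ × ℝ => Z q.1 (max q.2 0)) := by
  have hpos : ∀ s : ℝ, 0 < |s| + 1 := fun s => by positivity
  choose! f hf0 hf using fun (p : ℂ) (b : ℝ) (hb : 0 < b) => exists_trajectory_Ioo hG hM p hb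
  -- the solutions on different intervals are glued along the diagonal
  let Z : ℂ → ℝ → ℂ := fun p s => f p (|s| + 1) s
  have hZ : ∀ p b, 0 < b → Set.EqOn (Z p) (f p b) (Set.Ioo (-b) b) := by
    intro p b hb s hs
    have hs' : |s| < b := abs_lt.2 ⟨hs.1, hs.2⟩
    set c := min (|s| + 1) b with hc
    have hc1 : c ≤ |s| + 1 := min_le_left _ _
    have hc2 : c ≤ b := min_le_right _ _
    have hsc : |s| < c := lt_min (by linarith) hs'
    have hc0 : 0 < c := (abs_nonneg s).trans_lt hsc
    refine trajectory_unique hG hM hc0 (f := f p (|s| + 1)) (g := f p b) ?_ ?_ ?_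
      (abs_lt.1 hsc)
    · exact fun t ht => hf p _ (hpos s) t ⟨by linarith [ht.1], by linarith [ht.2]⟩
    · exact fun t ht => hf p _ hb t ⟨by linarith [ht.1], by linarith [ht.2]⟩
    · rw [hf0 p _ (hpos s), hf0 p _ hb]
  have hd : ∀ p s, HasDerivAt (Z p) (G (Z p s)) s := by
    intro p s
    have hs : s ∈ Set.Ioo (-(|s| + 1)) (|s| + 1) := abs_lt.1 (by linarith)
    refine (hf p _ (hpos s) s hs).congr_of_eventuallyEq ?_
    filter_upwards [isOpen_Ioo.mem_nhds hs] with t ht using hZ p _ (hpos s) ht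
  have h0 : ∀ p, Z p 0 = p := fun p => hf0 p _ (hpos 0)
  refine ⟨Z, h0, hd, ?_⟩
  have hlip : ∀ p s t, dist (Z p s) (Z p t) ≤ M * |s - t| := by
    intro p s t
    have h1 := abs_nonneg s
    have h2 := abs_nonneg t
    exact trajectory_dist_le hM (a := -(|s| + |t| + 1)) (b := |s| + |t| + 1)
      (fun x _ => hd p x) (abs_lt.1 (by linarith)) (abs_lt.1 (by linarith))
  apply continuous_prod_of_continuous_lipschitzWith' _ M
  · intro p
    refine LipschitzWith.of_dist_le_mul fun s t => (hlip p _ _).trans ?_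
    rw [Real.dist_eq]
    exact mul_le_mul_of_nonneg_left (abs_max_sub_max_le_abs s t 0) M.2
  · intro b
    set c := max b 0 with hc
    have hc0 : 0 ≤ c := le_max_right _ _
    rw [continuous_iff_continuousAt]
    intro p
    obtain ⟨K, hK⟩ := (hG.locallyLipschitzOn (s := Metric.closedBall p (1 + M * c))
      ).exists_lipschitzOnWith_of_compact (isCompact_closedBall _ _)
    have hmem : ∀ q, dist q p ≤ 1 → ∀ t ∈ Set.Ico 0 c,
        Z q t ∈ Metric.closedBall p (1 + M * c) := by
      intro q hq t ht
      have h1 := hlip q t 0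
      rw [h0, sub_zero, abs_of_nonneg ht.1] at h1
      have h2 : (M : ℝ) * t ≤ M * c := by
        have := ht.2.le
        gcongr
      rw [Metric.mem_closedBall]
      linarith [dist_triangle (Z q t) q p]
    have hgr : ∀ q, dist q p ≤ 1 → dist (Z q c) (Z p c) ≤ dist q p * Real.exp (K * (c - 0)) := by
      intro q hq
      exact dist_le_of_trajectories_ODE_of_mem (v := fun _ => G)
        (s := fun _ => Metric.closedBall p (1 + M * c)) (a := 0) (b := c)
        (fun _ _ => hK)
        (fun t _ => (hd q t).continuousAt.continuousWithinAt)
        (fun t _ => (hd q t).hasDerivWithinAt) (hmem q hq)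
        (fun t _ => (hd p t).continuousAt.continuousWithinAt)
        (fun t _ => (hd p t).hasDerivWithinAt) (hmem p (by simp)) (by rw [h0, h0]) c ⟨hc0, le_rfl⟩
    rw [ContinuousAt, tendsto_iff_dist_tendsto_zero]
    refine squeeze_zero' (g := fun q => dist q p * Real.exp (K * (c - 0)))
      (Filter.Eventually.of_forall fun _ => dist_nonneg) ?_ ?_
    · filter_upwards [Metric.closedBall_mem_nhds p one_pos] with q hq using hgr q hq
    · have : Continuous fun q => dist q p * Real.exp (K * (c - 0)) := by fun_prop
      simpa using this.tendsto p

/-! ### The reversed sliding field and its logarithmic lift -/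

/-- The truncated time change: `1 / (3/4 - V)` on the part of the plane that matters, cut off to
be nonnegative, locally Lipschitz and compactly supported (`X = w.re`, `V = w.im`). -/
noncomputable def timeFactor (w : ℂ) : ℝ :=
  max 0 (min 1 (6 - (w.re ^ 2 + w.im ^ 2))) * (max (3 / 4 - w.im) (1 / 8))⁻¹

/-- The time-reversed normalized sliding field for `α = β = 1`, on `ℂ = {X + i V}`. -/
noncomputable def planarField (w : ℂ) : ℂ :=
  ⟨w.im, -(3 / 8) * w.re - w.im / 8 + 3 * w.im ^ 2⟩

/-- The lift of the truncated field `timeFactor • planarField` under `ζ ↦ exp ζ`; the real and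
imaginary parts of `ζ` are the logarithm of the radius and a continuous choice of the angle. -/
noncomputable def liftedField (ζ : ℂ) : ℂ :=
  Complex.exp (-ζ) * ((timeFactor (Complex.exp ζ) : ℂ) * planarField (Complex.exp ζ))

lemma timeFactor_nonneg (w : ℂ) : 0 ≤ timeFactor w :=
  mul_nonneg (le_max_left _ _)
    (inv_nonneg.2 ((by norm_num : (0 : ℝ) ≤ 1 / 8).trans (le_max_right _ _)))

lemma timeFactor_le (w : ℂ) : timeFactor w ≤ 8 := by
  have h1 : max 0 (min 1 (6 - (w.re ^ 2 + w.im ^ 2))) ≤ 1 :=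
    max_le zero_le_one (min_le_left _ _)
  have h2 : (max (3 / 4 - w.im) (1 / 8))⁻¹ ≤ 8 := by
    rw [inv_le_comm₀ (lt_of_lt_of_le (by norm_num) (le_max_right _ (1 / 8))) (by norm_num)]
    exact le_trans (by norm_num) (le_max_right _ _)
  calc timeFactor w ≤ 1 * 8 := by
        unfold timeFactor
        exact mul_le_mul h1 h2 (inv_nonneg.2 ((by norm_num : (0 : ℝ) ≤ 1 / 8).trans
          (le_max_right _ _))) zero_le_one
    _ = 8 := one_mul 8

lemma timeFactor_eq {w : ℂ} (h1 : w.re ^ 2 + w.im ^ 2 ≤ 5) (h2 : w.im ≤ 5 / 8) :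
    timeFactor w = (3 / 4 - w.im)⁻¹ := by
  unfold timeFactor
  rw [min_eq_left (by linarith), max_eq_right zero_le_one, max_eq_left (by linarith), one_mul]

lemma LocallyLipschitz.mul_normed {A E : Type*} [NormedRing A] [NormedAlgebra ℝ A]
    [PseudoEMetricSpace E] {f g : E → A} (hf : LocallyLipschitz f) (hg : LocallyLipschitz g) :
    LocallyLipschitz fun x => f x * g x := by
  have h : ContDiff ℝ 1 (fun p : A × A => p.1 * p.2) := contDiff_fst.mul contDiff_snd
  exact h.locallyLipschitz.comp (hf.prodMk hg)

lemma locallyLipschitz_timeFactor : LocallyLipschitz timeFactor := by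
  have hre : ContDiff ℝ 1 Complex.re := Complex.reCLM.contDiff
  have him : ContDiff ℝ 1 Complex.im := Complex.imCLM.contDiff
  have hinv : LipschitzWith 64 (fun y : ℝ => (max y (1 / 8))⁻¹) := by
    refine LipschitzWith.of_dist_le_mul fun a b => ?_
    have ha : 1 / 8 ≤ max a (1 / 8) := le_max_right _ _
    have hb : 1 / 8 ≤ max b (1 / 8) := le_max_right _ _
    have hab := abs_max_sub_max_le_abs a b (1 / 8)
    rw [Real.dist_eq, Real.dist_eq]
    set A := max a (1 / 8)
    set B := max b (1 / 8)
    have hA : 0 < A := by linarith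
    have hB : 0 < B := by linarith
    rw [inv_sub_inv hA.ne' hB.ne', abs_div, abs_of_pos (mul_pos hA hB), div_le_iff₀ (mul_pos hA hB),
      abs_sub_comm B A]
    have h64 : 1 ≤ 64 * (A * B) := by nlinarith
    push_cast
    nlinarith [abs_nonneg (a - b), abs_nonneg (A - B)]
  have h1 : ContDiff ℝ 1 (fun w : ℂ => 6 - (w.re ^ 2 + w.im ^ 2)) :=
    contDiff_const.sub ((hre.pow 2).add (him.pow 2))
  have h2 : ContDiff ℝ 1 (fun w : ℂ => 3 / 4 - w.im) := contDiff_const.sub him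
  exact ((h1.locallyLipschitz.const_min 1).const_max 0).mul_normed
    (hinv.locallyLipschitz.comp h2.locallyLipschitz)

lemma locallyLipschitz_liftedField : LocallyLipschitz liftedField := by
  have hre : ContDiff ℝ 1 Complex.re := Complex.reCLM.contDiff
  have him : ContDiff ℝ 1 Complex.im := Complex.imCLM.contDiff
  have hexp : ContDiff ℝ 1 Complex.exp := Complex.contDiff_exp
  have hexpn : ContDiff ℝ 1 (fun ζ : ℂ => Complex.exp (-ζ)) := hexp.comp contDiff_neg
  have hof : ContDiff ℝ 1 (fun x : ℝ => (x : ℂ)) := Complex.ofRealCLM.contDiff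
  have hP : ContDiff ℝ 1 planarField := by
    have : planarField = fun w : ℂ => ((w.im : ℝ) : ℂ) +
        ((-(3 / 8) * w.re - w.im / 8 + 3 * w.im ^ 2 : ℝ) : ℂ) * Complex.I := by
      funext w
      apply Complex.ext <;> simp [planarField, -Complex.ofReal_add, -Complex.ofReal_sub,
        -Complex.ofReal_mul]
    rw [this]
    exact (hof.comp him).add ((hof.comp (((contDiff_const.mul hre).sub (him.div_const 8)).add
      (contDiff_const.mul (him.pow 2)))).mul contDiff_const)
  exact hexpn.locallyLipschitz.mul_normed
    ((hof.locallyLipschitz.comp (locallyLipschitz_timeFactor.comp hexp.locallyLipschitz)).mul_normed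
      (hP.locallyLipschitz.comp hexp.locallyLipschitz))

/-- The truncated field vanishes at the origin to first order and outside a compact set, so its
lift is bounded. -/
lemma norm_liftedField_le (ζ : ℂ) : ‖liftedField ζ‖ ≤ (80 : ℝ≥0) := by
  have hw : ∀ w : ℂ, timeFactor w * ‖planarField w‖ ≤ 80 * ‖w‖ := by
    intro w
    have hsq : w.re ^ 2 + w.im ^ 2 = ‖w‖ ^ 2 := by
      rw [← Complex.normSq_eq_norm_sq, Complex.normSq_apply]; ring
    have h0 := norm_nonneg w
    by_cases h : 6 ≤ w.re ^ 2 + w.im ^ 2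
    · have : timeFactor w = 0 := by
        unfold timeFactor
        rw [max_eq_left (min_le_of_right_le (by linarith)), zero_mul]
      rw [this, zero_mul]; positivity
    · have h5 : ‖w‖ ≤ 5 / 2 := by nlinarith
      have hre := Complex.abs_re_le_norm w
      have him := Complex.abs_im_le_norm w
      have hF : ‖planarField w‖ ≤ 9 * ‖w‖ + ‖w‖ := by
        refine (Complex.norm_le_abs_re_add_abs_im _).trans ?_
        simp only [planarField]
        have : |-(3 / 8) * w.re - w.im / 8 + 3 * w.im ^ 2| ≤ 9 * ‖w‖ := by
          have h3 : w.im ^ 2 ≤ 5 / 2 * ‖w‖ := by nlinarith [sq_nonneg w.re]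
          have h4 := sq_nonneg w.im
          rw [abs_le] at hre him ⊢
          constructor <;> linarith [hre.1, hre.2, him.1, him.2]
        linarith
      have := timeFactor_nonneg w
      nlinarith [timeFactor_le w, norm_nonneg (planarField w)]
  have h := hw (Complex.exp ζ)
  have hpos : 0 < ‖Complex.exp ζ‖ := norm_pos_iff.2 (Complex.exp_ne_zero ζ)
  rw [liftedField, norm_mul, norm_mul, Complex.norm_real, Real.norm_eq_abs,
    abs_of_nonneg (timeFactor_nonneg _), Complex.exp_neg, norm_inv, inv_mul_le_iff₀ hpos]
  push_cast
  linarith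

/-! ### Planar analysis of the reversed sliding orbits -/

/-- `(X, V)` is a trajectory of the reversed sliding field for `α = β = 1`, starting at
`(x, 3/8)`, where `m` is a (possibly truncated) time change. -/
structure SlidingTraj (x : ℝ) (X V m : ℝ → ℝ) : Prop where
  X_zero : X 0 = x
  V_zero : V 0 = 3 / 8
  hasDerivAt_X : ∀ s, HasDerivAt X (m s * V s) s
  hasDerivAt_V : ∀ s, HasDerivAt V (m s * (-(3 / 8) * X s - V s / 8 + 3 * V s ^ 2)) s
  m_nonneg : ∀ s, 0 ≤ m s
  m_eq : ∀ s, X s ^ 2 + V s ^ 2 ≤ 5 → V s ≤ 5 / 8 → m s = (3 / 4 - V s)⁻¹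

/-- A first integral of the reversed field with its damping term `-V/8` removed; it is minimal at
the origin, with value `-1/48`, and its negative level sets there are closed curves. -/
noncomputable def energy (X V : ℝ) : ℝ := (V ^ 2 - X / 8 - 1 / 48) * Real.exp (-6 * X)

/-- The angular speed is `-(m / r²)` times this quadratic-cubic form. -/
lemma angular_form_pos {X V : ℝ} (h : V ^ 2 < X / 8 + 1 / 48) (hX : X < 2)
    (h0 : 0 < X ^ 2 + V ^ 2) : 0 < 3 / 8 * X ^ 2 + X * V / 8 + V ^ 2 - 3 * X * V ^ 2 := by
  have hV : |V| < 7 / 12 := abs_lt_of_sq_lt_sq (by nlinarith) (by norm_num)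
  rw [abs_lt] at hV
  rcases le_total X (1 / 4) with h1 | h1
  · nlinarith [sq_nonneg (X + 3 * V), sq_nonneg (X + V / 3), mul_nonneg (sub_nonneg.2 h1) (sq_nonneg V),
      sq_nonneg X, sq_nonneg V]
  · rcases le_total X (1 / 3) with h2 | h2
    · have h3 : 0 ≤ V ^ 2 * (1 - 3 * X) := mul_nonneg (sq_nonneg V) (by linarith)
      have h4 : 0 < X * (3 * X + V) := mul_pos (by linarith) (by linarith [hV.1])
      nlinarith
    · have h3 : V ^ 2 * (3 * X - 1) ≤ (X / 8 + 1 / 48) * (3 * X - 1) :=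
        mul_le_mul_of_nonneg_right h.le (by linarith)
      have h4 : 0 < X * (7 / 12 + V) := mul_pos (by linarith) (by linarith [hV.1])
      nlinarith

/-- A function with negative derivative at `a` lies above `f a` just before and below just
after. -/
lemma eventually_mul_neg_of_deriv_neg {f : ℝ → ℝ} {f' a : ℝ} (h : HasDerivAt f f' a)
    (hf' : f' < 0) : ∀ᶠ s in nhdsWithin a {a}ᶜ, (f s - f a) * (s - a) < 0 := by
  filter_upwards [(hasDerivAt_iff_tendsto_slope.1 h).eventually_lt_const hf',
    self_mem_nhdsWithin] with s hs hsa
  have hne : s - a ≠ 0 := sub_ne_zero.2 hsa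
  rw [slope_def_field] at hs
  have : (f s - f a) * (s - a) = (f s - f a) / (s - a) * (s - a) ^ 2 := by field_simp
  rw [this]
  exact mul_neg_of_neg_of_pos hs (by positivity)

/-- A continuous function going down through the levels `q` and `p` does so, at some stage,
within the strip between them. -/
lemma exists_strip_crossing {f : ℝ → ℝ} (hf : Continuous f) {c p q : ℝ} (hc : 0 ≤ c) (hpq : p < q)
    (h0 : q ≤ f 0) (hfc : f c ≤ p) :
    ∃ a b, 0 ≤ a ∧ a ≤ b ∧ b ≤ c ∧ f a = q ∧ f b = p ∧ ∀ s ∈ Set.Icc a b, p ≤ f s ∧ f s ≤ q := by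
  let B : Set ℝ := Set.Icc 0 c ∩ f ⁻¹' Set.Iic p
  have hBc : IsCompact B := isCompact_Icc.inter_right (isClosed_Iic.preimage hf)
  obtain ⟨b, ⟨⟨hb0, hbc⟩, hbp⟩, hbmin⟩ := hBc.exists_isLeast ⟨c, ⟨hc, le_rfl⟩, hfc⟩
  have hbge : ∀ s, 0 ≤ s → s < b → p < f s := fun s hs0 hsb => by
    by_contra hcon
    exact absurd (hbmin ⟨⟨hs0, by linarith⟩, not_lt.1 hcon⟩) (not_le.2 hsb)
  let A : Set ℝ := Set.Icc 0 b ∩ f ⁻¹' Set.Ici q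
  have hAc : IsCompact A := isCompact_Icc.inter_right (isClosed_Ici.preimage hf)
  obtain ⟨a, ⟨⟨ha0, hab⟩, haq⟩, hamax⟩ := hAc.exists_isGreatest ⟨0, ⟨le_rfl, hb0⟩, h0⟩
  have hale : ∀ s, a < s → s ≤ b → f s < q := fun s hs0 hsb => by
    by_contra hcon
    exact absurd (hamax ⟨⟨by linarith, hsb⟩, not_lt.1 hcon⟩) (not_le.2 hs0)
  have hbp' : f b ≤ p := hbp
  have haq' : q ≤ f a := haq
  have hfb : f b = p := by
    refine le_antisymm hbp' ?_
    obtain ⟨t, ht, htp⟩ := intermediate_value_Icc' hb0 hf.continuousOn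
      (show p ∈ Set.Icc (f b) (f 0) from ⟨hbp', by linarith⟩)
    have : b ≤ t := hbmin ⟨⟨ht.1, ht.2.trans hbc⟩, htp.le⟩
    rw [le_antisymm this ht.2, htp]
  have hfa : f a = q := by
    refine le_antisymm ?_ haq'
    obtain ⟨t, ht, htq⟩ := intermediate_value_Icc' hab hf.continuousOn
      (show q ∈ Set.Icc (f b) (f a) from ⟨by linarith, haq'⟩)
    have : t ≤ a := hamax ⟨⟨ha0.trans ht.1, ht.2⟩, htq.ge⟩
    rw [le_antisymm ht.1 this, htq]
  refine ⟨a, b, ha0, hab, hbc, hfa, hfb, fun s hs => ⟨?_, ?_⟩⟩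
  · rcases hs.2.lt_or_eq with h | h
    · exact (hbge s (ha0.trans hs.1) h).le
    · rw [h, hfb]
  · rcases hs.1.lt_or_eq with h | h
    · exact (hale s h hs.2).le
    · rw [← h, hfa]

namespace SlidingTraj

variable {x : ℝ} {X V m : ℝ → ℝ}

lemma continuous_X (h : SlidingTraj x X V m) : Continuous X :=
  continuous_iff_continuousAt.2 fun s => (h.hasDerivAt_X s).continuousAt

lemma continuous_V (h : SlidingTraj x X V m) : Continuous V :=
  continuous_iff_continuousAt.2 fun s => (h.hasDerivAt_V s).continuousAt

lemma hasDerivAt_exp (h : SlidingTraj x X V m) (s : ℝ) :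
    HasDerivAt (fun s => Real.exp (-6 * X s)) (Real.exp (-6 * X s) * (-6 * (m s * V s))) s :=
  ((h.hasDerivAt_X s).const_mul (-6)).exp

lemma hasDerivAt_energy (h : SlidingTraj x X V m) (s : ℝ) :
    HasDerivAt (fun s => energy (X s) (V s)) (-(m s * Real.exp (-6 * X s) * V s ^ 2 / 4)) s := by
  unfold energy
  refine (((((h.hasDerivAt_V s).pow 2).sub ((h.hasDerivAt_X s).div_const 8)).sub_const
    (1 / 48)).mul (h.hasDerivAt_exp s)).congr_deriv ?_
  simp only [Pi.sub_apply, Pi.pow_apply]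
  ring

lemma antitone_energy (h : SlidingTraj x X V m) : Antitone fun s => energy (X s) (V s) := by
  refine antitone_of_hasDerivAt_nonpos h.hasDerivAt_energy fun s => ?_
  have := h.m_nonneg s
  have : 0 ≤ m s * Real.exp (-6 * X s) * V s ^ 2 / 4 := by positivity
  simp only [Pi.zero_apply]
  linarith

/-- The energy bound inherited from the initial point confines the orbit. -/
lemma region (h : SlidingTraj x X V m) (hx1 : 3 / 2 ≤ x) (hx2 : x ≤ 8 / 5) {s : ℝ} (hs : 0 ≤ s) :
    V s ^ 2 < X s / 8 + 1 / 48 ∧ X s < 2 := by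
  have hH := h.antitone_energy hs
  simp only [energy, h.X_zero, h.V_zero] at hH
  have hE : Real.exp (-6 * x) * Real.exp (6 * X s) = Real.exp (6 * X s - 6 * x) := by
    rw [← Real.exp_add]; ring_nf
  have hE1 : Real.exp (-6 * X s) * Real.exp (6 * X s) = 1 := by
    rw [← Real.exp_add]; ring_nf; exact Real.exp_zero
  have hmul := mul_le_mul_of_nonneg_right hH (Real.exp_pos (6 * X s)).le
  rw [mul_assoc, hE1, mul_one, mul_assoc, hE] at hmul
  have hpos := Real.exp_pos (6 * X s - 6 * x)
  have hkey : V s ^ 2 - X s / 8 - 1 / 48 ≤ -(13 / 192) * Real.exp (6 * X s - 6 * x) := by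
    refine hmul.trans (mul_le_mul_of_nonneg_right ?_ hpos.le)
    linarith
  refine ⟨by nlinarith, ?_⟩
  by_contra hcon
  have hq := Real.quadratic_le_exp_of_nonneg (x := 6 * X s - 6 * x) (by linarith)
  nlinarith [sq_nonneg (V s), sq_nonneg (6 * X s - 6 * x - 12 / 5)]

lemma X_gt (h : SlidingTraj x X V m) (hx1 : 3 / 2 ≤ x) (hx2 : x ≤ 8 / 5) {s : ℝ} (hs : 0 ≤ s) :
    -(1 / 6) < X s := by
  nlinarith [h.region hx1 hx2 hs, sq_nonneg (V s)]

lemma abs_V_lt (h : SlidingTraj x X V m) (hx1 : 3 / 2 ≤ x) (hx2 : x ≤ 8 / 5) {s : ℝ} (hs : 0 ≤ s) :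
    |V s| < 5 / 8 := by
  have := h.region hx1 hx2 hs
  exact abs_lt_of_sq_lt_sq (by nlinarith) (by norm_num)

lemma m_eq_inv (h : SlidingTraj x X V m) (hx1 : 3 / 2 ≤ x) (hx2 : x ≤ 8 / 5) {s : ℝ}
    (hs : 0 ≤ s) : m s = (3 / 4 - V s)⁻¹ := by
  obtain ⟨h1, h2⟩ := h.region hx1 hx2 hs
  have h3 := h.X_gt hx1 hx2 hs
  exact h.m_eq s (by nlinarith) (abs_lt.1 (h.abs_V_lt hx1 hx2 hs)).2.le

lemma half_le_m (h : SlidingTraj x X V m) (hx1 : 3 / 2 ≤ x) (hx2 : x ≤ 8 / 5) {s : ℝ}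
    (hs : 0 ≤ s) : 1 / 2 ≤ m s := by
  have hV := abs_lt.1 (h.abs_V_lt hx1 hx2 hs)
  rw [h.m_eq_inv hx1 hx2 hs, le_inv_comm₀ (by norm_num) (by linarith)]
  linarith

/-- The reversed orbit never returns to the line `V = 3/8`. At a first return, `V` is
nondecreasing, so `X ≤ 1` and the energy is at least `-e⁻⁶/192`. But before that the orbit has
crossed the strip `1 ≤ X ≤ 9/8` with `V ≤ -3/8`, and lost more energy than this allows. -/
lemma V_lt (h : SlidingTraj x X V m) (hx1 : 3 / 2 ≤ x) (hx2 : x ≤ 8 / 5) {s : ℝ} (hs : 0 < s) :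
    V s < 3 / 8 := by
  by_contra hcon
  rw [not_lt] at hcon
  have hm0 := h.half_le_m hx1 hx2 le_rfl
  obtain ⟨ε, hε, hεV⟩ : ∃ ε > 0, ∀ t, 0 < t → t < ε → V t < 3 / 8 := by
    have hneg : m 0 * (-(3 / 8) * X 0 - V 0 / 8 + 3 * V 0 ^ 2) < 0 := by
      rw [h.X_zero, h.V_zero]
      exact mul_neg_of_pos_of_neg (by linarith) (by linarith)
    have hev := eventually_mul_neg_of_deriv_neg (h.hasDerivAt_V 0) hneg
    rw [eventually_nhdsWithin_iff, Metric.eventually_nhds_iff] at hev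
    obtain ⟨ε, hε, H⟩ := hev
    refine ⟨ε, hε, fun t ht htε => ?_⟩
    have := H (y := t) (by rw [Real.dist_eq, sub_zero, abs_of_pos ht]; exact htε) ht.ne'
    rw [h.V_zero, sub_zero] at this
    nlinarith
  -- the first return time `b` to the line
  let C : Set ℝ := Set.Icc ε s ∩ V ⁻¹' Set.Ici (3 / 8)
  have hεs : ε ≤ s := by
    by_contra hlt
    linarith [hεV s hs (not_le.1 hlt)]
  have hCc : IsCompact C := isCompact_Icc.inter_right (isClosed_Ici.preimage h.continuous_V)
  obtain ⟨b, ⟨⟨hbε, hbs⟩, hbV⟩, hbmin⟩ := hCc.exists_isLeast ⟨s, ⟨hεs, le_rfl⟩, hcon⟩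
  have hb0 : 0 < b := hε.trans_le hbε
  have hlt : ∀ t, 0 < t → t < b → V t < 3 / 8 := by
    intro t ht htb
    by_contra hge
    rw [not_lt] at hge
    rcases lt_or_ge t ε with h1 | h1
    · linarith [hεV t ht h1]
    · exact absurd (hbmin ⟨⟨h1, by linarith⟩, hge⟩) (not_le.2 htb)
  have hVb : V b = 3 / 8 := by
    refine le_antisymm ?_ hbV
    refine le_of_tendsto ((h.continuous_V.tendsto b).mono_left nhdsWithin_le_nhds :
      Filter.Tendsto V (nhdsWithin b (Set.Iio b)) _) ?_
    filter_upwards [Ioo_mem_nhdsLT hb0] with t ht using (hlt t ht.1 ht.2).le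
  have hmb := h.half_le_m hx1 hx2 hb0.le
  have hXb : X b ≤ 1 := by
    by_contra hXb
    rw [not_le] at hXb
    have hneg : m b * (-(3 / 8) * X b - V b / 8 + 3 * V b ^ 2) < 0 := by
      rw [hVb]
      exact mul_neg_of_pos_of_neg (by linarith) (by linarith)
    have hev := (eventually_mul_neg_of_deriv_neg (h.hasDerivAt_V b) hneg).filter_mono
      (nhdsWithin_mono b (fun t ht => ne_of_lt ht) : nhdsWithin b (Set.Iio b) ≤ _)
    obtain ⟨t, ht1, ht2⟩ := (hev.and (Ioo_mem_nhdsLT hb0)).exists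
    have := hlt t ht2.1 ht2.2
    rw [hVb] at ht1
    nlinarith [ht2.2]
  have hHb : -(1 / 192) * Real.exp (-6) ≤ energy (X b) (V b) := by
    have h1 : Real.exp (-6 * X b) = Real.exp (-6) * Real.exp (6 * (1 - X b)) := by
      rw [← Real.exp_add]; ring_nf
    have h2 : Real.exp (6 * (1 - X b)) * Real.exp (-(6 * (1 - X b))) = 1 := by
      rw [← Real.exp_add, add_neg_cancel, Real.exp_zero]
    have h3 := Real.add_one_le_exp (-(6 * (1 - X b)))
    have hp := Real.exp_pos (6 * (1 - X b))
    have h4 := mul_le_mul_of_nonneg_left h3 hp.le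
    rw [h2] at h4
    rw [energy, hVb, h1]
    have h5 : -(1 / 192) ≤ ((3 / 8) ^ 2 - X b / 8 - 1 / 48) * Real.exp (6 * (1 - X b)) := by
      nlinarith [mul_nonneg (sub_nonneg.2 hXb) hp.le]
    nlinarith [Real.exp_pos (-6)]
  obtain ⟨a, c, ha0, hac, hcb, hXa, hXc, hstrip⟩ := exists_strip_crossing h.continuous_X hb0.le
    (show (1 : ℝ) < 9 / 8 by norm_num) (by rw [h.X_zero]; linarith) hXb
  have hV38 : ∀ t ∈ Set.Ioo a c, V t ≤ -(3 / 8) := by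
    intro t ht
    have hlow : -(1 / 192) * Real.exp (-6) ≤ energy (X t) (V t) :=
      hHb.trans (h.antitone_energy (ht.2.le.trans hcb))
    obtain ⟨h1, h2⟩ := hstrip t ⟨ht.1.le, ht.2.le⟩
    have hV := hlt t (ha0.trans_lt ht.1) (ht.2.trans_le hcb)
    have e1 : Real.exp (-6) = Real.exp (-6 * X t) * Real.exp (6 * (X t - 1)) := by
      rw [← Real.exp_add]; ring_nf
    have e2 : Real.exp (6 * (X t - 1)) * Real.exp (-(6 * (X t - 1))) = 1 := by
      rw [← Real.exp_add, add_neg_cancel, Real.exp_zero]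
    have e3 := Real.add_one_le_exp (-(6 * (X t - 1)))
    have hp := Real.exp_pos (6 * (X t - 1))
    have e4 := mul_le_mul_of_nonneg_left e3 hp.le
    rw [e2] at e4
    -- `exp y ≤ 1 + 4 y` for `0 ≤ y ≤ 3/4`
    have e5 : Real.exp (6 * (X t - 1)) ≤ 1 + 4 * (6 * (X t - 1)) := by
      have hy : 0 < 1 - 6 * (X t - 1) := by linarith
      refine le_of_mul_le_mul_right ?_ hy
      nlinarith
    rw [energy, e1] at hlow
    have e6 : -(1 / 192) * Real.exp (6 * (X t - 1)) ≤ V t ^ 2 - X t / 8 - 1 / 48 := by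
      have := Real.exp_pos (-6 * X t)
      refine le_of_mul_le_mul_right ?_ this
      linarith
    by_contra hcon2
    rw [not_le] at hcon2
    nlinarith
  have hK : ∀ t, HasDerivAt (fun t => energy (X t) (V t) + Real.exp (-6 * X t) / 64)
      (-(m t * Real.exp (-6 * X t) * (V t * (V t / 4 + 3 / 32)))) t := by
    intro t
    refine ((h.hasDerivAt_energy t).add ((h.hasDerivAt_exp t).div_const 64)).congr_deriv ?_
    ring
  have hanti : AntitoneOn (fun t => energy (X t) (V t) + Real.exp (-6 * X t) / 64)
      (Set.Icc a c) := by
    refine antitoneOn_of_hasDerivWithinAt_nonpos (convex_Icc a c)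
      (fun t _ => (hK t).continuousAt.continuousWithinAt)
      (fun t _ => (hK t).hasDerivWithinAt) fun t ht => ?_
    rw [interior_Icc] at ht
    have hV := hV38 t ht
    have hm := h.m_nonneg t
    have h1 : 0 ≤ V t * (V t / 4 + 3 / 32) :=
      mul_nonneg_of_nonpos_of_nonpos (by linarith) (by linarith)
    have : 0 ≤ m t * Real.exp (-6 * X t) * (V t * (V t / 4 + 3 / 32)) := by positivity
    linarith
  have hfin := hanti ⟨le_rfl, hac⟩ ⟨hac, le_rfl⟩ hac
  simp only [hXa, hXc] at hfin
  have hHc : -(1 / 192) * Real.exp (-6) ≤ energy 1 (V c) := by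
    have := hHb.trans (h.antitone_energy hcb)
    simpa only [hXc] using this
  have hHa : energy (9 / 8) (V a) < 0 := by
    have := (h.region hx1 hx2 ha0).1
    rw [hXa] at this
    exact mul_neg_of_neg_of_pos (by linarith) (Real.exp_pos _)
  have e1 : Real.exp (-6 * 1) = Real.exp (-6 * (9 / 8)) * Real.exp (3 / 4) := by
    rw [← Real.exp_add]; norm_num
  have e2 : Real.exp (-6 : ℝ) = Real.exp (-6 * 1) := by norm_num
  have e3 := Real.add_one_le_exp (3 / 4 : ℝ)
  have hp := Real.exp_pos (-6 * (9 / 8) : ℝ)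
  rw [e2, e1] at hHc
  rw [e1] at hfin
  nlinarith

lemma le_energy (h : SlidingTraj x X V m) (hx1 : 3 / 2 ≤ x) (hx2 : x ≤ 8 / 5) {s : ℝ}
    (hs : 0 ≤ s) :
    Real.exp (-12) * (3 / 16) * (X s ^ 2 + V s ^ 2) ≤ energy (X s) (V s) + 1 / 48 := by
  have hX := h.X_gt hx1 hx2 hs
  obtain ⟨-, hX2⟩ := h.region hx1 hx2 hs
  -- `exp y ≥ (1 + y/2)²` for `y ≥ -2`
  have h1 : (1 + 3 * X s) ^ 2 ≤ Real.exp (6 * X s) := by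
    have := Real.add_one_le_exp (3 * X s)
    calc (1 + 3 * X s) ^ 2 ≤ Real.exp (3 * X s) ^ 2 :=
          pow_le_pow_left₀ (by linarith) (by linarith) 2
      _ = Real.exp (6 * X s) := by rw [← Real.exp_nat_mul]; push_cast; ring_nf
  have h2 : Real.exp (-6 * X s) * Real.exp (6 * X s) = 1 := by
    rw [← Real.exp_add]; ring_nf; exact Real.exp_zero
  have h3 : Real.exp (-12) ≤ Real.exp (-6 * X s) := Real.exp_le_exp.2 (by linarith)
  have h4 : energy (X s) (V s) + 1 / 48 =
      Real.exp (-6 * X s) * (V s ^ 2 + (Real.exp (6 * X s) - 1 - 6 * X s) / 48) := by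
    rw [energy]
    linear_combination (-1 / 48) * h2
  rw [h4, mul_assoc]
  refine mul_le_mul h3 ?_ (by positivity) (Real.exp_pos _).le
  nlinarith [sq_nonneg (V s), sq_nonneg (X s)]

/-- The energy gets arbitrarily close to its minimum: otherwise the strict Lyapunov function
`energy + X V e^{-6X} / 8` would decrease at a uniform rate, although it is bounded below. -/
lemma exists_energy_lt (h : SlidingTraj x X V m) (hx1 : 3 / 2 ≤ x) (hx2 : x ≤ 8 / 5) {ε : ℝ}
    (hε : 0 < ε) : ∃ s, 0 ≤ s ∧ energy (X s) (V s) + 1 / 48 < ε := by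
  by_contra! hcon
  obtain ⟨δ, hδ, hfar⟩ : ∃ δ > 0, ∀ s, 0 ≤ s → δ ≤ X s ^ 2 + V s ^ 2 := by
    have hcont : Continuous fun p : ℝ × ℝ => energy p.1 p.2 + 1 / 48 := by
      unfold energy; fun_prop
    have hev : ∀ᶠ p : ℝ × ℝ in nhds (0, 0), energy p.1 p.2 + 1 / 48 < ε := by
      refine (hcont.tendsto (0, 0)).eventually_lt_const ?_
      simpa [energy] using hε
    obtain ⟨r, hr, H⟩ := Metric.eventually_nhds_iff.1 hev
    refine ⟨r ^ 2, by positivity, fun s hs => ?_⟩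
    by_contra hlt
    rw [not_le] at hlt
    refine absurd (H (y := (X s, V s)) ?_) (not_lt.2 (hcon s hs))
    rw [Prod.dist_eq, Real.dist_eq, Real.dist_eq, sub_zero, sub_zero, max_lt_iff]
    exact ⟨abs_lt_of_sq_lt_sq (by nlinarith [sq_nonneg (V s)]) hr.le,
      abs_lt_of_sq_lt_sq (by nlinarith [sq_nonneg (X s)]) hr.le⟩
  set η := 1 / 2 * Real.exp (-12) * (δ / 32) with hη
  have hη0 : 0 < η := by positivity
  let L : ℝ → ℝ := fun s => energy (X s) (V s) + X s * V s * Real.exp (-6 * X s) / 8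
  have hL : ∀ s, HasDerivAt L (-(m s * Real.exp (-6 * X s) *
      (V s ^ 2 * (1 + 3 * X s) / 8 + 3 * X s ^ 2 / 64 + X s * V s / 64))) s := by
    intro s
    refine ((h.hasDerivAt_energy s).add ((((h.hasDerivAt_X s).mul (h.hasDerivAt_V s)).mul
      (h.hasDerivAt_exp s)).div_const 8)).congr_deriv ?_
    simp only [Pi.mul_apply]
    ring
  have hLη : AntitoneOn (fun s => L s + η * s) (Set.Ici 0) := by
    have hd : ∀ s, HasDerivAt (fun s => L s + η * s) _ s := fun s =>
      (hL s).add ((hasDerivAt_id s).const_mul η)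
    refine antitoneOn_of_hasDerivWithinAt_nonpos (convex_Ici 0)
      (fun s _ => (hd s).continuousAt.continuousWithinAt)
      (fun s _ => (hd s).hasDerivWithinAt) fun s hs => ?_
    rw [interior_Ici] at hs
    have hs0 : 0 ≤ s := le_of_lt hs
    have hX := h.X_gt hx1 hx2 hs0
    have hX2 := (h.region hx1 hx2 hs0).2
    have h3 : Real.exp (-12) ≤ Real.exp (-6 * X s) := Real.exp_le_exp.2 (by linarith)
    have h4 := h.half_le_m hx1 hx2 hs0
    have h5 : δ / 32 ≤ V s ^ 2 * (1 + 3 * X s) / 8 + 3 * X s ^ 2 / 64 + X s * V s / 64 := by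
      have h6 : 0 ≤ V s ^ 2 * (X s + 1 / 6) := mul_nonneg (sq_nonneg _) (by linarith)
      nlinarith [hfar s hs0, sq_nonneg (X s + V s)]
    have h7 : η ≤ m s * Real.exp (-6 * X s) *
        (V s ^ 2 * (1 + 3 * X s) / 8 + 3 * X s ^ 2 / 64 + X s * V s / 64) := by
      rw [hη]
      gcongr
    linarith
  have hlow : ∀ s, 0 ≤ s → -1 - Real.exp 1 ≤ L s := by
    intro s hs
    have hX := h.X_gt hx1 hx2 hs
    have hX2 := (h.region hx1 hx2 hs).2
    have hV := abs_lt.1 (h.abs_V_lt hx1 hx2 hs)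
    have h1 := h.le_energy hx1 hx2 hs
    have h2 : 0 ≤ Real.exp (-12) * (3 / 16) * (X s ^ 2 + V s ^ 2) := by positivity
    have h3 : Real.exp (-6 * X s) ≤ Real.exp 1 := Real.exp_le_exp.2 (by linarith)
    have h4 : -8 ≤ X s * V s := by nlinarith
    have h5 := Real.exp_pos (-6 * X s)
    have h6 : -Real.exp 1 ≤ X s * V s * Real.exp (-6 * X s) / 8 := by nlinarith
    simp only [L]
    linarith
  set T := (L 0 + 2 + Real.exp 1) / η with hT
  have hT0 : 0 ≤ T := div_nonneg (by linarith [hlow 0 le_rfl]) hη0.le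
  have hfin := hLη (Set.mem_Ici.2 le_rfl) (Set.mem_Ici.2 hT0) hT0
  have hηT : η * T = L 0 + 2 + Real.exp 1 := mul_div_cancel₀ _ hη0.ne'
  simp only [hηT, mul_zero, add_zero] at hfin
  linarith [hlow T hT0]

lemma tendsto_zero (h : SlidingTraj x X V m) (hx1 : 3 / 2 ≤ x) (hx2 : x ≤ 8 / 5) :
    Filter.Tendsto (fun s => X s ^ 2 + V s ^ 2) Filter.atTop (nhds 0) := by
  rw [Metric.tendsto_atTop]
  intro ε hε
  have hc : 0 < Real.exp (-12) * (3 / 16) := by positivity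
  obtain ⟨s₀, hs₀, hlt⟩ := h.exists_energy_lt hx1 hx2 (mul_pos hc hε)
  refine ⟨s₀, fun s hs => ?_⟩
  have h1 := h.le_energy hx1 hx2 (hs₀.trans hs)
  have h2 := h.antitone_energy hs
  simp only at h2
  rw [Real.dist_eq, sub_zero, abs_of_nonneg (by positivity)]
  exact lt_of_mul_lt_mul_left (by linarith) hc.le

end SlidingTraj

/-! ### Log-polar description of the reversed orbits -/

section Lift

variable {x : ℝ} {z : ℝ → ℂ}

/-- Exponentials of trajectories of the lifted field are trajectories of the planar field. -/
lemma slidingTraj_of_lift (hz : ∀ s, HasDerivAt z (liftedField (z s)) s)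
    (h0 : Complex.exp (z 0) = ⟨x, 3 / 8⟩) :
    SlidingTraj x (fun s => (Complex.exp (z s)).re) (fun s => (Complex.exp (z s)).im)
      (fun s => timeFactor (Complex.exp (z s))) := by
  have hw : ∀ s, HasDerivAt (fun s => Complex.exp (z s))
      ((timeFactor (Complex.exp (z s)) : ℂ) * planarField (Complex.exp (z s))) s := by
    intro s
    refine (hz s).cexp.congr_deriv ?_
    rw [liftedField, ← mul_assoc, ← Complex.exp_add, add_neg_cancel, Complex.exp_zero, one_mul]
  refine ⟨by simp [h0], by simp [h0], fun s => ?_, fun s => ?_, fun s => timeFactor_nonneg _,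
    fun s => timeFactor_eq⟩
  · refine (Complex.reCLM.hasFDerivAt.comp_hasDerivAt s (hw s)).congr_deriv ?_
    simp [planarField]
  · refine (Complex.imCLM.hasFDerivAt.comp_hasDerivAt s (hw s)).congr_deriv ?_
    simp [planarField]

lemma sq_add_sq_exp (ζ : ℂ) :
    (Complex.exp ζ).re ^ 2 + (Complex.exp ζ).im ^ 2 = Real.exp (2 * ζ.re) := by
  rw [Complex.exp_re, Complex.exp_im, two_mul, Real.exp_add]
  linear_combination Real.exp ζ.re ^ 2 * Real.cos_sq_add_sin_sq ζ.im

/-- The angular speed in log-polar coordinates. -/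
lemma liftedField_im (ζ : ℂ) : (liftedField ζ).im =
    -(timeFactor (Complex.exp ζ) * ((3 / 8 * (Complex.exp ζ).re ^ 2 +
      (Complex.exp ζ).re * (Complex.exp ζ).im / 8 + (Complex.exp ζ).im ^ 2 -
      3 * (Complex.exp ζ).re * (Complex.exp ζ).im ^ 2) /
      ((Complex.exp ζ).re ^ 2 + (Complex.exp ζ).im ^ 2))) := by
  have hpos : 0 < (Complex.exp ζ).re ^ 2 + (Complex.exp ζ).im ^ 2 := by
    rw [sq_add_sq_exp]; positivity
  rw [liftedField, Complex.exp_neg]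
  generalize Complex.exp ζ = w at *
  simp only [Complex.mul_im, Complex.mul_re, Complex.inv_re, Complex.inv_im, Complex.ofReal_re,
    Complex.ofReal_im, planarField, Complex.normSq_apply]
  have h2 : w.re * w.re + w.im * w.im = w.re ^ 2 + w.im ^ 2 := by ring
  rw [h2]
  field_simp
  ring

lemma hasDerivAt_angle (hz : ∀ s, HasDerivAt z (liftedField (z s)) s) (s : ℝ) :
    HasDerivAt (fun s => (z s).im) (liftedField (z s)).im s :=
  Complex.imCLM.hasFDerivAt.comp_hasDerivAt s (hz s)

lemma strictAntiOn_angle (hz : ∀ s, HasDerivAt z (liftedField (z s)) s)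
    (h0 : Complex.exp (z 0) = ⟨x, 3 / 8⟩) (hx1 : 3 / 2 ≤ x) (hx2 : x ≤ 8 / 5) :
    StrictAntiOn (fun s => (z s).im) (Set.Ici 0) := by
  have h := slidingTraj_of_lift hz h0
  refine strictAntiOn_of_deriv_neg (convex_Ici 0)
    (fun s _ => (hasDerivAt_angle hz s).continuousAt.continuousWithinAt) fun s hs => ?_
  rw [interior_Ici] at hs
  have hs0 : 0 ≤ s := le_of_lt hs
  rw [(hasDerivAt_angle hz s).deriv, liftedField_im]
  have hpos : 0 < (Complex.exp (z s)).re ^ 2 + (Complex.exp (z s)).im ^ 2 := by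
    rw [sq_add_sq_exp]; positivity
  obtain ⟨h1, h2⟩ := h.region hx1 hx2 hs0
  have hm := h.half_le_m hx1 hx2 hs0
  have := angular_form_pos h1 h2 hpos
  exact neg_neg_of_pos (mul_pos (by linarith) (div_pos this hpos))

lemma tendsto_log_radius (hz : ∀ s, HasDerivAt z (liftedField (z s)) s)
    (h0 : Complex.exp (z 0) = ⟨x, 3 / 8⟩) (hx1 : 3 / 2 ≤ x) (hx2 : x ≤ 8 / 5) :
    Filter.Tendsto (fun s => (z s).re) Filter.atTop Filter.atBot := by
  have h := (slidingTraj_of_lift hz h0).tendsto_zero hx1 hx2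
  simp only [sq_add_sq_exp] at h
  have h2 := Real.tendsto_exp_comp_nhds_zero.1 h
  exact (Filter.tendsto_const_mul_atBot_of_pos (by norm_num)).1 h2

/-- The reversed orbits wind around the origin infinitely often: near the origin the angular speed
is at most `-1/8`. -/
lemma tendsto_angle (hz : ∀ s, HasDerivAt z (liftedField (z s)) s)
    (h0 : Complex.exp (z 0) = ⟨x, 3 / 8⟩) (hx1 : 3 / 2 ≤ x) (hx2 : x ≤ 8 / 5) :
    Filter.Tendsto (fun s => (z s).im) Filter.atTop Filter.atBot := by
  have h := slidingTraj_of_lift hz h0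
  have hev := (h.tendsto_zero hx1 hx2).eventually_lt_const (show (0 : ℝ) < 1 / 64 by norm_num)
  obtain ⟨s₁, hs₁⟩ := Filter.eventually_atTop.1 hev
  set s₀ := max s₁ 0
  have hanti : AntitoneOn (fun s => (z s).im + 1 / 8 * s) (Set.Ici s₀) := by
    have hd : ∀ s, HasDerivAt (fun s => (z s).im + 1 / 8 * s) _ s := fun s =>
      (hasDerivAt_angle hz s).add ((hasDerivAt_id s).const_mul (1 / 8))
    refine antitoneOn_of_hasDerivWithinAt_nonpos (convex_Ici s₀)
      (fun s _ => (hd s).continuousAt.continuousWithinAt)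
      (fun s _ => (hd s).hasDerivWithinAt) fun s hs => ?_
    rw [interior_Ici] at hs
    have hs0 : 0 ≤ s := (le_max_right _ _).trans (le_of_lt hs)
    have hsm := hs₁ s ((le_max_left _ _).trans (le_of_lt hs))
    have hm := h.half_le_m hx1 hx2 hs0
    have hpos : 0 < (Complex.exp (z s)).re ^ 2 + (Complex.exp (z s)).im ^ 2 := by
      rw [sq_add_sq_exp]; positivity
    rw [liftedField_im]
    generalize Complex.exp (z s) = w at *
    have hX : |w.re| < 1 / 8 :=
      abs_lt_of_sq_lt_sq (by nlinarith [sq_nonneg w.im]) (by norm_num)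
    have hq : 1 / 4 ≤ (3 / 8 * w.re ^ 2 + w.re * w.im / 8 + w.im ^ 2 - 3 * w.re * w.im ^ 2) /
        (w.re ^ 2 + w.im ^ 2) := by
      rw [le_div_iff₀ hpos]
      have := mul_nonneg (sub_nonneg.2 (abs_lt.1 hX).2.le) (sq_nonneg w.im)
      nlinarith [sq_nonneg (w.re + w.im / 2)]
    have := mul_le_mul hm hq (by norm_num) (by linarith)
    linarith
  have hlim : Filter.Tendsto (fun s => (z s₀).im + 1 / 8 * s₀ + -(1 / 8) * s) Filter.atTop
      Filter.atBot :=
    Filter.tendsto_atBot_add_const_left _ _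
      (Filter.tendsto_id.const_mul_atTop_of_neg (by norm_num))
  refine Filter.tendsto_atBot_mono' _ ?_ hlim
  filter_upwards [Filter.eventually_ge_atTop s₀] with s hs
  have := hanti (Set.mem_Ici.2 le_rfl) (Set.mem_Ici.2 hs) hs
  simp only at this
  linarith

end Lift

/-! ### Closing up the orbits -/

/-- The zero of a strictly decreasing function depends continuously on a parameter. -/
lemma exists_continuous_zero {I : Set ℝ} {F : ℝ → ℝ → ℝ}
    (hx : ∀ s, 0 ≤ s → ContinuousOn (fun x => F x s) I) (hs : ∀ x ∈ I, Continuous (F x))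
    (hanti : ∀ x ∈ I, StrictAntiOn (F x) (Set.Ici 0)) (hpos : ∀ x ∈ I, 0 < F x 0)
    (hneg : ∀ x ∈ I, ∃ s, 0 ≤ s ∧ F x s < 0) :
    ∃ σ : ℝ → ℝ, ContinuousOn σ I ∧ ∀ x ∈ I, 0 < σ x ∧ F x (σ x) = 0 := by
  have hex : ∀ x, ∃ s, x ∈ I → 0 < s ∧ F x s = 0 := by
    intro x
    by_cases hxI : x ∈ I
    · obtain ⟨c, hc, hFc⟩ := hneg x hxI
      obtain ⟨s, hs1, hs2⟩ := intermediate_value_Icc' hc (hs x hxI).continuousOn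
        (show (0 : ℝ) ∈ Set.Icc (F x c) (F x 0) from ⟨hFc.le, (hpos x hxI).le⟩)
      refine ⟨s, fun _ => ⟨lt_of_le_of_ne hs1.1 ?_, hs2⟩⟩
      rintro rfl
      exact (hpos x hxI).ne' hs2
    · exact ⟨0, fun h => absurd h hxI⟩
  choose σ hσ using hex
  refine ⟨σ, fun x hxI => ?_, hσ⟩
  obtain ⟨h1, h2⟩ := hσ x hxI
  refine tendsto_order.2 ⟨fun a ha => ?_, fun b hb => ?_⟩
  · have ha0 : 0 ≤ max a 0 := le_max_right _ _
    have hFa : 0 < F x (max a 0) := by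
      exact h2.symm.trans_lt (hanti x hxI ha0 h1.le (max_lt ha h1))
    filter_upwards [(hx _ ha0 x hxI).tendsto.eventually_const_lt hFa, self_mem_nhdsWithin]
      with y hy hyI
    exact (le_max_left _ _).trans_lt
      (((hanti y hyI).lt_iff_gt (hσ y hyI).1.le ha0).1 ((hσ y hyI).2.trans_lt hy))
  · have hb0 : 0 ≤ b := (h1.trans hb).le
    have hFb : F x b < 0 := by
      rw [← h2]
      exact hanti x hxI h1.le hb0 hb
    filter_upwards [(hx _ hb0 x hxI).tendsto.eventually_lt_const hFb, self_mem_nhdsWithin]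
      with y hy hyI
    rw [← (hσ y hyI).2] at hy
    exact ((hanti y hyI).lt_iff_gt hb0 (hσ y hyI).1.le).1 hy

/-- Arbitrarily close to `3/2` there are `x` for which the reversed sliding orbit through
`(x, 3/8)` meets the landing point `(3 - 2x, 3/8 - 3/2 (x-1)²)` of the upper flow. With
`d = x - 3/2`, that point is `-d (2 + 3/2 (1+d) i)`, so it tends to the origin as `d → 0`. Fixing
a winding number `n`, the orbit reaches the direction of the landing point at a time `σ x`
depending continuously on `x`; its log-radius there is bounded below as `d → 0`, whereas
`log d → -∞`, and at `d = δ` it lies below the target once `n` is large. -/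
lemma exists_closing {δ : ℝ} (hδ : 0 < δ) (hδ' : δ ≤ 1 / 10) :
    ∃ x, 3 / 2 < x ∧ x ≤ 3 / 2 + δ ∧ ∃ σ > 0, ∃ X V m : ℝ → ℝ, SlidingTraj x X V m ∧
      X σ = 3 - 2 * x ∧ V σ = 3 / 8 - 3 / 2 * (x - 1) ^ 2 := by
  obtain ⟨Z, hZ0, hZd, hZc⟩ := exists_global_flow locallyLipschitz_liftedField norm_liftedField_le
  let start : ℝ → ℂ := fun x => Complex.log ⟨x, 3 / 8⟩
  let Λ : ℝ → ℂ := fun x => Complex.log ⟨2, 3 / 2 * (x - 1 / 2)⟩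
  set I : Set ℝ := Set.Icc (3 / 2) (8 / 5) with hI
  have hcomplex : ∀ a b : ℝ → ℝ, Continuous a → Continuous b →
      Continuous fun x => (⟨a x, b x⟩ : ℂ) := fun a b ha hb =>
    Complex.equivRealProdCLM.symm.continuous.comp (ha.prodMk hb)
  have hstart : ContinuousOn start I := by
    refine (hcomplex _ _ continuous_id continuous_const).continuousOn.clog fun x hx => ?_
    exact Complex.mem_slitPlane_iff.2 (Or.inl (by have := hx.1; simp only [id]; linarith))
  have hΛ : Continuous Λ := by
    refine (hcomplex _ _ continuous_const (by fun_prop)).clog fun x => ?_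
    exact Complex.mem_slitPlane_iff.2 (Or.inl (by norm_num))
  let z : ℝ → ℝ → ℂ := fun x => Z (start x)
  have hz : ∀ x s, HasDerivAt (z x) (liftedField (z x s)) s := fun x s => hZd (start x) s
  have hz0 : ∀ x, Complex.exp (z x 0) = ⟨x, 3 / 8⟩ := by
    intro x
    simp only [z, hZ0, start]
    refine Complex.exp_log fun h => ?_
    have := congrArg Complex.im h
    norm_num at this
  have hzs : ∀ σ : ℝ → ℝ, ContinuousOn σ I → (∀ x ∈ I, 0 ≤ σ x) →
      ContinuousOn (fun x => z x (σ x)) I := by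
    intro σ hσ hσ0
    have := hZc.comp_continuousOn (hstart.prodMk hσ)
    refine this.congr fun x hx => ?_
    simp [z, max_eq_left (hσ0 x hx)]
  have hang0 : ∀ x, 0 < (z x 0).im := by
    intro x
    simp only [z, hZ0, start, Complex.log_im]
    refine lt_of_le_of_ne (Complex.arg_nonneg_iff.2 (by norm_num)) fun h => ?_
    have := (Complex.arg_eq_zero_iff.1 h.symm).2
    norm_num at this
  have hΛim : ∀ x, (Λ x).im < Real.pi := fun x => by
    simp only [Λ, Complex.log_im]
    exact (Complex.arg_lt_pi_div_two_iff.2 (Or.inl (by norm_num))).trans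
      (by linarith [Real.pi_pos])
  -- the crossing time of the `n`-th lift of the target direction
  have hσ : ∀ n : ℕ, 1 ≤ n → ∃ σ : ℝ → ℝ, ContinuousOn σ I ∧
      ∀ x ∈ I, 0 < σ x ∧ (z x (σ x)).im - ((Λ x).im + Real.pi * (1 - 2 * n)) = 0 := by
    intro n hn
    have hn' : (1 : ℝ) ≤ n := by exact_mod_cast hn
    refine exists_continuous_zero
      (F := fun x s => (z x s).im - ((Λ x).im + Real.pi * (1 - 2 * n)))
      (fun s hs => ?_) (fun x _ => ?_) (fun x hx => ?_) (fun x _ => ?_) (fun x hx => ?_)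
    · have h1 := hzs (fun _ => s) continuousOn_const fun _ _ => hs
      exact (Complex.continuous_im.comp_continuousOn h1).sub
        ((Complex.continuous_im.comp hΛ).add continuous_const).continuousOn
    · exact (continuous_iff_continuousAt.2 fun s =>
        (hasDerivAt_angle (hz x) s).continuousAt).sub continuous_const
    · intro s hs t ht hst
      have := strictAntiOn_angle (hz x) (hz0 x) hx.1 hx.2 hs ht hst
      simp only at this
      linarith
    · have := hang0 x
      have := hΛim x
      have := mul_le_mul_of_nonneg_left hn' Real.pi_pos.le
      linarith
    · obtain ⟨s, hs1, hs2⟩ := (((tendsto_angle (hz x) (hz0 x) hx.1 hx.2).eventually_lt_atBot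
        ((Λ x).im + Real.pi * (1 - 2 * n))).and (Filter.eventually_ge_atTop 0)).exists
      exact ⟨s, hs2, by linarith⟩
  -- a winding number for which the orbit of `3/2 + δ` arrives too close to the origin
  set x₁ := 3 / 2 + δ with hx₁
  have hx₁I : x₁ ∈ I := ⟨by linarith, by linarith⟩
  obtain ⟨n, hn, hng⟩ : ∃ n : ℕ, 1 ≤ n ∧ ∀ s, 0 ≤ s →
      (z x₁ s).im - ((Λ x₁).im + Real.pi * (1 - 2 * n)) = 0 →
      (z x₁ s).re < Real.log δ + (Λ x₁).re := by
    obtain ⟨s₁, hs₁⟩ := Filter.eventually_atTop.1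
      ((tendsto_log_radius (hz x₁) (hz0 x₁) hx₁I.1 hx₁I.2).eventually_lt_atBot
        (Real.log δ + (Λ x₁).re))
    obtain ⟨n, hn⟩ := exists_nat_gt (((Λ x₁).im + Real.pi - (z x₁ (max s₁ 0)).im) / (2 * Real.pi))
    rw [div_lt_iff₀ (by positivity)] at hn
    refine ⟨n + 1, by omega, fun s hs hzero => hs₁ s ((le_max_left _ 0).trans ?_)⟩
    by_contra hlt
    have := strictAntiOn_angle (hz x₁) (hz0 x₁) hx₁I.1 hx₁I.2 hs (le_max_right s₁ 0)
      (not_le.1 hlt)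
    simp only at this
    push_cast at hzero
    linarith [Real.pi_pos]
  obtain ⟨σ, hσc, hσ⟩ := hσ n hn
  have hg : ContinuousOn (fun x => (z x (σ x)).re - (Λ x).re) I :=
    (Complex.continuous_re.comp_continuousOn (hzs σ hσc fun x hx => (hσ x hx).1.le)).sub
      (Complex.continuous_re.comp hΛ).continuousOn
  obtain ⟨B, hB⟩ := (isCompact_Icc.image_of_continuousOn hg).bddBelow
  obtain ⟨d, hd0, hdδ, hdB⟩ : ∃ d, 0 < d ∧ d ≤ δ ∧ Real.log d ≤ B := by
    refine ⟨min δ (Real.exp B), lt_min hδ (Real.exp_pos B), min_le_left _ _, ?_⟩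
    rw [Real.log_le_iff_le_exp (lt_min hδ (Real.exp_pos B))]
    exact min_le_right _ _
  have hsub : Set.Icc (3 / 2 + d) x₁ ⊆ I := Set.Icc_subset_Icc (by linarith) hx₁I.2
  have hcont : ContinuousOn (fun x => (z x (σ x)).re - (Λ x).re - Real.log (x - 3 / 2))
      (Set.Icc (3 / 2 + d) x₁) :=
    (hg.mono hsub).sub (ContinuousOn.log (by fun_prop) fun x hx => by linarith [hx.1])
  have hdI : 3 / 2 + d ∈ I := hsub ⟨le_rfl, by linarith⟩
  obtain ⟨x, hx, hxz⟩ := intermediate_value_Icc' (by linarith) hcont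
    (show (0 : ℝ) ∈ Set.Icc _ _ from ⟨by
      have := hng (σ x₁) (hσ x₁ hx₁I).1.le (hσ x₁ hx₁I).2
      rw [show x₁ - 3 / 2 = δ by rw [hx₁]; ring]
      linarith, by
      have := hB (Set.mem_image_of_mem _ hdI)
      rw [show 3 / 2 + d - 3 / 2 = d by ring]
      linarith⟩)
  simp only at hxz
  obtain ⟨hσpos, hσim⟩ := hσ x (hsub hx)
  have hxd : 0 < x - 3 / 2 := by linarith [hx.1]
  have hzeq : z x (σ x) = (Real.log (x - 3 / 2) : ℂ) + Λ x + Real.pi * Complex.I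
      - n * (2 * Real.pi * Complex.I) := by
    apply Complex.ext
    · simp
      linarith
    · simp
      linarith
  have hw : Complex.exp (z x (σ x)) = -((x - 3 / 2 : ℝ) * ⟨2, 3 / 2 * (x - 1 / 2)⟩) := by
    rw [hzeq, Complex.exp_sub, Complex.exp_nat_mul_two_pi_mul_I, div_one, Complex.exp_add,
      Complex.exp_pi_mul_I, Complex.exp_add, ← Complex.ofReal_exp, Real.exp_log hxd,
      Complex.exp_log, mul_neg_one]
    intro h
    have := congrArg Complex.re h
    norm_num at this
  refine ⟨x, by linarith, hx.2, σ x, hσpos, _, _, _, slidingTraj_of_lift (hz x) (hz0 x), ?_, ?_⟩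
  · simp only [hw, Complex.neg_re, Complex.re_ofReal_mul]
    ring
  · simp only [hw, Complex.neg_im, Complex.im_ofReal_mul]
    ring

/-! ### Rescaling to general parameters -/

/- STATEMENT 9: The piecewise linear system Z_{α,β} has countably infinitely many
distinct sliding periodic orbits accumulating onto its sliding Shilnikov orbit:
there is a sequence of pairwise distinct points (xₙ, 3β²/(8α), 0) with
xₙ → 3β/2, each lying on a sliding periodic orbit made of an arc of an orbit of
X_{α,β} in {z > 0} and an arc of an orbit of the sliding vector field Z̃_{α,β}
in Σˢ. -/
theorem countably_many_sliding_periodic_orbits (α β : ℝ) (hα : 0 < α) (hβ : 0 < β)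
    (X : ℝ × ℝ × ℝ → ℝ × ℝ × ℝ)
    (hX : ∀ p : ℝ × ℝ × ℝ, X p = (-α, p.1 - β, p.2.1 - 3 * β ^ 2 / (8 * α)))
    (Zt : ℝ × ℝ → ℝ × ℝ)
    (hZt : ∀ p : ℝ × ℝ, Zt p =
      ((-(α * p.2)) / (3 * β ^ 2 / (4 * α) - p.2),
       (3 * β ^ 2 * p.1 / (8 * α) + β * p.2 / 8 - 3 * α * p.2 ^ 2 / β)
         / (3 * β ^ 2 / (4 * α) - p.2))) :
    ∃ x : ℕ → ℝ,
      Function.Injective x ∧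
      Filter.Tendsto x Filter.atTop (nhds (3 * β / 2)) ∧
      ∀ n : ℕ, ∃ T > (0 : ℝ), ∃ S > (0 : ℝ), ∃ b : ℝ × ℝ,
        b.2 < 3 * β ^ 2 / (8 * α) ∧
        (∃ u : ℝ → ℝ × ℝ × ℝ,
          (∀ t ∈ Set.Icc (0 : ℝ) T, HasDerivAt u (X (u t)) t) ∧
          u 0 = (x n, 3 * β ^ 2 / (8 * α), 0) ∧
          (∀ t ∈ Set.Ioo (0 : ℝ) T, 0 < (u t).2.2) ∧
          u T = (b.1, b.2, 0)) ∧
        (∃ v : ℝ → ℝ × ℝ,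
          (∀ t ∈ Set.Icc (0 : ℝ) S, HasDerivAt v (Zt (v t)) t) ∧
          v 0 = b ∧
          (∀ t ∈ Set.Ico (0 : ℝ) S, (v t).2 < 3 * β ^ 2 / (8 * α)) ∧
          v S = (x n, 3 * β ^ 2 / (8 * α))) := by
  -- the admissible abscissae for `α = β = 1`
  let P : Set ℝ := {x | 3 / 2 < x ∧ x ≤ 8 / 5 ∧ ∃ σ > 0, ∃ X V m : ℝ → ℝ, SlidingTraj x X V m ∧
    X σ = 3 - 2 * x ∧ V σ = 3 / 8 - 3 / 2 * (x - 1) ^ 2}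
  have hP : ∀ δ, 0 < δ → ∃ x ∈ P, x ≤ 3 / 2 + δ := by
    intro δ hδ
    obtain ⟨x, h1, h2, h3⟩ := exists_closing (lt_min hδ (by norm_num : (0 : ℝ) < 1 / 10))
      (min_le_right _ _)
    have h4 := min_le_left δ (1 / 10)
    have h5 := min_le_right δ (1 / 10)
    exact ⟨x, ⟨h1, by linarith, h3⟩, by linarith⟩
  have hglb : IsGLB P (3 / 2) := by
    refine ⟨fun x hx => hx.1.le, fun b hb => le_of_forall_pos_le_add fun δ hδ => ?_⟩
    obtain ⟨x, hx, hxδ⟩ := hP δ hδ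
    exact (hb hx).trans hxδ
  obtain ⟨ξ, hξanti, -, hξlim, hξP⟩ := hglb.exists_seq_strictAnti_tendsto_of_notMem
    (fun h => lt_irrefl _ h.1) ((hP 1 one_pos).imp fun _ h => h.1)
  refine ⟨fun n => β * ξ n, fun a b hab => hξanti.injective (mul_left_cancel₀ hβ.ne' hab), ?_,
    fun n => ?_⟩
  · convert hξlim.const_mul β using 2
    ring
  obtain ⟨hx1, hx2, σ, hσ, X₁, V₁, m, htraj, hXσ, hVσ⟩ := hξP n
  beta_reduce
  set x := ξ n
  have hx0 : 0 < x - 1 := by linarith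
  refine ⟨3 * β * (x - 1) / α, by positivity, β / α * σ, by positivity,
    (β * (3 - 2 * x), β ^ 2 / α * (3 / 8 - 3 / 2 * (x - 1) ^ 2)), ?_, ?_, ?_⟩
  · have h1 : 3 * β ^ 2 / (8 * α) = β ^ 2 / α * (3 / 8) := by field_simp
    rw [h1]
    refine mul_lt_mul_of_pos_left ?_ (by positivity)
    nlinarith
  · refine ⟨fun t => (β * x - α * t, 3 * β ^ 2 / (8 * α) + β * (x - 1) * t - α * t ^ 2 / 2,
      β * (x - 1) * t ^ 2 / 2 - α * t ^ 3 / 6), fun t _ => ?_, ?_, fun t ht => ?_, ?_⟩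
    · rw [hX]
      have hid := hasDerivAt_id t
      refine HasDerivAt.prodMk ?_ (HasDerivAt.prodMk ?_ ?_)
      · exact ((hid.const_mul α).const_sub (β * x)).congr_deriv (by ring)
      · refine (((hid.const_mul (β * (x - 1))).const_add (3 * β ^ 2 / (8 * α))).sub
          (((hid.pow 2).const_mul α).div_const 2)).congr_deriv ?_
        simp only [id]
        norm_num
        ring
      · refine ((((hid.pow 2).const_mul (β * (x - 1))).div_const 2).sub
          (((hid.pow 3).const_mul α).div_const 6)).congr_deriv ?_
        simp only [id]
        norm_num
        ring
    · simp
    · have h1 := ht.2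
      rw [lt_div_iff₀ hα] at h1
      have h2 : β * (x - 1) * t ^ 2 / 2 - α * t ^ 3 / 6 =
          t ^ 2 / 6 * (3 * β * (x - 1) - t * α) := by ring
      simp only [h2]
      have := ht.1
      exact mul_pos (by positivity) (by linarith)
    · simp only [Prod.mk.injEq]
      refine ⟨?_, ?_, ?_⟩ <;> field_simp <;> ring
  -- the reversed unit orbit, run backwards from `σ` and rescaled
  · have hsc : ∀ t, HasDerivAt (fun t => σ - α / β * t) (-(α / β)) t := fun t =>
      (((hasDerivAt_id t).const_mul (α / β)).const_sub σ).congr_deriv (by ring)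
    refine ⟨fun t => (β * X₁ (σ - α / β * t), β ^ 2 / α * V₁ (σ - α / β * t)),
      fun t ht => ?_, ?_, fun t ht => ?_, ?_⟩
    · have hs : 0 ≤ σ - α / β * t := by
        have h1 := mul_le_mul_of_nonneg_left ht.2 (by positivity : 0 ≤ α / β)
        have h2 : α / β * (β / α * σ) = σ := by field_simp
        linarith
      have hm := htraj.m_eq_inv hx1.le hx2 hs
      have hV := abs_lt.1 (htraj.abs_V_lt hx1.le hx2 hs)
      have hdX := ((htraj.hasDerivAt_X (σ - α / β * t)).comp t (hsc t)).const_mul β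
      have hdV := ((htraj.hasDerivAt_V (σ - α / β * t)).comp t (hsc t)).const_mul (β ^ 2 / α)
      rw [hm] at hdX hdV
      have hne : 3 / 4 - V₁ (σ - α / β * t) ≠ 0 := by linarith [hV.2]
      have hden : 3 * β ^ 2 / (4 * α) - β ^ 2 / α * V₁ (σ - α / β * t) =
          β ^ 2 / α * (3 / 4 - V₁ (σ - α / β * t)) := by field_simp
      rw [hZt]
      simp only [hden]
      refine HasDerivAt.prodMk (hdX.congr_deriv ?_) (hdV.congr_deriv ?_)
      · generalize V₁ (σ - α / β * t) = v at *
        field_simp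
      · generalize V₁ (σ - α / β * t) = v at *
        generalize X₁ (σ - α / β * t) = y at *
        field_simp
        ring
    · simp [hXσ, hVσ]
    · have hs : 0 < σ - α / β * t := by
        have h1 := mul_lt_mul_of_pos_left ht.2 (by positivity : 0 < α / β)
        have h2 : α / β * (β / α * σ) = σ := by field_simp
        linarith
      have hV := htraj.V_lt hx1.le hx2 hs
      have h1 : 3 * β ^ 2 / (8 * α) = β ^ 2 / α * (3 / 8) := by field_simp
      simp only [h1]
      exact mul_lt_mul_of_pos_left hV (by positivity)
    · have h2 : σ - α / β * (β / α * σ) = 0 := by field_simp; ring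
      simp only [h2, htraj.X_zero, htraj.V_zero, Prod.mk.injEq, true_and]
      field_simp
end

section
/- Let α > 0, β > 0 and A, B ∈ ℝ, and for δ > 0 let M_δ be the 3×3 real matrix M_δ = [[0, 0, −α], [1/2, 3α/(2β), −β], [A/2, 1/(2δ) + B/2, −3β²/(8αδ)]]. Then there exists δ₀ > 0 such that for every δ ∈ (0, δ₀) the characteristic polynomial of M_δ has exactly one real root λˢ(δ), which is negative, and a pair of complex conjugate non-real roots λᵘ(δ), conj(λᵘ(δ)) with Re(λᵘ(δ)) > 0. Moreover, choosing Im(λᵘ(δ)) > 0, one has λˢ(δ) + 3β²/(8αδ) → 4α/(3β) and λᵘ(δ) → α(1 + i√95)/(12β) as δ → 0⁺. -/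
/-!
Write `K = 3β²/(8α)`, `a = 3α/(2β)` and `μ₀ = 4α/(3β) = β/(2K)`. Substituting `λ = μ - K/δ` in
the characteristic polynomial and multiplying by `δ²` gives a polynomial `F(δ, μ)` with
`F(δ, μ) = K²(μ - μ₀) + δ G(δ, μ)` (`shifted_eq`). The sign change of `F(δ, ·)` between `μ₀ - 1`
and `μ₀ + 1` produces, for small `δ > 0`, a root `μ(δ)`, and boundedness of `G` on compact sets
forces `μ(δ) → μ₀` (`exists_shifted_root`); thus `λˢ = μ(δ) - K/δ`.

Dividing the cubic by `λ - λˢ` leaves `λ² + bλ + q` with `b = μ(δ) - a → -α/(6β)` and, from the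
constant term, `q → 2α²/(3β²)`. The limit of `4q - b²` is `95α²/(36β²) > 0`, so the quadratic
has no real root and its roots `(-b ± i√(4q - b²))/2` converge to `α(1 ± i√95)/(12β)`.
-/

open Filter Topology Polynomial

/-- `δ²` times the characteristic polynomial of the slow system at `μ - K/δ`, where
`K = 3β²/(8α)` and `a = 3α/(2β)`; polynomial in `δ` and `μ`. -/
noncomputable def shifted (α β A B K a δ m : ℝ) : ℝ :=
  (δ * m - K) * ((δ * m - K - δ * a) * m + β * (1 / 2 + B / 2 * δ))
    + α * δ * ((1 / 2 + B / 2 * δ) / 2 + A / 2 * (δ * m - K - δ * a))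

/-- The coefficient of `δ` in the expansion of `shifted` around its value at `δ = 0`. -/
noncomputable def shiftedRem (α β A B K a δ m : ℝ) : ℝ :=
  m * ((δ * m - K - δ * a) * m + β * (1 / 2 + B / 2 * δ)) - K * ((m - a) * m + β * (B / 2))
    + α * ((1 / 2 + B / 2 * δ) / 2 + A / 2 * (δ * m - K - δ * a))

theorem shifted_eq (α β A B K a m₀ : ℝ) (h : K * m₀ = β / 2) (δ m : ℝ) :
    shifted α β A B K a δ m = K ^ 2 * (m - m₀) + δ * shiftedRem α β A B K a δ m := by
  unfold shifted shiftedRem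
  linear_combination K * h

theorem exists_shifted_root (α β A B K a m₀ : ℝ) (hK : 0 < K) (h : K * m₀ = β / 2) :
    ∃ μ : ℝ → ℝ, (∀ᶠ δ in 𝓝[>] 0, shifted α β A B K a δ (μ δ) = 0) ∧
      Tendsto μ (𝓝[>] 0) (𝓝 m₀) := by
  have hch : ∀ δ : ℝ, ∃ m ∈ Set.Icc (m₀ - 1) (m₀ + 1),
      (∃ m' ∈ Set.Icc (m₀ - 1) (m₀ + 1), shifted α β A B K a δ m' = 0) →
        shifted α β A B K a δ m = 0 := by
    intro δ
    by_cases hex : ∃ m' ∈ Set.Icc (m₀ - 1) (m₀ + 1), shifted α β A B K a δ m' = 0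
    · obtain ⟨m, hm, h0⟩ := hex
      exact ⟨m, hm, fun _ => h0⟩
    · exact ⟨m₀, ⟨by linarith, by linarith⟩, fun h' => absurd h' hex⟩
  choose μ hμ hroot using hch
  have hlim : ∀ m : ℝ, Tendsto (fun δ => shifted α β A B K a δ m) (𝓝[>] 0)
      (𝓝 (K ^ 2 * (m - m₀))) := by
    intro m
    have hc : Continuous (fun δ => shifted α β A B K a δ m) := by
      unfold shifted; fun_prop
    have := (hc.tendsto 0).mono_left (nhdsWithin_le_nhds (s := Set.Ioi 0))
    rwa [shifted_eq α β A B K a m₀ h 0 m, zero_mul, add_zero] at this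
  have hev : ∀ᶠ δ in 𝓝[>] 0, shifted α β A B K a δ (μ δ) = 0 := by
    have h1 := (hlim (m₀ - 1)).eventually_lt_const (u := 0) (by nlinarith [pow_pos hK 2])
    have h2 := (hlim (m₀ + 1)).eventually_const_lt (u := 0) (by nlinarith [pow_pos hK 2])
    filter_upwards [h1, h2] with δ h1 h2
    apply hroot
    have hc : Continuous (fun m => shifted α β A B K a δ m) := by
      unfold shifted; fun_prop
    obtain ⟨m, hm, h0⟩ := intermediate_value_Icc (show m₀ - 1 ≤ m₀ + 1 by linarith)
      hc.continuousOn ⟨h1.le, h2.le⟩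
    exact ⟨m, hm, h0⟩
  refine ⟨μ, hev, ?_⟩
  have hG : Continuous (fun p : ℝ × ℝ => shiftedRem α β A B K a p.1 p.2) := by
    unfold shiftedRem; fun_prop
  obtain ⟨D, hD⟩ := (isCompact_Icc (a := (0 : ℝ)) (b := 1)).prod
    (isCompact_Icc (a := m₀ - 1) (b := m₀ + 1)) |>.exists_bound_of_continuousOn hG.continuousOn
  rw [tendsto_iff_dist_tendsto_zero]
  have hz : Tendsto (fun δ : ℝ => δ * (D / K ^ 2)) (𝓝[>] 0) (𝓝 0) := by
    have hc : Continuous (fun δ : ℝ => δ * (D / K ^ 2)) := by fun_prop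
    simpa using (hc.tendsto 0).mono_left (nhdsWithin_le_nhds (s := Set.Ioi 0))
  refine squeeze_zero' (Eventually.of_forall fun _ => dist_nonneg) ?_ hz
  filter_upwards [hev, Ioo_mem_nhdsGT (zero_lt_one' ℝ)] with δ h0 hδ
  have hb := hD (δ, μ δ) ⟨⟨hδ.1.le, hδ.2.le⟩, hμ δ⟩
  rw [shifted_eq α β A B K a m₀ h] at h0
  have hK2 : (0 : ℝ) < K ^ 2 := pow_pos hK 2
  rw [Real.norm_eq_abs] at hb
  have he : μ δ - m₀ = -(δ * shiftedRem α β A B K a δ (μ δ)) / K ^ 2 := by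
    field_simp
    linarith
  rw [Real.dist_eq, he, abs_div, abs_neg, abs_mul, abs_of_pos hδ.1, abs_of_pos hK2, mul_div_assoc]
  have := hδ.1.le
  gcongr

theorem charpoly_slow (α β a c k A : ℝ) :
    (!![0, 0, -α; 1 / 2, a, -β; A / 2, c, -k] : Matrix (Fin 3) (Fin 3) ℝ).charpoly =
      X ^ 3 + C (k - a) * X ^ 2 + C (β * c - a * k + α * A / 2) * X
        + C (α * c / 2 - α * A * a / 2) := by
  apply Polynomial.funext
  intro r
  rw [Matrix.eval_charpoly, Matrix.det_fin_three]
  simp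
  ring

/- STATEMENT 11: For δ > 0 small, the Jacobian matrix at the origin of the slow
system, M_δ = [[0,0,−α],[1/2, 3α/(2β), −β],[A/2, 1/(2δ)+B/2, −3β²/(8αδ)]], has
exactly one real eigenvalue λˢ(δ), negative, and a pair of complex conjugate
non-real eigenvalues λᵘ(δ), conj(λᵘ(δ)) with positive real part; with
Im(λᵘ(δ)) > 0, one has λˢ(δ) + 3β²/(8αδ) → 4α/(3β) and
λᵘ(δ) → α(1 + i√95)/(12β) as δ → 0⁺. -/
theorem slow_system_eigenvalues (α β A B : ℝ) (hα : 0 < α) (hβ : 0 < β)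
    (M : ℝ → Matrix (Fin 3) (Fin 3) ℝ)
    (hM : ∀ δ : ℝ, M δ =
      !![0, 0, -α;
         1 / 2, 3 * α / (2 * β), -β;
         A / 2, 1 / (2 * δ) + B / 2, -(3 * β ^ 2) / (8 * α * δ)]) :
    ∃ δ₀ > (0 : ℝ), ∃ (lams : ℝ → ℝ) (lamu : ℝ → ℂ),
      (∀ δ ∈ Set.Ioo (0 : ℝ) δ₀,
        lams δ < 0 ∧
        (∀ r : ℝ, Polynomial.eval r (M δ).charpoly = 0 ↔ r = lams δ) ∧
        0 < (lamu δ).re ∧ 0 < (lamu δ).im ∧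
        Polynomial.aeval (lamu δ) (M δ).charpoly = 0 ∧
        Polynomial.aeval ((starRingEnd ℂ) (lamu δ)) (M δ).charpoly = 0) ∧
      Filter.Tendsto (fun δ : ℝ => lams δ + 3 * β ^ 2 / (8 * α * δ))
        (nhdsWithin 0 (Set.Ioi 0)) (nhds (4 * α / (3 * β))) ∧
      Filter.Tendsto lamu (nhdsWithin 0 (Set.Ioi 0))
        (nhds (((α / (12 * β) : ℝ) : ℂ) * (1 + Complex.I * ((Real.sqrt 95 : ℝ) : ℂ)))) := by
  set K : ℝ := 3 * β ^ 2 / (8 * α) with hKdef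
  set a : ℝ := 3 * α / (2 * β) with hadef
  set m₀ : ℝ := 4 * α / (3 * β) with hm₀def
  have hK : 0 < K := by positivity
  have hKm : K * m₀ = β / 2 := by
    rw [hKdef, hm₀def]; field_simp; norm_num
  obtain ⟨μ, hroot, hμ⟩ := exists_shifted_root α β A B K a m₀ hK hKm
  have hid : Tendsto (fun δ : ℝ => δ) (𝓝[>] 0) (𝓝 0) := tendsto_id.mono_left nhdsWithin_le_nhds
  -- `δ * λˢ`, and the coefficients of the quadratic factor `λ² + bλ + q`
  let S : ℝ → ℝ := fun δ => δ * μ δ - K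
  let b : ℝ → ℝ := fun δ => μ δ - a
  let q : ℝ → ℝ := fun δ => -(α * (1 / 2 + B / 2 * δ) / 2 - α * A * a / 2 * δ) / S δ
  have hS : Tendsto S (𝓝[>] 0) (𝓝 (-K)) := by
    simpa using (hid.mul hμ).sub_const K
  have hb : Tendsto b (𝓝[>] 0) (𝓝 (-(α / (6 * β)))) := by
    have he : -(α / (6 * β)) = m₀ - a := by
      rw [hm₀def, hadef]; field_simp; norm_num
    rw [he]
    exact hμ.sub_const a
  have hq : Tendsto q (𝓝[>] 0) (𝓝 (2 * α ^ 2 / (3 * β ^ 2))) := by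
    have hc : Continuous fun δ : ℝ => -(α * (1 / 2 + B / 2 * δ) / 2 - α * A * a / 2 * δ) := by
      fun_prop
    have hn := (hc.tendsto 0).mono_left (nhdsWithin_le_nhds (s := Set.Ioi 0))
    have he : 2 * α ^ 2 / (3 * β ^ 2)
        = -(α * (1 / 2 + B / 2 * 0) / 2 - α * A * a / 2 * 0) / (-K) := by
      rw [hKdef]; field_simp; norm_num
    rw [he]
    exact hn.div hS (neg_ne_zero.mpr hK.ne')
  have hd : Tendsto (fun δ => 4 * q δ - b δ ^ 2) (𝓝[>] 0) (𝓝 (95 * (α / (6 * β)) ^ 2)) := by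
    have he : 95 * (α / (6 * β)) ^ 2
        = 4 * (2 * α ^ 2 / (3 * β ^ 2)) - (-(α / (6 * β))) ^ 2 := by
      field_simp; norm_num
    rw [he]
    exact (hq.const_mul 4).sub (hb.pow 2)
  have hev : ∀ᶠ δ in 𝓝[>] (0 : ℝ), shifted α β A B K a δ (μ δ) = 0 ∧ S δ < 0 ∧ b δ < 0 ∧
      0 < 4 * q δ - b δ ^ 2 :=
    hroot.and <| (hS.eventually_lt_const (by linarith)).and <|
      (hb.eventually_lt_const (neg_lt_zero.mpr (by positivity))).and <|
        hd.eventually_const_lt (by positivity)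
  obtain ⟨δ₀, hδ₀, hall⟩ := mem_nhdsGT_iff_exists_Ioo_subset.mp hev
  refine ⟨δ₀, hδ₀, fun δ => S δ / δ, fun δ => ⟨-b δ / 2, √(4 * q δ - b δ ^ 2) / 2⟩, ?_, ?_, ?_⟩
  · intro δ hδ
    obtain ⟨h0, hSneg, hbneg, hdisc⟩ := hall hδ
    have hδpos : 0 < δ := hδ.1
    have hfac : (M δ).charpoly = (X - C (S δ / δ)) * (X ^ 2 + C (b δ) * X + C (q δ)) := by
      have hk : -(3 * β ^ 2) / (8 * α * δ) = -(K / δ) := by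
        rw [hKdef]; field_simp
      rw [hM, hk, charpoly_slow]
      have e2 : K / δ - a = b δ - S δ / δ := by
        simp only [b, S]; field_simp; ring
      have e0 : α * (1 / (2 * δ) + B / 2) / 2 - α * A * a / 2 = -(S δ / δ * q δ) := by
        have := hSneg.ne
        simp only [q]
        field_simp
      have e1 : β * (1 / (2 * δ) + B / 2) - a * (K / δ) + α * A / 2 = q δ - S δ / δ * b δ := by
        have hne := hSneg.ne
        have hqS : q δ * S δ = -(α * (1 / 2 + B / 2 * δ) / 2 - α * A * a / 2 * δ) :=
          div_mul_cancel₀ _ hne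
        have hmul : (β * (1 / 2 + B / 2 * δ) - a * K + α * A / 2 * δ) * S δ
            = (q δ * δ - S δ * b δ) * S δ := by
          have h1 : (q δ * δ - S δ * b δ) * S δ = δ * (q δ * S δ) - S δ ^ 2 * b δ := by ring
          rw [h1, hqS]
          simp only [shifted] at h0
          simp only [S, b]
          linear_combination h0
        have hmul' := mul_right_cancel₀ hne hmul
        field_simp
        linear_combination 2 * hmul'
      rw [e2, e1, e0]
      simp only [map_sub, map_neg, map_mul]
      ring
    have ht := Real.sqrt_pos.mpr hdisc
    have hsq : √(4 * q δ - b δ ^ 2) ^ 2 = 4 * q δ - b δ ^ 2 := Real.sq_sqrt hdisc.le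
    beta_reduce
    generalize √(4 * q δ - b δ ^ 2) = t at hsq ht ⊢
    refine ⟨div_neg_of_neg_of_pos hSneg hδpos, ?_, ?_, ?_, ?_, ?_⟩
    · intro r
      have hpos : r ^ 2 + b δ * r + q δ ≠ 0 := by
        nlinarith [sq_nonneg (2 * r + b δ)]
      rw [hfac]
      simp [hpos, sub_eq_zero]
    · change 0 < -b δ / 2
      linarith
    · change 0 < t / 2
      linarith
    · rw [hfac, map_mul]
      refine mul_eq_zero_of_right _ ?_
      apply Complex.ext
      · simp [pow_two]; linear_combination (-1 / 4) * hsq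
      · simp [pow_two]; ring
    · rw [hfac, map_mul]
      refine mul_eq_zero_of_right _ ?_
      apply Complex.ext
      · simp [pow_two]; linear_combination (-1 / 4) * hsq
      · simp [pow_two]; ring
  · refine hμ.congr' ?_
    filter_upwards [self_mem_nhdsWithin] with δ hδ
    have hδ' : δ ≠ 0 := ne_of_gt hδ
    simp only [S, hKdef]
    field_simp
    ring
  · have hre := (hb.neg.div_const 2).ofReal
    have him := ((Real.continuous_sqrt.tendsto _).comp hd).div_const 2 |>.ofReal
    have hsum := hre.add (him.mul_const Complex.I)
    have hs : √(95 * (α / (6 * β)) ^ 2) = √95 * (α / (6 * β)) := by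
      rw [Real.sqrt_mul (by norm_num), Real.sqrt_sq (by positivity)]
    rw [hs] at hsum
    convert hsum using 1
    · funext δ
      exact Complex.mk_eq_add_mul_I _ _
    · congr 1
      have hβ' : (β : ℂ) ≠ 0 := by exact_mod_cast hβ.ne'
      push_cast
      field_simp
      ring
end
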